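/- Let L/k be a Galois extension of number fields with dihedral Galois group D of order 2q, q odd. Let G ⊂ D be the subgroup of order q, Σ ⊂ D a subgroup of order 2, F = L^G, K = L^Σ. Then h(L)·h(k)² / (h(F)·h(K)²) = |Ĥ⁰(D, U_L ⊗ Z[1/2])| / |Ĥ^{-1}(D, U_L ⊗ Z[1/2])|, where h denotes class number and U_L the unit group of the ring of integers of L. -/

import Mathlib

open DihedralGroup NumberField IntermediateField

section FixedNormAug

variable {M : Type*} [AddCommGroup M] {ι : Type*} [Fintype ι]

/-- The common fixed points of a family of additive endomorphisms. -/
def fixedPts (T : ι → (M →+ M)) : AddSubgroup M where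
  carrier := {x | ∀ i, T i x = x}
  zero_mem' := fun i => map_zero (T i)
  add_mem' := by intro a b ha hb i; rw [map_add, ha i, hb i]
  neg_mem' := by intro a ha i; rw [map_neg, ha i]

/-- The norm map of a family of additive endomorphisms. -/
def normOf (T : ι → (M →+ M)) : M →+ M := ∑ i, T i

/-- The augmentation submodule of a family of additive endomorphisms. -/
def augOf (T : ι → (M →+ M)) : AddSubgroup M :=
  AddSubgroup.closure {x | ∃ (i : ι) (y : M), x = y - T i y}

/-- Tate cohomology `Ĥ⁰` for a group acting via the family `T`. -/
abbrev tateH0Of (T : ι → (M →+ M)) : Type _ :=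
  fixedPts T ⧸ ((normOf T).range.addSubgroupOf (fixedPts T))

/-- Tate cohomology `Ĥ⁻¹` for a group acting via the family `T`. -/
abbrev tateHneg1Of (T : ι → (M →+ M)) : Type _ :=
  (normOf T).ker ⧸ ((augOf T).addSubgroupOf (normOf T).ker)

end FixedNormAug

section UnitsAct

variable (q : ℕ) (k L : Type*) [Field k] [Field L] [NumberField k] [NumberField L]
  [Algebra k L] [IsGalois k L]

/-- `U_L ⊗ ℤ[1/2]`: the unit group of `𝓞 L`, made additive and localized away from 2. -/
abbrev UnitsHalf : Type _ :=
  LocalizedModule (Submonoid.powers (2 : ℤ)) (Additive (𝓞 L)ˣ)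

/-- The action of `g ∈ Gal(L/k)` on `U_L ⊗ ℤ[1/2]`. -/
noncomputable def unitsAct (g : L ≃ₐ[k] L) : UnitsHalf L →+ UnitsHalf L :=
  (LocalizedModule.map (Submonoid.powers (2 : ℤ))
    (MonoidHom.toAdditive
      (Units.map (galRestrict (𝓞 k) k L (𝓞 L) g).toAlgHom.toRingHom.toMonoidHom)
    ).toIntLinearMap).toAddMonoidHom

end UnitsAct

/-!
Write `D` for the dihedral group. Since `ℚ[D] ⊕ ℚ² ≅ ℚ[D/G] ⊕ ℚ[D/Σ]²` as representations, an
invariant `x` of number fields that depends multiplicatively on the permutation representation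
satisfies `x(L) x(k)² = x(F) x(K)²`. Dedekind zeta functions are such an invariant: the primes of a
field of norm `pᵐ` are counted by its homomorphisms to an algebraic closure of `𝔽_p`, and those of
an invariant field by averaging twisted Frobenius conditions over `D`. So are the discriminants,
because the different is the product over `σ ≠ 1` of the ideals generated by all `σ x - x`, and the
numbers of real and complex places. Hence, by the class number formula, the relation holds for
`h · regulator / #torsion`, and the class numbers fail it exactly as much as the regulators do.

Logarithms map `ℤ × U_E` onto a lattice in the full space of functions on the infinite places of
`E`, whose covolume is the regulator up to elementary factors. Choose a family in `ℤ × U_L`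
indexed by the infinite places of `L`, permuted by `D` and spanning a subgroup of finite index. Its
logarithms form an endomorphism commuting with `D`, and the determinants of this endomorphism on
the fixed spaces of `1`, `D`, `G` and `Σ` do satisfy the relation. So the regulator quotient is a
quotient of indices of the spanned subgroup, which by comparison with a permutation module comes
down to norms and coboundaries for a rotation and a reflection in `ℤ × U_L`. These indices are
prime to `2`, so they survive in `U_L ⊗ ℤ[1/2]` as the orders of `Ĥ⁰` and `Ĥ⁻¹`, while the factor
`ℤ` accounts for the ratio `q` of the elementary factors.
-/

section MultisetZeta

open scoped ENNReal

/-- The formal zeta function `∑ₘ ∏_{a ∈ m} w a = ∏ₐ (1 - w a)⁻¹` of a weight `w`, the sum running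
over all multisets `m`.  For the weight `v ↦ N(v)⁻ˢ` on the maximal ideals of a number field it is
the Euler product of the Dedekind zeta function. -/
noncomputable def multisetZeta {α : Type*} (w : α → ℝ≥0∞) : ℝ≥0∞ :=
  ∑' m : Multiset α, (m.map w).prod

variable {α β : Type*}

theorem multisetZeta_comp_equiv (e : α ≃ β) (w : β → ℝ≥0∞) :
    multisetZeta (w ∘ e) = multisetZeta w := by
  let E : Multiset α ≃ Multiset β :=
    ⟨Multiset.map e, Multiset.map e.symm, fun m => by simp, fun m => by simp⟩
  simp only [multisetZeta, ← E.tsum_eq, E, Equiv.coe_fn_mk, Multiset.map_map]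

theorem bijective_disjSum :
    Function.Bijective fun p : Multiset α × Multiset β => p.1.disjSum p.2 := by
  classical
  refine ⟨fun ⟨s, t⟩ ⟨s', t'⟩ h => ?_, fun m => ?_⟩
  · refine Prod.ext (Multiset.ext' fun a => ?_) (Multiset.ext' fun b => ?_)
    · simpa [Multiset.disjSum, Multiset.count_map_eq_count' _ _ Sum.inl_injective]
        using congrArg (Multiset.count (Sum.inl a)) h
    · simpa [Multiset.disjSum, Multiset.count_map_eq_count' _ _ Sum.inr_injective]
        using congrArg (Multiset.count (Sum.inr b)) h
  · induction m using Multiset.induction_on with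
    | empty => exact ⟨(0, 0), rfl⟩
    | cons x m ih =>
      obtain ⟨⟨s, t⟩, rfl⟩ := ih
      rcases x with a | b
      · exact ⟨(a ::ₘ s, t), by simp [Multiset.disjSum]⟩
      · exact ⟨(s, b ::ₘ t), by simp [Multiset.disjSum]⟩

theorem multisetZeta_sumElim (u : α → ℝ≥0∞) (w : β → ℝ≥0∞) :
    multisetZeta (Sum.elim u w) = multisetZeta u * multisetZeta w := by
  simp only [multisetZeta, ← (Equiv.ofBijective _ bijective_disjSum).tsum_eq,
    Equiv.ofBijective_apply, Multiset.map_disjSum, Multiset.prod_add, ENNReal.tsum_prod',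
    Sum.elim_inl, Sum.elim_inr, ENNReal.tsum_mul_left, ENNReal.tsum_mul_right]

theorem tsum_comp_eq_tsum_card_fiber_mul (f : α → β) [∀ b, Finite {a // f a = b}] (g : β → ℝ≥0∞) :
    ∑' a, g (f a) = ∑' b, (Nat.card {a // f a = b} : ℝ≥0∞) * g b := by
  rw [← ENNReal.tsum_fiberwise _ f]
  refine tsum_congr fun b => ?_
  have hg : ∀ a : f ⁻¹' {b}, g (f a) = g b := fun a => congrArg g a.2
  have : Finite (f ⁻¹' {b}) := inferInstanceAs (Finite {a // f a = b})
  simp only [hg, ENNReal.tsum_const, ENat.card_eq_coe_natCard, ENat.toENNReal_coe]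
  rfl

end MultisetZeta

section DedekindZeta

open scoped ENNReal
open IsDedekindDomain UniqueFactorizationMonoid

variable (E : Type*) [Field E] [NumberField E]

/-- The absolute norm of a maximal ideal of the ring of integers. -/
noncomputable abbrev primeNorm (v : HeightOneSpectrum (𝓞 E)) : ℕ := Ideal.absNorm v.asIdeal

/-- The number of maximal ideals of the ring of integers of absolute norm `n`. -/
noncomputable def primeCount (n : ℕ) : ℕ := Nat.card {v // primeNorm E v = n}

instance finite_primeNorm_fiber (n : ℕ) : Finite {v // primeNorm E v = n} :=
  have : Finite {I : Ideal (𝓞 E) // Ideal.absNorm I = n} := Ideal.finite_setOfPred_absNorm_eq n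
  Finite.of_injective (fun v => (⟨v.1.asIdeal, v.2⟩ : {I : Ideal (𝓞 E) // Ideal.absNorm I = n}))
    fun _ _ h => Subtype.ext (HeightOneSpectrum.ext (congrArg Subtype.val h))

omit [NumberField E] in
variable {E} in
theorem prod_map_asIdeal_ne_bot (m : Multiset (HeightOneSpectrum (𝓞 E))) :
    (m.map HeightOneSpectrum.asIdeal).prod ≠ ⊥ :=
  Multiset.prod_ne_zero fun h => by
    obtain ⟨v, -, hv⟩ := Multiset.mem_map.mp h
    exact v.ne_bot hv

variable {E} in
theorem bijective_prod_map_asIdeal :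
    Function.Bijective fun m : Multiset (HeightOneSpectrum (𝓞 E)) =>
      (⟨_, prod_map_asIdeal_ne_bot m⟩ : {I : Ideal (𝓞 E) // I ≠ ⊥}) := by
  have hfactors (m : Multiset (HeightOneSpectrum (𝓞 E))) :
      normalizedFactors (m.map HeightOneSpectrum.asIdeal).prod =
        m.map HeightOneSpectrum.asIdeal := by
    refine normalizedFactors_prod_of_prime fun p hp => ?_
    obtain ⟨v, -, rfl⟩ := Multiset.mem_map.mp hp
    exact v.prime
  refine ⟨fun m m' h => ?_, fun ⟨I, hI⟩ => ?_⟩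
  · have := congrArg normalizedFactors (congrArg Subtype.val h)
    simp only [hfactors] at this
    exact Multiset.map_injective (fun _ _ => HeightOneSpectrum.ext) this
  · have hprime (P) (hP : P ∈ normalizedFactors I) : P.IsPrime ∧ P ≠ ⊥ :=
      have := prime_of_normalized_factor P hP
      ⟨Ideal.isPrime_of_prime this, this.ne_zero⟩
    refine ⟨(normalizedFactors I).pmap (fun P h => ⟨P, h.1, h.2⟩) hprime, Subtype.ext ?_⟩
    simp only [Multiset.map_pmap, Multiset.pmap_eq_map, Multiset.map_id']
    exact Ideal.prod_normalizedFactors_eq_self hI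

theorem multisetZeta_primeNorm (s : ℝ) :
    (multisetZeta fun v => (primeNorm E v : ℝ≥0∞) ^ (-s)) =
      ∑' I : {I : Ideal (𝓞 E) // I ≠ ⊥}, (Ideal.absNorm I.1 : ℝ≥0∞) ^ (-s) := by
  rw [multisetZeta, ← (Equiv.ofBijective _ bijective_prod_map_asIdeal).tsum_eq]
  refine tsum_congr fun m => ?_
  simp only [Equiv.ofBijective_apply]
  induction m using Multiset.induction_on with
  | empty => simp
  | cons v m ih =>
    rw [Multiset.map_cons, Multiset.prod_cons, ih, Multiset.map_cons, Multiset.prod_cons, map_mul,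
      Nat.cast_mul, ENNReal.mul_rpow_of_ne_zero]
    · exact_mod_cast Ideal.absNorm_eq_zero_iff.not.mpr v.ne_bot
    · exact_mod_cast Ideal.absNorm_eq_zero_iff.not.mpr (prod_map_asIdeal_ne_bot m)

instance finite_absNorm_fiber_ne_bot (n : ℕ) :
    Finite {I : {I : Ideal (𝓞 E) // I ≠ ⊥} // Ideal.absNorm I.1 = n} :=
  have : Finite {I : Ideal (𝓞 E) // Ideal.absNorm I = n} := Ideal.finite_setOfPred_absNorm_eq n
  Finite.of_injective (fun I => (⟨I.1.1, I.2⟩ : {I : Ideal (𝓞 E) // Ideal.absNorm I = n}))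
    fun _ _ h => Subtype.ext (Subtype.ext (by simpa using h))

theorem card_absNorm_fiber_ne_bot_zero :
    Nat.card {I : {I : Ideal (𝓞 E) // I ≠ ⊥} // Ideal.absNorm I.1 = 0} = 0 :=
  have : IsEmpty {I : {I : Ideal (𝓞 E) // I ≠ ⊥} // Ideal.absNorm I.1 = 0} :=
    ⟨fun I => I.1.2 (Ideal.absNorm_eq_zero_iff.mp I.2)⟩
  Nat.card_of_isEmpty

theorem card_absNorm_fiber_ne_bot {n : ℕ} (hn : n ≠ 0) :
    Nat.card {I : {I : Ideal (𝓞 E) // I ≠ ⊥} // Ideal.absNorm I.1 = n} =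
      Nat.card {I : Ideal (𝓞 E) // Ideal.absNorm I = n} :=
  Nat.card_congr (Equiv.subtypeSubtypeEquivSubtype (q := fun I => Ideal.absNorm I = n)
    fun hI hI0 => hn (hI.symm.trans (hI0 ▸ Ideal.absNorm_bot)))

theorem dedekindZeta_eq_multisetZeta (s : ℝ) :
    dedekindZeta E s =
      ((multisetZeta fun v => (primeNorm E v : ℝ≥0∞) ^ (-s)).toReal : ℂ) := by
  rw [multisetZeta_primeNorm, tsum_comp_eq_tsum_card_fiber_mul
      (fun I : {I : Ideal (𝓞 E) // I ≠ ⊥} => Ideal.absNorm I.1) (fun n => (n : ℝ≥0∞) ^ (-s)),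
    dedekindZeta, LSeries, ENNReal.tsum_toReal_eq, Complex.ofReal_tsum]
  · refine tsum_congr fun n => ?_
    rcases eq_or_ne n 0 with rfl | hn
    · simp [card_absNorm_fiber_ne_bot_zero]
    · rw [LSeries.term_of_ne_zero hn, card_absNorm_fiber_ne_bot E hn, ENNReal.toReal_mul,
        ← ENNReal.toReal_rpow, ENNReal.toReal_natCast, ENNReal.toReal_natCast, Complex.ofReal_mul,
        Complex.ofReal_cpow n.cast_nonneg, div_eq_mul_inv, Complex.ofReal_neg, Complex.cpow_neg]
      simp
  · intro n
    rcases eq_or_ne n 0 with rfl | hn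
    · simp [card_absNorm_fiber_ne_bot_zero]
    · exact ENNReal.mul_ne_top (ENNReal.natCast_ne_top _) (by simp [hn])

end DedekindZeta

section BrauerRelation

open scoped ENNReal Topology
open Filter

variable {α β : Type*}

instance finite_sumElim_fiber (u : α → ℕ) (w : β → ℕ) [∀ n, Finite {x // u x = n}]
    [∀ n, Finite {x // w x = n}] (n : ℕ) : Finite {x // Sum.elim u w x = n} :=
  have : Finite {a // Sum.elim u w (Sum.inl a) = n} := inferInstanceAs (Finite {a // u a = n})
  have : Finite {b // Sum.elim u w (Sum.inr b) = n} := inferInstanceAs (Finite {b // w b = n})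
  Finite.of_equiv _ (Equiv.subtypeSum (p := fun x => Sum.elim u w x = n)).symm

theorem card_sumElim_fiber (u : α → ℕ) (w : β → ℕ) [∀ n, Finite {x // u x = n}]
    [∀ n, Finite {x // w x = n}] (n : ℕ) :
    Nat.card {x // Sum.elim u w x = n} = Nat.card {x // u x = n} + Nat.card {x // w x = n} := by
  have : Finite {a // Sum.elim u w (Sum.inl a) = n} := inferInstanceAs (Finite {a // u a = n})
  have : Finite {b // Sum.elim u w (Sum.inr b) = n} := inferInstanceAs (Finite {b // w b = n})
  rw [Nat.card_congr (Equiv.subtypeSum (p := fun x => Sum.elim u w x = n))]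
  exact Nat.card_sum

theorem multisetZeta_comp_eq_of_card_fiber_eq {γ : Type*} (f : α → γ) (g : β → γ) (w : γ → ℝ≥0∞)
    [∀ c, Finite {a // f a = c}] [∀ c, Finite {b // g b = c}]
    (h : ∀ c, Nat.card {a // f a = c} = Nat.card {b // g b = c}) :
    multisetZeta (w ∘ f) = multisetZeta (w ∘ g) := by
  let e : α ≃ β := Equiv.ofFiberEquiv fun c => (Finite.card_eq.mp (h c)).some
  rw [← multisetZeta_comp_equiv e, Function.comp_assoc]
  exact congrArg (fun f => multisetZeta (w ∘ f)) (funext fun a => (Equiv.ofFiberEquiv_map _ a).symm)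

variable {L k F K : Type*} [Field L] [Field k] [Field F] [Field K] [NumberField L] [NumberField k]
  [NumberField F] [NumberField K]

theorem dedekindZeta_relation_of_primeCount
    (h : ∀ n, primeCount L n + 2 * primeCount k n = primeCount F n + 2 * primeCount K n)
    (s : ℝ) :
    dedekindZeta L s * dedekindZeta k s ^ 2 = dedekindZeta F s * dedekindZeta K s ^ 2 := by
  have key := multisetZeta_comp_eq_of_card_fiber_eq
    (Sum.elim (primeNorm L) (Sum.elim (primeNorm k) (primeNorm k)))
    (Sum.elim (primeNorm F) (Sum.elim (primeNorm K) (primeNorm K)))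
    (fun n => (n : ℝ≥0∞) ^ (-s)) fun n => by
      have := h n
      simp only [card_sumElim_fiber]
      unfold primeCount at this
      linarith
  simp only [Sum.comp_elim, multisetZeta_sumElim] at key
  simp only [dedekindZeta_eq_multisetZeta, sq]
  have := congrArg ENNReal.toReal key
  simp only [ENNReal.toReal_mul] at this
  exact_mod_cast this

theorem dedekindZeta_residue_relation_of_primeCount
    (h : ∀ n, primeCount L n + 2 * primeCount k n = primeCount F n + 2 * primeCount K n) :
    dedekindZeta_residue L * dedekindZeta_residue k ^ 2 =
      dedekindZeta_residue F * dedekindZeta_residue K ^ 2 := by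
  have hLk := (tendsto_sub_one_mul_dedekindZeta_nhdsGT L).mul
    ((tendsto_sub_one_mul_dedekindZeta_nhdsGT k).pow 2)
  have hFK := (tendsto_sub_one_mul_dedekindZeta_nhdsGT F).mul
    ((tendsto_sub_one_mul_dedekindZeta_nhdsGT K).pow 2)
  have := tendsto_nhds_unique_of_eventuallyEq hLk hFK <| by
    filter_upwards with s
    linear_combination ((s : ℂ) - 1) ^ 3 * dedekindZeta_relation_of_primeCount h s
  exact_mod_cast this

end BrauerRelation

section DihedralAverages

theorem apply_sr_eq_apply_sr_zero {q : ℕ} (hq : Odd q) {α : Type*} {c : DihedralGroup q → α}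
    (hc : ∀ g h, c (h * g * h⁻¹) = c g) (i : ZMod q) : c (sr i) = c (sr 0) := by
  obtain ⟨m, rfl⟩ := hq
  have hm : 2 * (m : ZMod (2 * m + 1)) + 1 = 0 := by
    exact_mod_cast ZMod.natCast_self (2 * m + 1)
  rw [← hc (sr 0) (r (-(m + 1 : ZMod (2 * m + 1)) * i))]
  congr 1
  simp only [r_mul_sr, inv_r, sr_mul_r]
  congr 1
  linear_combination (-i) * hm

theorem sum_dihedralGroup {q : ℕ} [NeZero q] {α : Type*} [AddCommMonoid α]
    (c : DihedralGroup q → α) : ∑ g, c g = ∑ i, c (r i) + ∑ i, c (sr i) := by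
  rw [← equivSum.symm.sum_comp, Fintype.sum_sum_type]
  rfl

theorem finsum_closure_r_one {q : ℕ} [NeZero q] {α : Type*} [AddCommMonoid α]
    (c : DihedralGroup q → α) :
    ∑ᶠ g : Subgroup.closure {(r 1 : DihedralGroup q)}, c g = ∑ i, c (r i) := by
  have hrange : (Subgroup.closure {(r 1 : DihedralGroup q)} : Set (DihedralGroup q)) =
      Set.range r := by
    ext g
    rw [← Subgroup.zpowers_eq_closure, SetLike.mem_coe, Subgroup.mem_zpowers_iff]
    constructor
    · rintro ⟨n, rfl⟩
      exact ⟨n, by simp⟩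
    · rintro ⟨i, rfl⟩
      exact ⟨i.val, by simp⟩
  refine (finsum_set_coe_eq_finsum_mem (Subgroup.closure {(r 1 : DihedralGroup q)} :
    Set (DihedralGroup q))).trans ?_
  rw [hrange, finsum_mem_range fun i j h => by simpa using h, finsum_eq_sum_of_fintype]

theorem finsum_closure_sr_zero {q : ℕ} {α : Type*} [AddCommMonoid α]
    (c : DihedralGroup q → α) :
    ∑ᶠ g : Subgroup.closure {(sr 0 : DihedralGroup q)}, c g = c 1 + c (sr 0) := by
  have hpair : (Subgroup.closure {(sr 0 : DihedralGroup q)} : Set (DihedralGroup q)) =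
      {1, sr 0} := by
    ext g
    rw [← Subgroup.zpowers_eq_closure, SetLike.mem_coe, Subgroup.mem_zpowers_iff]
    constructor
    · rintro ⟨n, rfl⟩
      rcases Int.even_or_odd' n with ⟨m, rfl | rfl⟩
      · simp [zpow_mul, zpow_ofNat, pow_two]
      · simp [zpow_add, zpow_mul, zpow_ofNat, pow_two]
    · rintro (rfl | rfl)
      · exact ⟨0, zpow_zero _⟩
      · exact ⟨1, zpow_one _⟩
  refine (finsum_set_coe_eq_finsum_mem (Subgroup.closure {(sr 0 : DihedralGroup q)} :
    Set (DihedralGroup q))).trans ?_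
  rw [hpair, finsum_mem_pair fun h => by cases h]

-- This is the character relation `Ind_1 + 2 Ind_D = Ind_⟨r⟩ + 2 Ind_⟨s⟩`.
theorem dihedral_average_relation {q : ℕ} [NeZero q] (hq : Odd q) {R : Type*}
    [AddCommMonoid R] [IsAddTorsionFree R] {c : DihedralGroup q → R}
    (hc : ∀ g h, c (h * g * h⁻¹) = c g) {d g s : R}
    (hd : (2 * q) • d = ∑ x, c x) (hg : q • g = ∑ i, c (r i)) (hs : 2 • s = c 1 + c (sr 0)) :
    c 1 + 2 • d = g + 2 • s := by
  rw [sum_dihedralGroup, ← hg] at hd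
  simp only [apply_sr_eq_apply_sr_zero hq hc, Finset.sum_const, Finset.card_univ,
    ZMod.card] at hd
  have : 2 • d = g + c (sr 0) := by
    apply nsmul_right_injective (NeZero.ne q)
    simp only [smul_add, ← hd, mul_comm 2 q, mul_smul]
  rw [this, hs]
  abel

theorem finsum_comap_mulEquiv {G D α : Type*} [Group G] [Group D] [AddCommMonoid α] (e : G ≃* D)
    (S : Subgroup D) (c : G → α) :
    ∑ᶠ g : S.comap e.toMonoidHom, c g = ∑ᶠ d : S, c (e.symm d) := by
  let f : S.comap e.toMonoidHom ≃ S := e.toEquiv.subtypeEquiv fun _ => Iff.rfl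
  rw [← finsum_comp_equiv f]
  exact finsum_congr fun g => congrArg c (e.symm_apply_apply g).symm

theorem finsum_one_eq_natCard {α : Type*} [Finite α] : ∑ᶠ _ : α, (1 : ℕ) = Nat.card α := by
  have := Fintype.ofFinite α
  simp [finsum_eq_sum_of_fintype]

theorem average_relation_of_mulEquiv_dihedralGroup {q : ℕ} [NeZero q] (hq : Odd q) {G R : Type*}
    [Group G] [AddCommMonoid R] [IsAddTorsionFree R] (e : G ≃* DihedralGroup q) {c : G → R}
    (hc : ∀ g h, c (h * g * h⁻¹) = c g) {d g s : R} (hd : Nat.card G • d = ∑ᶠ x, c x)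
    (hg : Nat.card ((Subgroup.closure {(r 1 : DihedralGroup q)}).comap e.toMonoidHom) • g =
      ∑ᶠ x : (Subgroup.closure {(r 1 : DihedralGroup q)}).comap e.toMonoidHom, c x)
    (hs : Nat.card ((Subgroup.closure {(sr 0 : DihedralGroup q)}).comap e.toMonoidHom) • s =
      ∑ᶠ x : (Subgroup.closure {(sr 0 : DihedralGroup q)}).comap e.toMonoidHom, c x) :
    c 1 + 2 • d = g + 2 • s := by
  have : Finite G := Finite.of_equiv _ e.symm.toEquiv
  rw [← finsum_one_eq_natCard, finsum_comap_mulEquiv e _ (fun _ => 1),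
    finsum_comap_mulEquiv] at hg hs
  rw [finsum_closure_r_one (fun _ => 1), finsum_closure_r_one (fun x => c (e.symm x))] at hg
  rw [finsum_closure_sr_zero (fun _ => 1), finsum_closure_sr_zero (fun x => c (e.symm x))] at hs
  rw [← finsum_comp_equiv e.symm.toEquiv, Nat.card_congr e.toEquiv, DihedralGroup.nat_card,
    finsum_eq_sum_of_fintype] at hd
  simpa using dihedral_average_relation hq (c := fun x => c (e.symm x))
    (fun x y => by simp only [map_mul, map_inv, hc]) hd (by simpa using hg) (by simpa using hs)

end DihedralAverages

section OrbitCounting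

variable {H X Y : Type*} [Group H] [MulAction H X]

theorem finsum_card_stabilizer_orbit [Finite H] (x₀ : X) :
    ∑ᶠ x : MulAction.orbit H x₀, Nat.card (MulAction.stabilizer H (x : X)) = Nat.card H := by
  have hst (x : MulAction.orbit H x₀) : Nat.card (MulAction.stabilizer H (x : X)) =
      Nat.card (MulAction.stabilizer H x₀) :=
    Nat.card_congr (MulAction.stabilizerEquivStabilizerOfOrbitRel x.2).toEquiv
  have : Finite (MulAction.orbit H x₀) := Set.finite_range _
  have := Fintype.ofFinite (MulAction.orbit H x₀)
  rw [finsum_congr hst, finsum_eq_sum_of_fintype, Finset.sum_const, smul_eq_mul,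
    Finset.card_univ, ← Nat.card_eq_fintype_card, ← Nat.card_prod]
  exact Nat.card_congr (MulAction.orbitProdStabilizerEquivGroup H x₀)

open Classical in
theorem card_smul_eq (x z : X) : Nat.card {h : H // h • x = z} =
    if z ∈ MulAction.orbit H x then Nat.card (MulAction.stabilizer H x) else 0 := by
  split_ifs with hz
  · obtain ⟨g, rfl⟩ := hz
    exact Nat.card_congr ((Equiv.mulLeft g⁻¹).subtypeEquiv fun h => by
      simp [mul_smul, inv_smul_eq_iff])
  · rw [Nat.card_eq_zero]
    exact .inl ⟨fun h => hz ⟨h.1, h.2⟩⟩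

theorem finsum_card_eq_smul_comm [Finite H] [Finite X] (φ : X → X) :
    ∑ᶠ h : H, Nat.card {x // φ x = h • x} = ∑ᶠ x, Nat.card {h : H // h • x = φ x} := by
  classical
  have := Fintype.ofFinite H
  have := Fintype.ofFinite X
  simp only [finsum_eq_sum_of_fintype, Nat.card_eq_fintype_card, Fintype.card_subtype,
    Finset.card_filter]
  rw [Finset.sum_comm]
  simp only [eq_comm]

-- A version of Burnside's lemma, which is the case `φ = id`.
theorem card_mul_card_fixed_of_orbits [Finite H] [Finite X] {π : X → Y}
    (hπ : Function.Surjective π) (hfib : ∀ x x', π x = π x' ↔ x ∈ MulAction.orbit H x')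
    {φ : X → X} {ψ : Y → Y} (hψ : ∀ x, ψ (π x) = π (φ x)) :
    Nat.card H * Nat.card {y // ψ y = y} = ∑ᶠ h : H, Nat.card {x // φ x = h • x} := by
  classical
  have := Fintype.ofFinite X
  have : Finite Y := Finite.of_surjective π hπ
  have := Fintype.ofFinite Y
  have hfibre (y : Y) : ∑ x with π x = y, Nat.card {h : H // h • x = φ x} =
      if ψ y = y then Nat.card H else 0 := by
    obtain ⟨x₀, rfl⟩ := hπ y
    simp only [card_smul_eq, ← hfib, ← hψ]
    rw [← finsum_card_stabilizer_orbit x₀, finsum_eq_sum_of_fintype]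
    split_ifs with h
    · rw [Finset.sum_congr rfl (g := fun x => Nat.card (MulAction.stabilizer H x))
        (fun x hx => by rw [(Finset.mem_filter.mp hx).2, if_pos h])]
      exact Finset.sum_subtype _ (by simp [hfib]) _
    · exact Finset.sum_eq_zero fun x hx => by rw [(Finset.mem_filter.mp hx).2, if_neg h]
  rw [finsum_card_eq_smul_comm, finsum_eq_sum_of_fintype, ← Finset.sum_fiberwise (g := π),
    Finset.sum_congr rfl fun y _ => hfibre y, ← Finset.sum_filter, Finset.sum_const, smul_eq_mul,
    Nat.card_eq_fintype_card (α := {y // ψ y = y}), Fintype.card_subtype, mul_comm]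

end OrbitCounting

section HomsOverInvariants

open Polynomial

attribute [local instance] Polynomial.algebra

variable {A B Ω : Type*} [CommRing A] [CommRing B] [Algebra A B] [CommRing Ω] [IsDomain Ω]
  {H : Type*} [Group H] [MulSemiringAction H B] [Algebra.IsInvariant A B H]

theorem isInvariant_polynomial : Algebra.IsInvariant A[X] B[X] H := by
  refine ⟨fun β hβ => ?_⟩
  have hmem : β ∈ lifts (algebraMap A B) := (lifts_iff_coeff_lifts β).mpr fun n =>
    Algebra.IsInvariant.isInvariant (G := H) (β.coeff n) fun σ => by
      rw [← coeff_smul, hβ σ]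
  exact (mem_lifts β).mp hmem

variable [Finite H]

theorem exists_apply_eq_apply_smul {f g : B →+* Ω}
    (h : f.comp (algebraMap A B) = g.comp (algebraMap A B)) (b : B) :
    ∃ σ : H, g b = f (σ • b) := by
  have := Fintype.ofFinite H
  let P := MulSemiringAction.charpoly H b
  have hP : P.map f = P.map g := by
    ext n
    obtain ⟨a, ha⟩ := Algebra.IsInvariant.isInvariant (A := A) (G := H) (P.coeff n)
      (MulSemiringAction.smul_coeff_charpoly b n)
    simpa [← ha] using RingHom.congr_fun h a
  have hroot : (P.map f).eval (g b) = 0 := by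
    rw [hP, eval_map_apply, MulSemiringAction.eval_charpoly, map_zero]
  simp only [P] at hroot
  rw [MulSemiringAction.charpoly_eq, Polynomial.map_prod, eval_prod,
    Finset.prod_eq_zero_iff] at hroot
  obtain ⟨σ, -, hσ⟩ := hroot
  exact ⟨σ, by simpa [sub_eq_zero] using hσ⟩

theorem exists_polynomial_coeff_eq {ι R : Type*} [Finite ι] [Semiring R] (b : ι → R) :
    ∃ (β : R[X]) (n : ι → ℕ), ∀ i, β.coeff (n i) = b i := by
  classical
  have := Fintype.ofFinite ι
  let ε := Fintype.equivFin ι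
  refine ⟨∑ i, monomial (ε i : ℕ) (b i), fun i => ε i, fun i => ?_⟩
  simp [finsetSum_coeff, coeff_monomial, Fin.val_inj]

-- If every `σ` failed at some `b σ`, a polynomial with all the `b σ` among its coefficients would
-- contradict `exists_apply_eq_apply_smul` over `A[X]`.
theorem exists_smul_of_comp_algebraMap_eq {f g : B →+* Ω}
    (h : f.comp (algebraMap A B) = g.comp (algebraMap A B)) :
    ∃ σ : H, ∀ b, g b = f (σ • b) := by
  by_contra! hne
  choose b hb using hne
  obtain ⟨β, n, hβ⟩ := exists_polynomial_coeff_eq b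
  have := isInvariant_polynomial (A := A) (B := B) (H := H)
  have hX : (mapRingHom f).comp (algebraMap A[X] B[X]) =
      (mapRingHom g).comp (algebraMap A[X] B[X]) := by
    simp [Polynomial.algebraMap_def, mapRingHom_comp, h]
  obtain ⟨σ, hσ⟩ := exists_apply_eq_apply_smul (H := H) hX β
  apply hb σ
  simpa [hβ] using congrArg (fun p => p.coeff (n σ)) hσ

end HomsOverInvariants

theorem exists_comp_algebraMap_eq {A B Ω : Type*} [CommRing A] [CommRing B] [Algebra A B]
    [Field Ω] [IsAlgClosed Ω] [Algebra.IsIntegral A B] [IsDomain B] [FaithfulSMul A B]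
    (x : A →+* Ω) : ∃ f : B →+* Ω, f.comp (algebraMap A B) = x := by
  have := RingHom.ker_isPrime x
  obtain ⟨Q, hQ, hQP⟩ := Ideal.exists_ideal_over_prime_of_isIntegral_of_isDomain (S := B)
    (RingHom.ker x) (by
      rw [(RingHom.injective_iff_ker_eq_bot _).mp (FaithfulSMul.algebraMap_injective A B)]
      exact bot_le)
  have : Q.LiesOver (RingHom.ker x) := ⟨hQP.symm⟩
  let : Algebra (A ⧸ RingHom.ker x) Ω := (RingHom.kerLift x).toAlgebra
  have : FaithfulSMul (A ⧸ RingHom.ker x) Ω :=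
    (faithfulSMul_iff_algebraMap_injective _ _).mpr (RingHom.kerLift_injective x)
  have : Module.IsTorsionFree (A ⧸ RingHom.ker x) (B ⧸ Q) :=
    Module.isTorsionFree_iff_algebraMap_injective.mpr
      ((faithfulSMul_iff_algebraMap_injective _ _).mp (Ideal.Quotient.instFaithfulSMul _ _))
  let g : B ⧸ Q →ₐ[A ⧸ RingHom.ker x] Ω := IsAlgClosed.lift
  refine ⟨g.toRingHom.comp (Ideal.Quotient.mk Q), ?_⟩
  ext a
  exact g.commutes (Ideal.Quotient.mk _ a)

/-- The action of `G` on ring homomorphisms out of `R` by `(σ • x) a = x (σ⁻¹ • a)`. It is not an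
instance, as it would conflict with an action on the codomain. -/
@[reducible] def ringHomMulAction (G R Ω : Type*) [Group G] [CommRing R] [MulSemiringAction G R]
    [CommRing Ω] : MulAction G (R →+* Ω) where
  smul σ x := x.comp (MulSemiringAction.toRingHom G R σ⁻¹)
  one_smul x := RingHom.ext fun a => congrArg x (by simp)
  mul_smul σ τ x := RingHom.ext fun a => congrArg x (by simp [mul_smul])

attribute [local instance] ringHomMulAction in
theorem ringHom_smul_apply {G R Ω : Type*} [Group G] [CommRing R] [MulSemiringAction G R]
    [CommRing Ω] (σ : G) (x : R →+* Ω) (a : R) : (σ • x) a = x (σ⁻¹ • a) :=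
  rfl

attribute [local instance] ringHomMulAction in
theorem comp_algebraMap_eq_iff_mem_orbit {A B Ω G : Type*} [CommRing A] [CommRing B] [Algebra A B]
    [CommRing Ω] [IsDomain Ω] [Group G] [Finite G] [MulSemiringAction G B]
    [Algebra.IsInvariant A B G] [SMulCommClass G A B] {x y : B →+* Ω} :
    x.comp (algebraMap A B) = y.comp (algebraMap A B) ↔ x ∈ MulAction.orbit G y := by
  constructor
  · intro h
    obtain ⟨σ, hσ⟩ := exists_smul_of_comp_algebraMap_eq (H := G) h.symm
    exact ⟨σ⁻¹, by ext a; simp [ringHom_smul_apply, hσ]⟩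
  · rintro ⟨σ, rfl⟩
    ext a
    simp [ringHom_smul_apply, smul_algebraMap]

instance finite_ringHom (E Ω : Type*) [Field E] [NumberField E] [Field Ω] :
    Finite (𝓞 E →+* Ω) :=
  Finite.of_injective (β := 𝓞 E →ₐ[ℤ] Ω) RingHom.toIntAlgHom fun _ _ h =>
    RingHom.ext fun a => DFunLike.congr_fun h a

section FrobeniusHoms

/-- The number of ring homomorphisms to an algebraic closure of `𝔽_p` taking values in the field
with `p ^ m` elements. -/
noncomputable def frobHomCount (p m : ℕ) [Fact p.Prime] (R : Type*) [CommRing R] : ℕ :=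
  Nat.card {x : R →+* AlgebraicClosure (ZMod p) // ∀ a, x a ^ p ^ m = x a}

/-- The number of ring homomorphisms to an algebraic closure of `𝔽_p` on which `σ` acts as the
`m`-th power of Frobenius. -/
noncomputable def twistedFrobHomCount (p m : ℕ) [Fact p.Prime] (R : Type*) [CommRing R]
    {G : Type*} [SMul G R] (σ : G) : ℕ :=
  Nat.card {x : R →+* AlgebraicClosure (ZMod p) // ∀ a, x a ^ p ^ m = x (σ • a)}

variable (p m : ℕ) [Fact p.Prime]

theorem twistedFrobHomCount_one (R : Type*) [CommRing R] {G : Type*} [Group G]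
    [MulSemiringAction G R] : twistedFrobHomCount p m R (1 : G) = frobHomCount p m R := by
  simp [twistedFrobHomCount, frobHomCount]

theorem twistedFrobHomCount_conj (R : Type*) [CommRing R] {G : Type*} [Group G]
    [MulSemiringAction G R] (σ τ : G) :
    twistedFrobHomCount p m R (τ * σ * τ⁻¹) = twistedFrobHomCount p m R σ := by
  refine Nat.card_congr
    { toFun := fun x => ⟨x.1.comp (MulSemiringAction.toRingHom G R τ), fun a => ?_⟩
      invFun := fun x => ⟨x.1.comp (MulSemiringAction.toRingHom G R τ⁻¹), fun a => ?_⟩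
      left_inv := fun x => ?_
      right_inv := fun x => ?_ }
  · simp [x.2, mul_smul]
  · simp [x.2, mul_smul]
  · ext; simp
  · ext; simp

attribute [local instance] ringHomMulAction in
theorem card_mul_frobHomCount (E L G : Type*) [Field E] [NumberField E] [Field L] [NumberField L]
    [Algebra E L] [Group G] [Finite G] [MulSemiringAction G L] [IsGaloisGroup G E L] :
    Nat.card G * frobHomCount p m (𝓞 E) = ∑ᶠ σ : G, twistedFrobHomCount p m (𝓞 L) σ := by
  set Ω := AlgebraicClosure (ZMod p)
  have key := card_mul_card_fixed_of_orbits (H := G)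
    (π := fun x : 𝓞 L →+* Ω => x.comp (algebraMap (𝓞 E) (𝓞 L)))
    (fun x => exists_comp_algebraMap_eq x) (fun x y => comp_algebraMap_eq_iff_mem_orbit)
    (φ := fun x => (iterateFrobenius Ω p m).comp x)
    (ψ := fun x => (iterateFrobenius Ω p m).comp x) (fun x => rfl)
  rw [frobHomCount]
  convert key using 1
  · congr 1
    refine Nat.card_congr (Equiv.subtypeEquivRight fun x => ?_)
    simp [RingHom.ext_iff, iterateFrobenius_def]
  · rw [← finsum_comp_equiv (Equiv.inv G)]
    refine finsum_congr fun σ => Nat.card_congr (Equiv.subtypeEquivRight fun x => ?_)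
    simp [RingHom.ext_iff, iterateFrobenius_def, ringHom_smul_apply]

variable {p m}

theorem card_eq_pow_iff_finrank_eq {κ : Type*} [Field κ] [Finite κ] [Algebra (ZMod p) κ] {d : ℕ} :
    Nat.card κ = p ^ d ↔ Module.finrank (ZMod p) κ = d := by
  rw [Module.natCard_eq_pow_finrank (K := ZMod p), Nat.card_zmod,
    (Nat.pow_right_injective (Fact.out : p.Prime).two_le).eq_iff]

theorem forall_pow_eq_self_iff_finrank_dvd {κ : Type*} [Field κ] [Finite κ]
    [Algebra (ZMod p) κ] : (∀ a : κ, a ^ p ^ m = a) ↔ Module.finrank (ZMod p) κ ∣ m := by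
  rw [← FiniteField.orderOf_frobeniusAlgHom, orderOf_dvd_iff_pow_eq_one]
  simp only [DFunLike.ext_iff, AlgHom.coe_pow, FiniteField.coe_frobeniusAlgHom,
    pow_iterate, ZMod.card, AlgHom.one_apply]

theorem frobHomCount_of_algebra_zmod {κ : Type*} [Field κ] [Finite κ] [Algebra (ZMod p) κ] :
    frobHomCount p m κ =
      if Module.finrank (ZMod p) κ ∣ m then Module.finrank (ZMod p) κ else 0 := by
  have hx (x : κ →+* AlgebraicClosure (ZMod p)) :
      (∀ a, x a ^ p ^ m = x a) ↔ Module.finrank (ZMod p) κ ∣ m := by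
    simp only [← map_pow, x.injective.eq_iff, forall_pow_eq_self_iff_finrank_dvd]
  simp only [frobHomCount, hx]
  split_ifs with h
  · refine Eq.trans (Nat.card_congr ?_)
      (Nat.card_eq_fintype_card.trans (AlgHom.card (ZMod p) κ (AlgebraicClosure (ZMod p))))
    exact
      { toFun := fun x => ⟨x.1, RingHom.congr_fun
          (Subsingleton.elim (x.1.comp (algebraMap (ZMod p) κ)) (algebraMap _ _))⟩
        invFun := fun x => ⟨x, h⟩
        left_inv := fun _ => rfl
        right_inv := fun _ => rfl }
  · simp [h]

theorem charP_of_card_eq_pow {κ : Type*} [Field κ] {d : ℕ} (h : Nat.card κ = p ^ d) :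
    CharP κ p := by
  have hp := (Fact.out : p.Prime)
  have : Finite κ := Nat.finite_of_card_ne_zero (h ▸ (pow_pos hp.pos d).ne')
  have := Fintype.ofFinite κ
  obtain ⟨ℓ, hℓ⟩ := CharP.exists κ
  obtain ⟨n, hℓp, hn⟩ := FiniteField.card κ ℓ
  rw [Nat.card_eq_fintype_card, hn] at h
  have hdvd : ℓ ∣ p ^ d := h ▸ dvd_pow_self _ n.ne_zero
  exact (Nat.prime_dvd_prime_iff_eq hℓp hp).mp (hℓp.dvd_of_dvd_pow hdvd) ▸ hℓ

theorem frobHomCount_field (hm : m ≠ 0) (κ : Type*) [Field κ] [Finite κ] :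
    frobHomCount p m κ = ∑ d ∈ m.divisors, if Nat.card κ = p ^ d then d else 0 := by
  by_cases hκ : CharP κ p
  · have : Algebra (ZMod p) κ := ZMod.algebra κ p
    simp only [card_eq_pow_iff_finrank_eq, Finset.sum_ite_eq, Nat.mem_divisors,
      and_iff_left hm, frobHomCount_of_algebra_zmod]
  · rw [frobHomCount, Finset.sum_eq_zero fun d _ => if_neg fun hc =>
      hκ (charP_of_card_eq_pow hc), Nat.card_eq_zero]
    exact .inl ⟨fun x => hκ ((x.1.charP_iff x.1.injective p).mpr inferInstance)⟩

open IsDedekindDomain in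
/-- The kernel of a homomorphism from a ring of integers to a field of characteristic `p`, as a
prime of the number field. -/
noncomputable def kerPrime {E : Type*} [Field E] [NumberField E]
    (x : 𝓞 E →+* AlgebraicClosure (ZMod p)) : HeightOneSpectrum (𝓞 E) where
  asIdeal := RingHom.ker x
  isPrime := RingHom.ker_isPrime x
  ne_bot h := by
    have hker : (p : 𝓞 E) ∈ RingHom.ker x := by
      rw [RingHom.mem_ker, map_natCast, CharP.cast_eq_zero]
    rw [h, Ideal.mem_bot] at hker
    exact (Fact.out : p.Prime).ne_zero (by exact_mod_cast hker)

variable {E : Type*} [Field E] [NumberField E]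

open IsDedekindDomain

theorem card_kerPrime_fiber (v : HeightOneSpectrum (𝓞 E)) :
    Nat.card {x : {x : 𝓞 E →+* AlgebraicClosure (ZMod p) // ∀ a, x a ^ p ^ m = x a} //
      kerPrime x.1 = v} = frobHomCount p m (𝓞 E ⧸ v.asIdeal) := by
  have := v.isMaximal
  let _ : Field (𝓞 E ⧸ v.asIdeal) := Ideal.Quotient.field _
  refine Nat.card_congr
    { toFun := fun x => ⟨Ideal.Quotient.lift v.asIdeal x.1.1 (fun a ha => ?_), fun a => ?_⟩
      invFun := fun y => ⟨⟨y.1.comp (Ideal.Quotient.mk _), fun a => y.2 _⟩, ?_⟩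
      left_inv := fun x => rfl
      right_inv := fun y => Subtype.ext (Ideal.Quotient.ringHom_ext rfl) }
  · rwa [← x.2] at ha
  · obtain ⟨a, rfl⟩ := Ideal.Quotient.mk_surjective a
    exact x.1.2 a
  · ext a
    change (y.1.comp (Ideal.Quotient.mk _)) a = 0 ↔ _
    rw [RingHom.comp_apply, map_eq_zero, Ideal.Quotient.eq_zero_iff_mem]

theorem frobHomCount_quotient (hm : m ≠ 0) (v : HeightOneSpectrum (𝓞 E)) :
    frobHomCount p m (𝓞 E ⧸ v.asIdeal) =
      ∑ d ∈ m.divisors, if primeNorm E v = p ^ d then d else 0 := by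
  have := v.isMaximal
  let _ : Field (𝓞 E ⧸ v.asIdeal) := Ideal.Quotient.field _
  have : Finite (𝓞 E ⧸ v.asIdeal) := Ideal.finiteQuotientOfFreeOfNeBot _ v.ne_bot
  rw [primeNorm, Ideal.absNorm_apply, Submodule.cardQuot_apply]
  exact frobHomCount_field hm (𝓞 E ⧸ v.asIdeal)

theorem natCard_eq_finsum_fiber {α β : Type*} [Finite α] (f : α → β) :
    Nat.card α = ∑ᶠ b, Nat.card {a // f a = b} := by
  classical
  have := Fintype.ofFinite α
  rw [finsum_eq_sum_of_support_subset (s := Finset.univ.image f), Nat.card_eq_fintype_card,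
    ← Finset.card_univ, Finset.card_eq_sum_card_image f]
  · simp [Nat.card_eq_fintype_card, Fintype.card_subtype]
  · intro b hb
    obtain ⟨a, rfl⟩ := (Nat.card_ne_zero.mp hb).1
    simp

theorem finsum_ite_primeNorm_eq (n d : ℕ) :
    ∑ᶠ v, (if primeNorm E v = n then d else 0) = d * primeCount E n := by
  have := Fintype.ofFinite {v // primeNorm E v = n}
  calc ∑ᶠ v, (if primeNorm E v = n then d else 0)
      = ∑ᶠ _ : {v // primeNorm E v = n}, d := by
        simp only [← finsum_eq_if]
        exact (finsum_subtype_eq_finsum_cond _).symm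
    _ = d * primeCount E n := by
        rw [finsum_eq_sum_of_fintype, Finset.sum_const, smul_eq_mul, mul_comm, primeCount,
          Nat.card_eq_fintype_card, Finset.card_univ]

theorem frobHomCount_ringOfIntegers (hm : m ≠ 0) :
    frobHomCount p m (𝓞 E) = ∑ d ∈ m.divisors, d * primeCount E (p ^ d) := by
  rw [frobHomCount, natCard_eq_finsum_fiber fun x => kerPrime x.1]
  simp only [card_kerPrime_fiber, frobHomCount_quotient hm, ← finsum_ite_primeNorm_eq]
  refine finsum_sum_comm _ _ fun d _ => ?_
  have : Finite {v | primeNorm E v = p ^ d} := finite_primeNorm_fiber E (p ^ d)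
  exact (Set.toFinite {v | primeNorm E v = p ^ d}).subset fun v hv => by
    by_contra h
    exact hv (if_neg h)

end FrobeniusHoms

theorem primeCount_eq_zero (E : Type*) [Field E] [NumberField E] {n : ℕ} (hn : ¬ IsPrimePow n) :
    primeCount E n = 0 := by
  rw [primeCount, Nat.card_eq_zero]
  refine .inl ⟨fun ⟨v, hv⟩ => hn ?_⟩
  have := v.isMaximal
  let _ : Field (𝓞 E ⧸ v.asIdeal) := Ideal.Quotient.field _
  have : Finite (𝓞 E ⧸ v.asIdeal) := Ideal.finiteQuotientOfFreeOfNeBot _ v.ne_bot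
  have := Fintype.ofFinite (𝓞 E ⧸ v.asIdeal)
  rw [← hv, primeNorm, Ideal.absNorm_apply, Submodule.cardQuot_apply, Nat.card_eq_fintype_card]
  exact FiniteField.isPrimePow_card _

theorem isGaloisGroup_of_eq_fixedField {k L : Type*} [Field k] [Field L] [Algebra k L]
    [IsGalois k L] {F : IntermediateField k L} {S : Subgroup (L ≃ₐ[k] L)}
    (hF : F = fixedField S) : IsGaloisGroup S F L :=
  IsGaloisGroup.of_fixedPoints_eq _ k L S F hF.symm

/-- `L/k` is Galois with dihedral group of order `2 * q`, `q` odd, and `F`, `K` are the fixed fields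
of the rotation subgroup and of a reflection. -/
structure IsDihedralTower (q : ℕ) {k L : Type*} [Field k] [Field L] [Algebra k L]
    (e : (L ≃ₐ[k] L) ≃* DihedralGroup q) (F K : IntermediateField k L) : Prop where
  odd : Odd q
  eqF : F = fixedField ((Subgroup.closure {(r 1 : DihedralGroup q)}).comap e.toMonoidHom)
  eqK : K = fixedField ((Subgroup.closure {(sr 0 : DihedralGroup q)}).comap e.toMonoidHom)

namespace IsDihedralTower

variable {q : ℕ} [NeZero q] {k L : Type*} [Field k] [Field L] [NumberField k] [NumberField L]
  [Algebra k L] [IsGalois k L] {e : (L ≃ₐ[k] L) ≃* DihedralGroup q} {F K : IntermediateField k L}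

theorem frobHomCount_relation (h : IsDihedralTower q e F K) (p m : ℕ) [Fact p.Prime] :
    frobHomCount p m (𝓞 L) + 2 * frobHomCount p m (𝓞 k) =
      frobHomCount p m (𝓞 F) + 2 * frobHomCount p m (𝓞 K) := by
  have := isGaloisGroup_of_eq_fixedField h.eqF
  have := isGaloisGroup_of_eq_fixedField h.eqK
  have : Finite (L ≃ₐ[k] L) := Finite.of_equiv _ e.symm.toEquiv
  rw [← twistedFrobHomCount_one (G := L ≃ₐ[k] L) p m (𝓞 L)]
  exact average_relation_of_mulEquiv_dihedralGroup h.odd e (twistedFrobHomCount_conj p m (𝓞 L))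
    (card_mul_frobHomCount p m k L _) (card_mul_frobHomCount p m F L _)
    (card_mul_frobHomCount p m K L _)

theorem primeCount_pow_relation (h : IsDihedralTower q e F K) {p : ℕ} [Fact p.Prime] {m : ℕ}
    (hm : m ≠ 0) : primeCount L (p ^ m) + 2 * primeCount k (p ^ m) =
      primeCount F (p ^ m) + 2 * primeCount K (p ^ m) := by
  induction m using Nat.strong_induction_on with
  | _ m ih =>
    have key := h.frobHomCount_relation p m
    simp only [frobHomCount_ringOfIntegers hm, ← Nat.insert_self_properDivisors hm,
      Finset.sum_insert Nat.self_notMem_properDivisors] at key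
    have hproper : ∑ d ∈ m.properDivisors, d * primeCount L (p ^ d) +
        2 * ∑ d ∈ m.properDivisors, d * primeCount k (p ^ d) =
        ∑ d ∈ m.properDivisors, d * primeCount F (p ^ d) +
        2 * ∑ d ∈ m.properDivisors, d * primeCount K (p ^ d) := by
      simp only [Finset.mul_sum, ← Finset.sum_add_distrib]
      refine Finset.sum_congr rfl fun d hd => ?_
      linear_combination d *
        ih d (Nat.mem_properDivisors.mp hd).2 (Nat.pos_of_mem_properDivisors hd).ne'
    apply Nat.eq_of_mul_eq_mul_left (Nat.pos_of_ne_zero hm)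
    linarith

theorem primeCount_relation (h : IsDihedralTower q e F K) (n : ℕ) :
    primeCount L n + 2 * primeCount k n = primeCount F n + 2 * primeCount K n := by
  by_cases hn : IsPrimePow n
  · obtain ⟨p, m, hp, hm, rfl⟩ := hn
    have : Fact p.Prime := ⟨hp.nat_prime⟩
    exact h.primeCount_pow_relation hm.ne'
  · simp [primeCount_eq_zero _ hn]

theorem residue_relation (h : IsDihedralTower q e F K) :
    dedekindZeta_residue L * dedekindZeta_residue k ^ 2 =
      dedekindZeta_residue F * dedekindZeta_residue K ^ 2 :=
  dedekindZeta_residue_relation_of_primeCount h.primeCount_relation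

end IsDihedralTower

section Monogenic

theorem eq_of_forall_isMaximal_of_not_le_sq {B : Type*} [CommRing B] [IsDedekindDomain B]
    {P I : Ideal B} (hI : I ≤ P) (hI2 : ¬ I ≤ P ^ 2)
    (hmax : ∀ Q : Ideal B, Q.IsMaximal → I ≤ Q → Q = P) : I = P := by
  obtain ⟨J, rfl⟩ := Ideal.dvd_iff_le.mpr hI
  suffices J = ⊤ by rw [this, Ideal.mul_top]
  by_contra hJ
  obtain ⟨Q, hQ, hJQ⟩ := Ideal.exists_le_maximal J hJ
  obtain rfl := hmax Q hQ (Ideal.mul_le_right.trans hJQ)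
  exact hI2 (by rw [pow_two]; exact Ideal.mul_mono_right hJQ)

theorem ideal_le_of_forall_isMaximal {B : Type*} [CommRing B] {I J : Ideal B}
    (h : ∀ P : Ideal B, P.IsMaximal → ∃ u, u ∉ P ∧ ∀ x ∈ I, u * x ∈ J) : I ≤ J := by
  intro x hx
  by_contra hxJ
  have htop : J.colon {x} ≠ ⊤ := fun ht => hxJ (by
    have : (1 : B) ∈ J.colon {x} := ht ▸ Submodule.mem_top
    rw [Submodule.mem_colon_singleton] at this
    simpa using this)
  obtain ⟨P, hP, hle⟩ := Ideal.exists_le_maximal _ htop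
  obtain ⟨u, hu, hux⟩ := h P hP
  exact hu (hle (Submodule.mem_colon_singleton.mpr (hux x hx)))

section Residue

variable {B : Type*} [CommRing B] {P : Ideal B} [P.IsMaximal] [Finite (B ⧸ P)]

theorem pow_card_quotient_sub_self_mem (x : B) : x ^ Nat.card (B ⧸ P) - x ∈ P := by
  let _ : Field (B ⧸ P) := Ideal.Quotient.field P
  have := Fintype.ofFinite (B ⧸ P)
  rw [← Ideal.Quotient.eq, map_pow, Nat.card_eq_fintype_card, FiniteField.pow_card]

theorem exists_forall_sub_pow_mem (P : Ideal B) [P.IsMaximal] [Finite (B ⧸ P)] :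
    ∃ a ∉ P, ∀ b ∉ P, ∃ n : ℕ, b - a ^ n ∈ P := by
  let _ : Field (B ⧸ P) := Ideal.Quotient.field P
  obtain ⟨g, hg⟩ := IsCyclic.exists_generator (α := (B ⧸ P)ˣ)
  obtain ⟨a, ha⟩ := Ideal.Quotient.mk_surjective (g : B ⧸ P)
  refine ⟨a, ?_, fun b hb => ?_⟩
  · rw [← Ideal.Quotient.eq_zero_iff_mem, ha]
    exact g.ne_zero
  · have hb' : Ideal.Quotient.mk P b ≠ 0 := by rwa [Ne, Ideal.Quotient.eq_zero_iff_mem]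
    obtain ⟨n, hn⟩ := mem_powers_iff_mem_zpowers.mpr (hg (Units.mk0 _ hb'))
    refine ⟨n, ?_⟩
    rw [← Ideal.Quotient.eq, map_pow, ha]
    simpa using (congrArg Units.val hn).symm

theorem add_pow_card_quotient_sub_pow_mem_sq (a : B) {b : B} (hb : b ∈ P) :
    (a + b) ^ Nat.card (B ⧸ P) - a ^ Nat.card (B ⧸ P) ∈ P ^ 2 := by
  set N := Nat.card (B ⧸ P) with hN
  have hNP : (N : B) ∈ P := by
    let _ : Field (B ⧸ P) := Ideal.Quotient.field P
    have := Fintype.ofFinite (B ⧸ P)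
    rw [← Ideal.Quotient.eq_zero_iff_mem, map_natCast, hN, Nat.card_eq_fintype_card,
      FiniteField.cast_card_eq_zero]
  obtain ⟨k, hk⟩ := Polynomial.binomExpansion (Polynomial.X ^ N) a b
  simp only [Polynomial.eval_pow, Polynomial.eval_X, Polynomial.derivative_X_pow,
    Polynomial.eval_mul, Polynomial.eval_C] at hk
  have hexp : (a + b) ^ N - a ^ N = a ^ (N - 1) * (N * b) + k * b ^ 2 := by rw [hk]; ring
  rw [hexp]
  refine Ideal.add_mem _ (Ideal.mul_mem_left _ _ ?_)
    (Ideal.mul_mem_left _ _ (Ideal.pow_mem_pow hb 2))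
  rw [pow_two]
  exact Ideal.mul_mem_mul hNP hb

end Residue

section Dedekind

variable {B : Type*} [CommRing B] [IsDedekindDomain B] {P : Ideal B} [hP : P.IsMaximal]

-- `x ↦ x ^ N - x` is multiplication by `-1` on `P / P ^ 2`, so a uniformizer corrects `a`.
theorem exists_pow_card_quotient_sub_self_notMem_sq [Finite (B ⧸ P)] (hP0 : P ≠ ⊥) (a : B) :
    ∃ b, b - a ∈ P ∧ b ^ Nat.card (B ⧸ P) - b ∉ P ^ 2 := by
  obtain ⟨π, hπ, hπ2⟩ : ∃ π ∈ P, π ∉ P ^ 2 := by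
    have hlt := Ideal.pow_right_strictAnti P hP0 hP.ne_top one_lt_two
    simpa only [pow_one] using SetLike.exists_of_lt hlt
  by_cases h : a ^ Nat.card (B ⧸ P) - a ∈ P ^ 2
  · refine ⟨a + π, by simpa using hπ, fun h' => hπ2 ?_⟩
    have := Ideal.sub_mem _ (Ideal.add_mem _ h (add_pow_card_quotient_sub_pow_mem_sq a hπ)) h'
    convert this using 1
    ring
  · exact ⟨a, by simp, h⟩

theorem exists_sub_mem_pow_and_forall_mem {I : Ideal B} (hI : I ≠ ⊥) (n : ℕ) (a : B) :
    ∃ b, b - a ∈ P ^ n ∧ ∀ Q : Ideal B, Q.IsMaximal → I ≤ Q → Q ≠ P → b ∈ Q := by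
  obtain ⟨J, hIJ, hJ⟩ := (FiniteMultiplicity.of_not_isUnit (a := P)
    (by rw [Ideal.isUnit_iff]; exact hP.ne_top) hI).exists_eq_pow_mul_and_not_dvd
  have hcop : IsCoprime P J :=
    Ideal.isCoprime_iff_sup_eq.mpr (hP.out.2 _ (left_lt_sup.mpr (by rwa [← Ideal.dvd_iff_le])))
  obtain ⟨x, hx, b, hb, rfl⟩ := Submodule.mem_sup.mp
    (show a ∈ P ^ n ⊔ J from (Ideal.isCoprime_iff_sup_eq.mp hcop.pow_left) ▸ Submodule.mem_top)
  refine ⟨b, by simpa using hx, fun Q hQ hIQ hQP => ?_⟩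
  rw [hIJ] at hIQ
  rcases hQ.isPrime.mul_le.mp hIQ with h | h
  · exact absurd (hP.eq_of_le hQ.ne_top (hQ.isPrime.le_of_pow_le h)).symm hQP
  · exact h hb

theorem exists_residue_generator [Finite (B ⧸ P)] {I : Ideal B} (hP0 : P ≠ ⊥) (hI : I ≠ ⊥) :
    ∃ α ∉ P, (∀ Q : Ideal B, Q.IsMaximal → I ≤ Q → Q ≠ P → α ∈ Q) ∧
      (∀ b ∉ P, ∃ n : ℕ, b - α ^ n ∈ P) ∧ α ^ Nat.card (B ⧸ P) - α ∉ P ^ 2 := by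
  obtain ⟨g, hgP, hg⟩ := exists_forall_sub_pow_mem P
  obtain ⟨a, hag, ha⟩ := exists_pow_card_quotient_sub_self_notMem_sq hP0 g
  obtain ⟨α, hαa, hαQ⟩ := exists_sub_mem_pow_and_forall_mem (P := P) hI 2 a
  have hαg : Ideal.Quotient.mk P α = Ideal.Quotient.mk P g := by
    rw [Ideal.Quotient.eq, ← sub_add_sub_cancel α a g]
    exact Ideal.add_mem _ (Ideal.pow_le_self two_ne_zero hαa) hag
  refine ⟨α, ?_, hαQ, fun b hb => ?_, ?_⟩
  · rwa [← Ideal.Quotient.eq_zero_iff_mem, hαg, Ideal.Quotient.eq_zero_iff_mem]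
  · obtain ⟨n, hn⟩ := hg b hb
    exact ⟨n, by rwa [← Ideal.Quotient.eq, map_pow, hαg, ← map_pow, Ideal.Quotient.eq]⟩
  · rwa [← Ideal.Quotient.eq_zero_iff_mem, map_sub, map_pow, Ideal.Quotient.eq.mpr hαa, ← map_pow,
      ← map_sub, Ideal.Quotient.eq_zero_iff_mem]

end Dedekind

section Conductor

variable {A B : Type*} [CommRing A] [CommRing B] [Algebra A B] [Module.Finite A B]
  {P : Ideal B} [P.IsMaximal] {α : B}

-- Nakayama's lemma for `B / A[α]` as an `A[α]`-module.
theorem not_conductor_le_of_map_under_eq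
    (hP : (P.under (Algebra.adjoin A {α})).map (algebraMap (Algebra.adjoin A {α}) B) = P)
    (hgen : ∀ b ∉ P, ∃ n : ℕ, b - α ^ n ∈ P) : ¬ conductor A α ≤ P := by
  set C := Algebra.adjoin A {α}
  set m : Ideal C := P.under C
  have : Module.Finite C B := Module.Finite.of_restrictScalars_finite A C B
  let R : Submodule C B := LinearMap.range (Algebra.linearMap C B)
  have hR : ∀ x : B, x ∈ R ↔ x ∈ C := fun x =>
    ⟨fun ⟨c, hc⟩ => hc ▸ c.2, fun h => ⟨⟨x, h⟩, rfl⟩⟩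
  have hmap : m • (⊤ : Submodule C (B ⧸ R)) = (P.restrictScalars C).map R.mkQ := by
    rw [← Submodule.range_mkQ R, ← Submodule.map_top, ← Submodule.map_smul'',
      Ideal.smul_top_eq_map, hP]
  have htop : (⊤ : Submodule C (B ⧸ R)) ≤ m • (⊤ : Submodule C (B ⧸ R)) := by
    rintro x -
    obtain ⟨b, rfl⟩ := R.mkQ_surjective x
    rw [hmap]
    by_cases hb : b ∈ P
    · exact ⟨b, hb, rfl⟩
    · obtain ⟨n, hn⟩ := hgen b hb
      refine ⟨b - α ^ n, hn, ?_⟩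
      rw [map_sub, sub_eq_self, Submodule.mkQ_apply, Submodule.Quotient.mk_eq_zero, hR]
      exact pow_mem (Algebra.self_mem_adjoin_singleton A α) n
  obtain ⟨u, hu1, hu⟩ := Submodule.exists_sub_one_mem_and_smul_eq_zero_of_fg_of_le_smul m
    (⊤ : Submodule C (B ⧸ R)) Module.Finite.fg_top htop
  have hucond : (u : B) ∈ conductor A α := by
    rw [mem_conductor_iff]
    intro b
    have := hu (R.mkQ b) trivial
    rwa [← map_smul, Submodule.mkQ_apply, Submodule.Quotient.mk_eq_zero, hR] at this
  intro hle
  have h1 : (1 : C) ∈ m := by simpa using m.sub_mem (show u ∈ m from hle hucond) hu1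
  exact Ideal.comap_ne_top _ (Ideal.IsMaximal.ne_top ‹_›) ((Ideal.eq_top_iff_one _).mpr h1)

theorem map_under_adjoin_eq [IsDedekindDomain B] [Finite (B ⧸ P)] (hαP : α ∉ P)
    (hαQ : ∀ Q : Ideal B, Q.IsMaximal → (P.under A).map (algebraMap A B) ≤ Q → Q ≠ P → α ∈ Q)
    (hα2 : α ^ Nat.card (B ⧸ P) - α ∉ P ^ 2) :
    (P.under (Algebra.adjoin A {α})).map (algebraMap (Algebra.adjoin A {α}) B) = P := by
  set C := Algebra.adjoin A {α}
  let α' : C := ⟨α, Algebra.self_mem_adjoin_singleton A α⟩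
  have : Algebra.IsIntegral C B :=
    ⟨fun b => (Algebra.IsIntegral.isIntegral (R := A) b).tower_top⟩
  have hmax : (P.under C).IsMaximal := Ideal.isMaximal_comap_of_isIntegral_of_isMaximal P
  refine eq_of_forall_isMaximal_of_not_le_sq Ideal.map_comap_le (fun h => hα2 (h ?_))
    fun Q hQ hle => ?_
  · exact Ideal.mem_map_of_mem (algebraMap C B)
      (show α' ^ Nat.card (B ⧸ P) - α' ∈ P.under C from pow_card_quotient_sub_self_mem α)
  · by_contra hne
    have hPQ : (P.under A).map (algebraMap A B) ≤ Q := by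
      refine le_trans ?_ hle
      rw [Ideal.map_le_iff_le_comap]
      exact fun a ha => Ideal.mem_map_of_mem (algebraMap C B)
        (show algebraMap A C a ∈ P.under C from ha)
    have hunder : P.under C = Q.under C :=
      hmax.eq_of_le (Ideal.comap_ne_top _ hQ.ne_top) (Ideal.map_le_iff_le_comap.mp hle)
    have hα' : α' ∈ Q.under C := hαQ Q hQ hPQ hne
    rw [← hunder] at hα'
    exact hαP hα'

theorem exists_not_conductor_le [IsDedekindDomain B] [FaithfulSMul A B] [Finite (B ⧸ P)]
    (hP0 : P ≠ ⊥) (hA : P.under A ≠ ⊥) : ∃ α : B, ¬ conductor A α ≤ P := by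
  have hI : (P.under A).map (algebraMap A B) ≠ ⊥ := by
    rwa [Ne, Ideal.map_eq_bot_iff_of_injective (FaithfulSMul.algebraMap_injective A B)]
  obtain ⟨α, hαP, hαQ, hgen, hα2⟩ := exists_residue_generator hP0 hI
  exact ⟨α, not_conductor_le_of_map_under_eq (map_under_adjoin_eq hαP hαQ hα2) hgen⟩

end Conductor

section GaloisMinpoly

variable {E L H : Type*} [Field E] [Field L] [Algebra E L] [Group H] [MulSemiringAction H L]
  [IsGaloisGroup H E L] {x : L}

theorem smul_injective_of_adjoin_eq_top
    (hx : Algebra.adjoin E {x} = ⊤) : Function.Injective fun σ : H => σ • x := by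
  intro σ τ h
  have : (MulSemiringAction.toAlgHom E L σ) = MulSemiringAction.toAlgHom E L τ :=
    AlgHom.ext_of_adjoin_eq_top hx (by rintro _ rfl; exact h)
  have : FaithfulSMul H L := IsGaloisGroup.faithful E
  exact eq_of_smul_eq_smul (α := L) fun a => AlgHom.congr_fun ‹_› a

theorem map_minpoly_eq_prod_of_adjoin_eq_top [Fintype H] (hx : Algebra.adjoin E {x} = ⊤) :
    (minpoly E x).map (algebraMap E L) = ∏ σ : H, (Polynomial.X - Polynomial.C (σ • x)) := by
  have := IsGaloisGroup.finiteDimensional H E L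
  have hxint : IsIntegral E x := Algebra.IsIntegral.isIntegral x
  have hadj : IntermediateField.adjoin E {x} = ⊤ := by
    rw [← IntermediateField.toSubalgebra_inj,
      IntermediateField.adjoin_simple_toSubalgebra_of_isAlgebraic hxint.isAlgebraic, hx,
      IntermediateField.top_toSubalgebra]
  have hmon : (∏ σ : H, (Polynomial.X - Polynomial.C (σ • x))).Monic :=
    Polynomial.monic_prod_of_monic _ _ fun σ _ => Polynomial.monic_X_sub_C _
  refine (Polynomial.eq_of_monic_of_dvd_of_natDegree_le hmon
    ((minpoly.monic hxint).map _) ?_ ?_)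
  · refine Finset.prod_dvd_of_coprime (fun σ _ τ _ hστ => ?_) fun σ _ => ?_
    · exact Polynomial.isCoprime_X_sub_C_of_isUnit_sub
        (sub_ne_zero.mpr fun h => hστ (smul_injective_of_adjoin_eq_top hx h)).isUnit
    · rw [Polynomial.dvd_iff_isRoot, Polynomial.IsRoot, Polynomial.eval_map_algebraMap]
      have := Polynomial.aeval_algHom_apply (MulSemiringAction.toAlgHom E L σ) x (minpoly E x)
      rw [minpoly.aeval, map_zero] at this
      exact this
  · rw [Polynomial.natDegree_prod_of_monic _ _ fun σ _ => Polynomial.monic_X_sub_C _]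
    simp only [Polynomial.natDegree_X_sub_C, Finset.sum_const, smul_eq_mul, mul_one,
      Finset.card_univ, Polynomial.natDegree_map]
    rw [← IntermediateField.adjoin.finrank hxint, hadj, IntermediateField.finrank_top',
      ← IsGaloisGroup.card_eq_finrank H, Nat.card_eq_fintype_card]

theorem aeval_derivative_minpoly_of_adjoin_eq_top [Fintype H] [DecidableEq H]
    (hx : Algebra.adjoin E {x} = ⊤) :
    Polynomial.aeval x (Polynomial.derivative (minpoly E x)) =
      ∏ σ ∈ Finset.univ.erase (1 : H), (x - σ • x) := by
  rw [← Polynomial.eval_map_algebraMap, ← Polynomial.derivative_map,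
    map_minpoly_eq_prod_of_adjoin_eq_top (H := H) hx,
    ← Finset.mul_prod_erase _ _ (Finset.mem_univ 1), Polynomial.derivative_mul]
  simp [Polynomial.eval_prod]

end GaloisMinpoly

theorem adjoin_eq_top_of_conductor_ne_bot {A B E L : Type*} [CommRing A] [CommRing B] [Field E]
    [Field L] [Algebra A B] [Algebra A E] [Algebra A L] [Algebra B L] [Algebra E L]
    [IsScalarTower A B L] [IsScalarTower A E L] [IsFractionRing B L] [Algebra.IsAlgebraic E L]
    {α : B} (h : conductor A α ≠ ⊥) : Algebra.adjoin E {algebraMap B L α} = ⊤ := by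
  obtain ⟨u, hu, hu0⟩ := Submodule.exists_mem_ne_zero_of_ne_bot h
  have hC : ∀ c ∈ Algebra.adjoin A {α},
      algebraMap B L c ∈ Algebra.adjoin E {algebraMap B L α} := by
    intro c hc
    have : IsScalarTower.toAlgHom A B L c ∈ Algebra.adjoin A {algebraMap B L α} := by
      have := AlgHom.map_adjoin_singleton (IsScalarTower.toAlgHom A B L) α
      exact (SetLike.ext_iff.mp this _).mp (Subalgebra.mem_map.mpr ⟨c, hc, rfl⟩)
    refine Algebra.adjoin_induction (fun x hx => Algebra.subset_adjoin hx) (fun r => ?_)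
      (fun _ _ _ _ h1 h2 => add_mem h1 h2) (fun _ _ _ _ h1 h2 => mul_mem h1 h2) this
    rw [IsScalarTower.algebraMap_apply A E L]
    exact Subalgebra.algebraMap_mem _ _
  have halg : IsAlgebraic E (algebraMap B L α) := Algebra.IsAlgebraic.isAlgebraic _
  rw [← IntermediateField.adjoin_simple_toSubalgebra_of_isAlgebraic halg] at hC ⊢
  rw [← IntermediateField.top_toSubalgebra, IntermediateField.toSubalgebra_inj, eq_top_iff]
  have hB : ∀ b : B, algebraMap B L b ∈ IntermediateField.adjoin E {algebraMap B L α} := by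
    intro b
    have h1 := hC _ (mem_conductor_iff.mp hu b)
    have h2 := hC _ (conductor_subset_adjoin hu)
    have h3 : algebraMap B L u ≠ 0 := (map_ne_zero_iff _ (IsFractionRing.injective B L)).mpr hu0
    have := div_mem (S := IntermediateField E L) h1 h2
    rwa [map_mul, mul_div_cancel_left₀ _ h3] at this
  rintro x -
  obtain ⟨a, b, -, rfl⟩ := IsFractionRing.div_surjective (A := B) x
  exact div_mem (hB a) (hB b)

end Monogenic

section Different

/-- The ideal generated by the elements `σ • x - x`; its valuation at a prime is the ramification
number `i(σ)` of Hilbert's formula for the different. -/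
def smulSubIdeal {H : Type*} (B : Type*) [CommRing B] [SMul H B] (σ : H) : Ideal B :=
  Ideal.span (Set.range fun x : B => σ • x - x)

theorem smul_sub_self_mem_smulSubIdeal {H B : Type*} [CommRing B] [SMul H B] (σ : H) (x : B) :
    σ • x - x ∈ smulSubIdeal B σ :=
  Ideal.subset_span ⟨x, rfl⟩

theorem span_singleton_mul_smulSubIdeal_le {A B H : Type*} [CommRing A] [CommRing B] [Algebra A B]
    [Group H] [MulSemiringAction H B] [SMulCommClass H A B] {α u : B} (hu : u ∈ conductor A α)
    (σ : H) : Ideal.span {u} * smulSubIdeal B σ ≤ Ideal.span {α - σ • α} := by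
  have hC : ∀ c ∈ Algebra.adjoin A {α}, σ • c - c ∈ Ideal.span {α - σ • α} := by
    intro c hc
    rw [Algebra.adjoin_singleton_eq_range_aeval] at hc
    obtain ⟨g, rfl⟩ := hc
    have h1 : σ • Polynomial.aeval α g = Polynomial.aeval (σ • α) g :=
      (Polynomial.aeval_algHom_apply (MulSemiringAction.toAlgHom A B σ) α g).symm
    change σ • Polynomial.aeval α g - Polynomial.aeval α g ∈ _
    rw [h1, Ideal.mem_span_singleton, ← neg_sub (σ • α), neg_dvd, Polynomial.aeval_def,
      Polynomial.aeval_def, Polynomial.eval₂_eq_eval_map, Polynomial.eval₂_eq_eval_map]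
    exact Polynomial.sub_dvd_eval_sub _ _ _
  rw [smulSubIdeal, Ideal.span_mul_span', Ideal.span_le]
  rintro _ ⟨v, hv, _, ⟨x, rfl⟩, rfl⟩
  rw [Set.mem_singleton_iff.mp hv]
  have h1 := hC _ (mem_conductor_iff.mp hu x)
  have h2 := hC _ (conductor_subset_adjoin hu)
  have h3 := Ideal.sub_mem _ h1 (Ideal.mul_mem_right (σ • x) _ h2)
  have h4 : σ • (u * x) - u * x - (σ • u - u) * σ • x = u * (σ • x - x) := by
    rw [smul_mul']
    ring
  rw [h4] at h3
  exact h3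

section Hilbert

variable (E L H : Type*) [Field E] [NumberField E] [Field L] [NumberField L] [Algebra E L]

theorem exists_mem_conductor_notMem (P : Ideal (𝓞 L)) [P.IsMaximal] :
    ∃ α u : 𝓞 L, u ∈ conductor (𝓞 E) α ∧ u ∉ P := by
  have hP0 : P ≠ ⊥ := Ring.ne_bot_of_isMaximal_of_not_isField ‹_› (RingOfIntegers.not_isField L)
  have : Finite (𝓞 L ⧸ P) := Ideal.finiteQuotientOfFreeOfNeBot P hP0
  obtain ⟨α, hα⟩ := exists_not_conductor_le (A := 𝓞 E) hP0 (Ideal.under_ne_bot (𝓞 E) hP0)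
  exact ⟨α, SetLike.not_le_iff_exists.mp hα⟩

variable [Group H] [Fintype H] [DecidableEq H] [MulSemiringAction H L] [IsGaloisGroup H E L]

theorem conductor_mul_differentIdeal_eq_prod {α : 𝓞 L} (hα : conductor (𝓞 E) α ≠ ⊥) :
    conductor (𝓞 E) α * differentIdeal (𝓞 E) (𝓞 L) =
      ∏ σ ∈ Finset.univ.erase (1 : H), Ideal.span {α - σ • α} := by
  have htop : Algebra.adjoin E {algebraMap (𝓞 L) L α} = ⊤ :=
    adjoin_eq_top_of_conductor_ne_bot hα
  have := IsGaloisGroup.isGalois H E L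
  have hder := aeval_derivative_minpoly_of_adjoin_eq_top (H := H) htop
  rw [minpoly.isIntegrallyClosed_eq_field_fractions E L
    (Algebra.IsIntegral.isIntegral (R := 𝓞 E) α), Polynomial.derivative_map,
    Polynomial.aeval_map_algebraMap, Polynomial.aeval_algebraMap_apply] at hder
  rw [conductor_mul_differentIdeal (𝓞 E) E L α htop, Ideal.prod_span_singleton]
  congr 2
  apply RingOfIntegers.coe_injective
  rw [hder, map_prod]
  rfl

-- Both inclusions are checked locally, at `P` with some `α` whose conductor is prime to `P`.
theorem differentIdeal_eq_prod_smulSubIdeal :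
    differentIdeal (𝓞 E) (𝓞 L) = ∏ σ ∈ Finset.univ.erase (1 : H), smulSubIdeal (𝓞 L) σ := by
  refine le_antisymm (ideal_le_of_forall_isMaximal fun P hP => ?_)
    (ideal_le_of_forall_isMaximal fun P hP => ?_) <;>
  obtain ⟨α, u, hu, huP⟩ := exists_mem_conductor_notMem E L P <;>
  have hcond : conductor (𝓞 E) α ≠ ⊥ := fun h => huP (by
    rw [h, Ideal.mem_bot] at hu; exact hu ▸ P.zero_mem) <;>
  have h := conductor_mul_differentIdeal_eq_prod E L H hcond
  · have hle : ∏ σ ∈ Finset.univ.erase (1 : H), Ideal.span {α - σ • α} ≤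
        ∏ σ ∈ Finset.univ.erase (1 : H), smulSubIdeal (𝓞 L) σ :=
      Finset.prod_le_prod' fun σ _ => by
        rw [Ideal.span_singleton_le_iff_mem, ← neg_sub]
        exact neg_mem (smul_sub_self_mem_smulSubIdeal σ α)
    exact ⟨u, huP, fun x hx => hle (h ▸ Ideal.mul_mem_mul hu hx)⟩
  · have hle : ∏ σ ∈ Finset.univ.erase (1 : H), (Ideal.span {u} * smulSubIdeal (𝓞 L) σ) ≤
        ∏ σ ∈ Finset.univ.erase (1 : H), Ideal.span {α - σ • α} :=
      Finset.prod_le_prod' fun σ _ => span_singleton_mul_smulSubIdeal_le hu σ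
    rw [← h, Finset.prod_mul_distrib, Finset.prod_const, Ideal.span_singleton_pow] at hle
    exact ⟨u ^ (Finset.univ.erase (1 : H)).card, fun h' => huP (hP.isPrime.mem_of_pow_mem _ h'),
      fun x hx => Ideal.mul_le_right
        (hle (Ideal.mul_mem_mul (Ideal.mem_span_singleton_self _) hx))⟩

end Hilbert

theorem absNorm_smulSubIdeal_conj (L H : Type*) [Field L] [NumberField L] [Group H]
    [MulSemiringAction H L] (σ τ : H) :
    Ideal.absNorm (smulSubIdeal (𝓞 L) (τ * σ * τ⁻¹)) = Ideal.absNorm (smulSubIdeal (𝓞 L) σ) := by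
  let f : 𝓞 L ≃+* 𝓞 L := MulSemiringAction.toRingEquiv H (𝓞 L) τ
  have h : smulSubIdeal (𝓞 L) (τ * σ * τ⁻¹) = (smulSubIdeal (𝓞 L) σ).map f := by
    rw [smulSubIdeal, smulSubIdeal, Ideal.map_span]
    congr 1
    ext y
    constructor
    · rintro ⟨x, rfl⟩
      refine ⟨_, ⟨τ⁻¹ • x, rfl⟩, ?_⟩
      change τ • (σ • τ⁻¹ • x - τ⁻¹ • x) = _
      simp [smul_sub, mul_smul]
    · rintro ⟨_, ⟨x, rfl⟩, rfl⟩
      refine ⟨τ • x, ?_⟩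
      change _ = τ • (σ • x - x)
      simp [smul_sub, mul_smul]
  rw [h, Ideal.absNorm_apply, Ideal.absNorm_apply, Submodule.cardQuot_apply,
    Submodule.cardQuot_apply]
  exact Nat.card_congr (Ideal.quotientEquiv _ _ f rfl).toEquiv.symm

theorem smulSubIdeal_ne_bot (E L H : Type*) [Field E] [NumberField E] [Field L] [NumberField L]
    [Algebra E L] [Group H] [MulSemiringAction H L] [IsGaloisGroup H E L] {σ : H} (hσ : σ ≠ 1) :
    smulSubIdeal (𝓞 L) σ ≠ ⊥ := by
  intro h
  have : FaithfulSMul H (𝓞 L) := IsGaloisGroup.faithful (𝓞 E)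
  refine hσ (eq_of_smul_eq_smul (α := 𝓞 L) fun x => ?_)
  have := smul_sub_self_mem_smulSubIdeal σ x
  rw [h, Ideal.mem_bot, sub_eq_zero] at this
  rw [this, one_smul]

theorem natAbs_discr_pos (E : Type*) [Field E] [NumberField E] :
    (0 : ℝ) < (discr E).natAbs :=
  Nat.cast_pos.mpr (Int.natAbs_pos.mpr (discr_ne_zero E))

theorem card_mul_log_discr (E L H : Type*) [Field E] [NumberField E] [Field L]
    [NumberField L] [Algebra E L] [Group H] [Finite H] [MulSemiringAction H L]
    [IsGaloisGroup H E L] [DecidableEq H] :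
    Nat.card H • Real.log (discr E).natAbs = ∑ᶠ σ : H,
      if σ = 1 then Real.log (discr L).natAbs else
        - Real.log (Ideal.absNorm (smulSubIdeal (𝓞 L) σ)) := by
  have := Fintype.ofFinite H
  have hne : ∀ σ ∈ Finset.univ.erase (1 : H),
      ((Ideal.absNorm (smulSubIdeal (𝓞 L) σ) : ℕ) : ℝ) ≠ 0 := fun σ hσ => by
    rw [Nat.cast_ne_zero, Ne, Ideal.absNorm_eq_zero_iff]
    exact smulSubIdeal_ne_bot E L H (Finset.ne_of_mem_erase hσ)
  have h := natAbs_discr_eq_absNorm_differentIdeal_mul_natAbs_discr_pow E (𝓞 E) L (𝓞 L)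
  rw [differentIdeal_eq_prod_smulSubIdeal E L H, map_prod, ← IsGaloisGroup.card_eq_finrank H] at h
  rw [finsum_eq_sum_of_fintype, ← Finset.add_sum_erase _ _ (Finset.mem_univ 1), if_pos rfl,
    Finset.sum_congr rfl fun σ hσ => if_neg (Finset.ne_of_mem_erase hσ), h, Nat.cast_mul,
    Nat.cast_prod, Nat.cast_pow, Real.log_mul (Finset.prod_ne_zero_iff.mpr hne) (pow_pos
      (natAbs_discr_pos E) _).ne',
    Real.log_prod hne, Real.log_pow, Finset.sum_neg_distrib, nsmul_eq_mul]
  ring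

namespace IsDihedralTower

variable {q : ℕ} [NeZero q] {k L : Type*} [Field k] [Field L] [NumberField k] [NumberField L]
  [Algebra k L] [IsGalois k L] {e : (L ≃ₐ[k] L) ≃* DihedralGroup q} {F K : IntermediateField k L}

theorem discr_relation (h : IsDihedralTower q e F K) :
    (discr L).natAbs * (discr k).natAbs ^ 2 = (discr F).natAbs * (discr K).natAbs ^ 2 := by
  have := isGaloisGroup_of_eq_fixedField h.eqF
  have := isGaloisGroup_of_eq_fixedField h.eqK
  have : Finite (L ≃ₐ[k] L) := Finite.of_equiv _ e.symm.toEquiv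
  classical
  have hrel := average_relation_of_mulEquiv_dihedralGroup h.odd e
    (c := fun σ : L ≃ₐ[k] L => if σ = 1 then Real.log (discr L).natAbs else
      - Real.log (Ideal.absNorm (smulSubIdeal (𝓞 L) σ))) (fun σ τ => ?_)
    (card_mul_log_discr k L _) (g := Real.log (discr F).natAbs) (s := Real.log (discr K).natAbs)
    ?_ ?_
  · have hk := natAbs_discr_pos k
    have hL := natAbs_discr_pos L
    have hF := natAbs_discr_pos F
    have hK := natAbs_discr_pos K
    rw [← Nat.cast_inj (R := ℝ), Nat.cast_mul, Nat.cast_mul, Nat.cast_pow, Nat.cast_pow]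
    apply Real.log_injOn_pos (mul_pos hL (pow_pos hk 2)) (mul_pos hF (pow_pos hK 2))
    rw [Real.log_mul hL.ne' (pow_pos hk 2).ne', Real.log_mul hF.ne' (pow_pos hK 2).ne',
      Real.log_pow, Real.log_pow]
    simpa using hrel
  · simp only [conj_eq_one_iff, absNorm_smulSubIdeal_conj]
  · exact (card_mul_log_discr F L _).trans (finsum_congr fun σ => by
      simp only [OneMemClass.coe_eq_one]
      rfl)
  · exact (card_mul_log_discr K L _).trans (finsum_congr fun σ => by
      simp only [OneMemClass.coe_eq_one]
      rfl)

end IsDihedralTower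

end Different

section Places

variable (E L H : Type*) [Field E] [Field L] [NumberField E] [NumberField L] [Algebra E L]
  [Group H] [Finite H] [MulSemiringAction H L] [IsGaloisGroup H E L] [MulAction H (InfinitePlace L)]

theorem comap_algebraMap_eq_iff_exists_smul
    (hsm : ∀ (h : H) (w : InfinitePlace L) (x : L), (h • w) x = w (h⁻¹ • x))
    (w w' : InfinitePlace L) :
    w.comap (algebraMap E L) = w'.comap (algebraMap E L) ↔ ∃ h : H, h • w' = w := by
  have := IsGaloisGroup.isGalois H E L
  constructor
  · intro h
    obtain ⟨σ, hσ⟩ := InfinitePlace.exists_smul_eq_of_comap_eq h.symm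
    refine ⟨(IsGaloisGroup.mulEquivAlgEquiv H E L).symm σ, ?_⟩
    rw [← hσ]
    ext x
    rw [hsm, InfinitePlace.smul_apply, ← map_inv, ← AlgEquiv.aut_inv]
    congr 1
    exact DFunLike.congr_fun ((IsGaloisGroup.mulEquivAlgEquiv H E L).apply_symm_apply σ⁻¹) x
  · rintro ⟨h, rfl⟩
    ext x
    rw [InfinitePlace.comap_apply, InfinitePlace.comap_apply, hsm, smul_algebraMap]

theorem card_mul_card_infinitePlace
    (hsm : ∀ (h : H) (w : InfinitePlace L) (x : L), (h • w) x = w (h⁻¹ • x)) :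
    Nat.card H * Nat.card (InfinitePlace E) =
      ∑ᶠ h : H, Nat.card {w : InfinitePlace L // h • w = w} := by
  have := IsGaloisGroup.isGalois H E L
  have key := card_mul_card_fixed_of_orbits (H := H)
    (π := fun w : InfinitePlace L => w.comap (algebraMap E L)) InfinitePlace.comap_surjective
    (comap_algebraMap_eq_iff_exists_smul E L H hsm) (φ := id) (ψ := id) (fun _ => rfl)
  rw [← Nat.card_congr (Equiv.subtypeUnivEquiv (p := fun w : InfinitePlace E => id w = w)
    fun _ => rfl)]
  simpa [eq_comm] using key

end Places

section Dihedral

theorem card_comap_mulEquiv {G D : Type*} [Group G] [Group D] (e : G ≃* D)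
    (S : Subgroup D) : Nat.card (S.comap e.toMonoidHom) = Nat.card S :=
  Nat.card_congr (e.toEquiv.subtypeEquiv fun _ => Iff.rfl)

variable {q : ℕ} {k L : Type*} [Field k] [Field L] [NumberField k] [NumberField L]
  [Algebra k L] [IsGalois k L] {e : (L ≃ₐ[k] L) ≃* DihedralGroup q} {F K : IntermediateField k L}

theorem finrank_rat_eq_of_mulEquiv_dihedralGroup (e : (L ≃ₐ[k] L) ≃* DihedralGroup q) :
    Module.finrank ℚ L = 2 * q * Module.finrank ℚ k := by
  rw [mul_comm, ← Module.finrank_mul_finrank ℚ k L, ← IsGalois.card_aut_eq_finrank k L,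
    Nat.card_congr e.toEquiv, DihedralGroup.nat_card]

namespace IsDihedralTower

theorem finrank_eq_mul_left (h : IsDihedralTower q e F K) :
    Module.finrank ℚ L = q * Module.finrank ℚ F := by
  have := isGaloisGroup_of_eq_fixedField h.eqF
  rw [mul_comm, ← Module.finrank_mul_finrank ℚ F L, ← IsGaloisGroup.card_eq_finrank
    ((Subgroup.closure {(r 1 : DihedralGroup q)}).comap e.toMonoidHom) F L,
    card_comap_mulEquiv, ← Subgroup.zpowers_eq_closure, Nat.card_zpowers, orderOf_r_one]

theorem finrank_eq_mul_right (h : IsDihedralTower q e F K) :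
    Module.finrank ℚ L = 2 * Module.finrank ℚ K := by
  have := isGaloisGroup_of_eq_fixedField h.eqK
  rw [mul_comm, ← Module.finrank_mul_finrank ℚ K L, ← IsGaloisGroup.card_eq_finrank
    ((Subgroup.closure {(sr 0 : DihedralGroup q)}).comap e.toMonoidHom) K L,
    card_comap_mulEquiv, ← Subgroup.zpowers_eq_closure, Nat.card_zpowers, orderOf_sr]

theorem finrank_left [NeZero q] (h : IsDihedralTower q e F K) :
    Module.finrank ℚ F = 2 * Module.finrank ℚ k := by
  apply Nat.eq_of_mul_eq_mul_left (NeZero.pos q)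
  rw [← h.finrank_eq_mul_left, finrank_rat_eq_of_mulEquiv_dihedralGroup e]
  ring

theorem finrank_right (h : IsDihedralTower q e F K) :
    Module.finrank ℚ K = q * Module.finrank ℚ k := by
  apply Nat.eq_of_mul_eq_mul_left two_pos
  rw [← h.finrank_eq_mul_right, finrank_rat_eq_of_mulEquiv_dihedralGroup e]
  ring

variable [NeZero q]

theorem card_infinitePlace_relation (h : IsDihedralTower q e F K) :
    Nat.card (InfinitePlace L) + 2 * Nat.card (InfinitePlace k) =
      Nat.card (InfinitePlace F) + 2 * Nat.card (InfinitePlace K) := by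
  have := isGaloisGroup_of_eq_fixedField h.eqF
  have := isGaloisGroup_of_eq_fixedField h.eqK
  have : Finite (L ≃ₐ[k] L) := Finite.of_equiv _ e.symm.toEquiv
  have hone : Nat.card (InfinitePlace L) =
      Nat.card {w : InfinitePlace L // (1 : L ≃ₐ[k] L) • w = w} :=
    (Nat.card_congr (Equiv.subtypeUnivEquiv fun w => one_smul _ w)).symm
  rw [hone]
  refine average_relation_of_mulEquiv_dihedralGroup h.odd e
    (c := fun σ => Nat.card {w : InfinitePlace L // σ • w = w}) (fun σ τ => ?_)
    (card_mul_card_infinitePlace k L _ fun _ _ _ => rfl)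
    (card_mul_card_infinitePlace F L _ fun _ _ _ => rfl)
    (card_mul_card_infinitePlace K L _ fun _ _ _ => rfl)
  refine Nat.card_congr ((MulAction.toPerm τ).symm.subtypeEquiv fun w => ?_)
  change _ ↔ σ • τ⁻¹ • w = τ⁻¹ • w
  rw [eq_inv_smul_iff, mul_smul, mul_smul]

theorem nrRealPlaces_nrComplexPlaces_relation (h : IsDihedralTower q e F K) :
    InfinitePlace.nrRealPlaces L + 2 * InfinitePlace.nrRealPlaces k =
      InfinitePlace.nrRealPlaces F + 2 * InfinitePlace.nrRealPlaces K ∧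
    InfinitePlace.nrComplexPlaces L + 2 * InfinitePlace.nrComplexPlaces k =
      InfinitePlace.nrComplexPlaces F + 2 * InfinitePlace.nrComplexPlaces K := by
  have hplaces := h.card_infinitePlace_relation
  simp only [Nat.card_eq_fintype_card,
    InfinitePlace.card_eq_nrRealPlaces_add_nrComplexPlaces] at hplaces
  have hdegree : Module.finrank ℚ L + 2 * Module.finrank ℚ k =
      Module.finrank ℚ F + 2 * Module.finrank ℚ K := by
    rw [h.finrank_eq_mul_left, h.finrank_left, h.finrank_right]
    ring
  simp only [← InfinitePlace.card_add_two_mul_card_eq_rank] at hdegree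
  omega

end IsDihedralTower

end Dihedral

section IntegralSpan

variable {ι N : Type*} [Fintype ι] [AddCommGroup N]

/-- The integral linear combinations of a finite family: `Fintype.linearCombination ℤ c` as a
homomorphism of additive groups, so that its range has an index. -/
def zcomb (c : ι → N) : (ι → ℤ) →+ N :=
  (Fintype.linearCombination ℤ c).toAddMonoidHom

theorem zcomb_apply (c : ι → N) (f : ι → ℤ) : zcomb c f = ∑ i, f i • c i := rfl

theorem zcomb_single [DecidableEq ι] (c : ι → N) (i : ι) : zcomb c (Pi.single i 1) = c i :=
  (Fintype.linearCombination_apply_single ℤ c i 1).trans (one_smul ℤ _)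

theorem range_zcomb_le {c d : ι → N} (h : ∀ i, d i ∈ (zcomb c).range) :
    (zcomb d).range ≤ (zcomb c).range := by
  rintro _ ⟨f, rfl⟩
  exact AddSubgroup.sum_mem _ fun i _ => AddSubgroup.zsmul_mem _ (h i) _

theorem zcomb_injective_of_det_ne_zero [DecidableEq ι] {c : ι → N} {ℓ : ι → N →+ ℝ}
    (h : (Matrix.of fun v i => ℓ v (c i)).det ≠ 0) : Function.Injective (zcomb c) := by
  rw [injective_iff_map_eq_zero]
  intro f hf
  have hmul : (Matrix.of fun v i => ℓ v (c i)).mulVec (fun i => (f i : ℝ)) = 0 := by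
    ext v
    have := congrArg (ℓ v) hf
    rw [zcomb_apply, map_sum, map_zero] at this
    simpa [Matrix.mulVec, dotProduct, mul_comm] using this
  ext i
  simpa using congrFun (Matrix.eq_zero_of_mulVec_eq_zero h hmul) i

theorem index_range_eq_natAbs_det_of_injective {M : Type*} [AddCommGroup M] [Module.Free ℤ M]
    [Module.Finite ℤ M] {f : M →ₗ[ℤ] M} (hf : Function.Injective f) :
    (f : M →+ M).range.index = (LinearMap.det f).natAbs := by
  have := Submodule.natAbs_det_equiv (LinearMap.range f) (LinearEquiv.ofInjective f hf)
  refine Eq.trans ?_ (this.symm.trans ?_)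
  · rfl
  · congr 2

variable [DecidableEq ι]

theorem relIndex_range_zcomb_eq_natAbs_det {c d : ι → N} (hc : Function.Injective (zcomb c))
    {P : Matrix ι ι ℤ} (hP : P.det ≠ 0) (hd : ∀ i, d i = zcomb c (P i)) :
    (zcomb d).range.relIndex (zcomb c).range = P.det.natAbs := by
  have hcomp : zcomb d = (zcomb c).comp (Matrix.toLin' P.transpose : (ι → ℤ) →+ (ι → ℤ)) := by
    refine DFunLike.ext _ _ fun f => ?_
    change _ = zcomb c (Matrix.toLin' P.transpose f)
    simp only [zcomb_apply, hd, Finset.smul_sum, Matrix.toLin'_apply, Matrix.mulVec, dotProduct,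
      Matrix.transpose_apply, Finset.sum_smul]
    rw [Finset.sum_comm]
    simp only [smul_smul, mul_comm]
  have hinj : Function.Injective (Matrix.toLin' P.transpose) := by
    rw [← LinearMap.ker_eq_bot, LinearMap.ker_eq_bot']
    intro f hf
    exact Matrix.eq_zero_of_mulVec_eq_zero (by rwa [Matrix.det_transpose]) (by simpa using hf)
  rw [hcomp, AddMonoidHom.range_comp, AddMonoidHom.range_eq_map (zcomb c),
    AddSubgroup.relIndex_map_map_of_injective _ _ hc, AddSubgroup.relIndex_top_right,
    index_range_eq_natAbs_det_of_injective hinj, LinearMap.det_toLin', Matrix.det_transpose]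

theorem det_of_zcomb (ℓ : ι → N →+ ℝ) {c d : ι → N} {P : Matrix ι ι ℤ}
    (hd : ∀ i, d i = zcomb c (P i)) : (Matrix.of fun v i => ℓ v (d i)).det =
      (Matrix.of fun v i => ℓ v (c i)).det * P.det := by
  have hmul : (Matrix.of fun v i => ℓ v (d i)) =
      (Matrix.of fun v i => ℓ v (c i)) * (P.map (Int.castRingHom ℝ)).transpose := by
    ext v i
    rw [Matrix.of_apply, hd, zcomb_apply, map_sum]
    simp [Matrix.mul_apply, mul_comm]
  rw [hmul, Matrix.det_mul, Matrix.det_transpose]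
  congr 1
  exact (RingHom.map_det (Int.castRingHom ℝ) P).symm

theorem abs_det_mul_index_of_mem_range {c d : ι → N} {ℓ : ι → N →+ ℝ}
    (hdet : (Matrix.of fun v i => ℓ v (d i)).det ≠ 0) (hd : ∀ i, d i ∈ (zcomb c).range) :
    |(Matrix.of fun v i => ℓ v (d i)).det| * (zcomb c).range.index =
      |(Matrix.of fun v i => ℓ v (c i)).det| * (zcomb d).range.index := by
  choose P hP using hd
  have hmul := det_of_zcomb (P := Matrix.of P) ℓ fun i => (hP i).symm
  rw [hmul] at hdet
  have hrel := relIndex_range_zcomb_eq_natAbs_det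
    (zcomb_injective_of_det_ne_zero (left_ne_zero_of_mul hdet))
    (Int.cast_ne_zero.mp (right_ne_zero_of_mul hdet)) fun i => (hP i).symm
  rw [← AddSubgroup.relIndex_mul_index (range_zcomb_le fun i => ⟨_, hP i⟩), hrel, hmul, abs_mul,
    Nat.cast_mul, Nat.cast_natAbs, Int.cast_abs, mul_assoc]

-- Both families are compared with a multiple of `c` lying in the span of `c'`.
theorem abs_det_mul_index_comm {c c' : ι → N} {ℓ : ι → N →+ ℝ}
    (hc : (Matrix.of fun v i => ℓ v (c i)).det ≠ 0) (hc' : (zcomb c').range.index ≠ 0) :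
    |(Matrix.of fun v i => ℓ v (c i)).det| * (zcomb c').range.index =
      |(Matrix.of fun v i => ℓ v (c' i)).det| * (zcomb c).range.index := by
  set n := (zcomb c').range.index
  let d : ι → N := fun i => n • c i
  have hdet : (Matrix.of fun v i => ℓ v (d i)).det ≠ 0 := by
    have hsmul : (Matrix.of fun v i => ℓ v (d i)) =
        (n : ℝ) • Matrix.of fun v i => ℓ v (c i) := by
      ext v i
      simp [d]
    rw [hsmul, Matrix.det_smul]
    exact mul_ne_zero (pow_ne_zero _ (Nat.cast_ne_zero.mpr hc')) hc
  have hdc := abs_det_mul_index_of_mem_range hdet fun i =>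
    (zcomb c).range.nsmul_mem ⟨_, zcomb_single c i⟩ n
  have hdc' := abs_det_mul_index_of_mem_range hdet fun i =>
    (zcomb c').range.nsmul_index_mem (c i)
  apply mul_left_cancel₀ (abs_ne_zero.mpr hdet)
  linear_combination |(Matrix.of fun v i => ℓ v (c i)).det| * hdc' -
    |(Matrix.of fun v i => ℓ v (c' i)).det| * hdc

end IntegralSpan

/-- The map `(n, u) ↦ n + log |u|_v`. Adjoining the factor `ℤ`, whose image spans the line missed
by the product formula, makes the logarithmic embedding into `ℝ ^ (places)` nondegenerate. -/
noncomputable def placeLog {E : Type*} [Field E] (v : InfinitePlace E) :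
    ℤ × Additive (𝓞 E)ˣ →+ ℝ where
  toFun a := a.1 + Real.log (v ((a.2.toMul : (𝓞 E)ˣ) : E))
  map_zero' := by simp
  map_add' a b := by
    have h : ∀ u : (𝓞 E)ˣ, v (u : E) ≠ 0 := fun u => by simp
    rw [Prod.fst_add, Prod.snd_add, toMul_add, Units.val_mul, map_mul, map_mul,
      Real.log_mul (h _) (h _)]
    push_cast
    ring

theorem placeLog_apply {E : Type*} [Field E] (v : InfinitePlace E)
    (a : ℤ × Additive (𝓞 E)ˣ) :
    placeLog v a = a.1 + Real.log (v ((a.2.toMul : (𝓞 E)ˣ) : E)) := rfl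

section UnitFamilies

open NumberField.Units

variable (E : Type*) [Field E] [NumberField E]

theorem prod_mult_infinitePlace :
    ∏ v : InfinitePlace E, (v.mult : ℝ) = 2 ^ InfinitePlace.nrComplexPlaces E := by
  classical
  have h : ∀ v : InfinitePlace E, (v.mult : ℝ) = if v.IsComplex then 2 else 1 := fun v => by
    rw [InfinitePlace.mult]
    by_cases h : v.IsReal
    · rw [if_pos h, if_neg (InfinitePlace.not_isComplex_iff_isReal.mpr h), Nat.cast_one]
    · rw [if_neg h, if_pos (InfinitePlace.not_isReal_iff_isComplex.mp h), Nat.cast_ofNat]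
  simp only [h, Finset.prod_ite, Finset.prod_const, one_pow, mul_one]
  rw [InfinitePlace.nrComplexPlaces, Fintype.card_subtype]

open scoped Classical in
/-- The fundamental system of units together with the generator `(1, 0)` of `ℤ`, as a family in
`ℤ × 𝓞ˣ` indexed by the infinite places through `e`, with `(1, 0)` at the omitted place `w`. -/
noncomputable def fundFamily (w : InfinitePlace E) (e : {v // v ≠ w} ≃ Fin (rank E))
    (i : InfinitePlace E) : ℤ × Additive (𝓞 E)ˣ :=
  if h : i = w then (1, 0) else (0, Additive.ofMul (fundSystem E (e ⟨i, h⟩)))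

theorem abs_det_fundFamily [DecidableEq (InfinitePlace E)] (w : InfinitePlace E)
    (e : {v // v ≠ w} ≃ Fin (rank E)) :
    |(Matrix.of fun v z => placeLog v (fundFamily E w e z)).det| *
      2 ^ InfinitePlace.nrComplexPlaces E = Module.finrank ℚ E * regulator E := by
  rw [finrank_mul_regulator_eq_det E w e, ← prod_mult_infinitePlace,
    ← abs_of_nonneg (a := ∏ v : InfinitePlace E, (v.mult : ℝ))
    (by positivity), ← abs_mul, mul_comm, ← Matrix.det_mul_column, ← Matrix.det_transpose]
  congr 2
  ext i v
  simp only [Matrix.transpose_apply, Matrix.of_apply, fundFamily]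
  split_ifs <;> simp [placeLog_apply]

theorem zcomb_fundFamily (w : InfinitePlace E) (e : {v // v ≠ w} ≃ Fin (rank E))
    (f : InfinitePlace E → ℤ) :
    zcomb (fundFamily E w e) f =
      (f w, Additive.ofMul (∏ i, fundSystem E i ^ f (e.symm i))) := by
  classical
  rw [zcomb_apply, ← Finset.add_sum_erase _ _ (Finset.mem_univ w)]
  have h : ∑ i ∈ Finset.univ.erase w, f i • fundFamily E w e i =
      ∑ i : Fin (rank E), f (e.symm i) • ((0 : ℤ), Additive.ofMul (fundSystem E i)) := by
    rw [← Equiv.sum_comp e]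
    simp only [Equiv.symm_apply_apply]
    rw [Finset.sum_subtype (Finset.univ.erase w) (p := fun v => v ≠ w) (by simp)]
    refine Finset.sum_congr rfl fun i _ => ?_
    rw [fundFamily, dif_neg i.2]
  rw [h, fundFamily, dif_pos rfl]
  ext
  · simp [Prod.fst_sum]
  · simp [Prod.snd_sum, ofMul_prod, ofMul_zpow]

theorem injective_mk_torsion_fundFamily (w : InfinitePlace E) (e : {v // v ≠ w} ≃ Fin (rank E)) :
    Function.Injective fun ζ : torsion E =>
      (QuotientAddGroup.mk (0, Additive.ofMul ζ.1) :
        (ℤ × Additive (𝓞 E)ˣ) ⧸ (zcomb (fundFamily E w e)).range) := by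
  intro ζ ζ' h
  obtain ⟨f, hf⟩ := QuotientAddGroup.eq.mp h
  rw [zcomb_fundFamily, Prod.ext_iff] at hf
  have hprod : ∏ i, fundSystem E i ^ f (e.symm i) = ζ.1⁻¹ * ζ'.1 := hf.2
  have := (exist_unique_eq_mul_prod E ζ'.1).unique (y₁ := (ζ', 0))
    (y₂ := (ζ, fun i => f (e.symm i))) (by simp) (by simp [hprod])
  exact (congrArg Prod.fst this).symm

theorem surjective_mk_torsion_fundFamily (w : InfinitePlace E) (e : {v // v ≠ w} ≃ Fin (rank E)) :
    Function.Surjective fun ζ : torsion E =>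
      (QuotientAddGroup.mk (0, Additive.ofMul ζ.1) :
        (ℤ × Additive (𝓞 E)ˣ) ⧸ (zcomb (fundFamily E w e)).range) := by
  classical
  intro x
  obtain ⟨⟨n, u⟩, rfl⟩ := QuotientAddGroup.mk_surjective x
  obtain ⟨⟨ζ, f⟩, hu, -⟩ := exist_unique_eq_mul_prod E u.toMul
  refine ⟨ζ, QuotientAddGroup.eq.mpr
    ⟨fun i => if h : i = w then n else f (e ⟨i, h⟩), ?_⟩⟩
  rw [zcomb_fundFamily]
  ext1
  · simp
  · have hu' : u = Additive.ofMul (ζ.1 * ∏ i, fundSystem E i ^ f i) := hu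
    have hne : ∀ i, (e.symm i : InfinitePlace E) ≠ w := fun i => (e.symm i).2
    rw [hu']
    simp [hne]

theorem index_range_zcomb_fundFamily (w : InfinitePlace E) (e : {v // v ≠ w} ≃ Fin (rank E)) :
    (zcomb (fundFamily E w e)).range.index = torsionOrder E :=
  (Nat.card_congr (Equiv.ofBijective _ ⟨injective_mk_torsion_fundFamily E w e,
    surjective_mk_torsion_fundFamily E w e⟩)).symm

/-- The regulator divided by the number of roots of unity, the form in which it enters the class
number formula. -/
noncomputable def normalizedRegulator : ℝ := regulator E / torsionOrder E

theorem abs_det_placeLog [DecidableEq (InfinitePlace E)]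
    {c : InfinitePlace E → ℤ × Additive (𝓞 E)ˣ}
    (hc : (Matrix.of fun v z => placeLog v (c z)).det ≠ 0) :
    |(Matrix.of fun v z => placeLog v (c z)).det| * 2 ^ InfinitePlace.nrComplexPlaces E =
      Module.finrank ℚ E * normalizedRegulator E * (zcomb c).range.index := by
  let w : InfinitePlace E := dirichletUnitTheorem.w₀
  let e := (equivFinRank E).symm
  have h := abs_det_mul_index_comm (c' := fundFamily E w e) hc (by
    rw [index_range_zcomb_fundFamily]
    exact torsionOrder_ne_zero E)
  rw [index_range_zcomb_fundFamily] at h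
  rw [normalizedRegulator, ← mul_div_assoc, ← abs_det_fundFamily E w e, div_mul_eq_mul_div,
    eq_div_iff (Nat.cast_ne_zero.mpr (torsionOrder_ne_zero E))]
  linear_combination 2 ^ InfinitePlace.nrComplexPlaces E * h

theorem index_range_zcomb_ne_zero [DecidableEq (InfinitePlace E)]
    {c : InfinitePlace E → ℤ × Additive (𝓞 E)ˣ}
    (hc : (Matrix.of fun v z => placeLog v (c z)).det ≠ 0) : (zcomb c).range.index ≠ 0 := by
  intro h
  have := abs_det_placeLog E hc
  rw [h, Nat.cast_zero, mul_zero] at this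
  exact mul_ne_zero (abs_ne_zero.mpr hc) (by positivity) this

end UnitFamilies

section DiagonallyDominant

variable {X : Type*} [Fintype X] {a : X → X → ℝ}

-- The terms are all nonnegative for the index `x` maximizing `t`, all nonpositive for the
-- minimizing one.
theorem forall_eq_of_forall_sum_sub_mul_eq (hneg : ∀ v x, v ≠ x → a v x < 0) {t : X → ℝ} {T : ℝ}
    (ht : ∀ x, ∑ v, (t v - t x) * a v x = T) (v x : X) : T = 0 ∧ t v = t x := by
  have := Nonempty.intro v
  obtain ⟨y, hy⟩ := Finite.exists_max t
  obtain ⟨z, hz⟩ := Finite.exists_min t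
  have hterm : ∀ v, 0 ≤ (t v - t y) * a v y := fun v => by
    rcases eq_or_ne v y with rfl | h
    · simp
    · exact mul_nonneg_of_nonpos_of_nonpos (by linarith [hy v]) (hneg v y h).le
  have hT : T = 0 := by
    refine le_antisymm ?_ (ht y ▸ Finset.sum_nonneg fun v _ => hterm v)
    rw [← ht z]
    refine Finset.sum_nonpos fun v _ => ?_
    rcases eq_or_ne v z with rfl | h
    · simp
    · exact mul_nonpos_of_nonneg_of_nonpos (by linarith [hz v]) (hneg v z h).le
  have hmax : ∀ v, t v = t y := fun v => by
    rcases eq_or_ne v y with rfl | h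
    · rfl
    have hzero := ht y
    rw [hT, Finset.sum_eq_zero_iff_of_nonneg fun v _ => hterm v] at hzero
    rcases mul_eq_zero.mp (hzero v (Finset.mem_univ v)) with h0 | h0
    · linarith
    · exact absurd h0 (hneg v y h).ne
  exact ⟨hT, (hmax v).trans (hmax x).symm⟩

theorem det_one_add_ne_zero_of_forall_sum_eq_zero [DecidableEq X] {m : X → ℝ}
    (hm : ∀ v, 0 < m v) (hneg : ∀ v x, v ≠ x → a v x < 0) (hsum : ∀ x, ∑ v, m v * a v x = 0) :
    (Matrix.of fun v x => 1 + a v x).det ≠ 0 := by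
  intro hdet
  obtain ⟨z, hz0, hz⟩ := Matrix.exists_vecMul_eq_zero_iff.mpr hdet
  set t : X → ℝ := fun v => z v / m v
  have hzt : ∀ v, z v = t v * m v := fun v => (div_mul_cancel₀ _ (hm v).ne').symm
  have hrow : ∀ x, ∑ v, (t v - t x) * (m v * a v x) = - ∑ v, t v * m v := fun x => by
    have h := congrFun hz x
    simp only [Matrix.vecMul, dotProduct, Matrix.of_apply, hzt, Pi.zero_apply, mul_add,
      Finset.sum_add_distrib, mul_one] at h
    simp only [sub_mul, Finset.sum_sub_distrib, ← Finset.mul_sum, hsum, mul_zero, sub_zero]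
    rw [← add_eq_zero_iff_eq_neg, ← h, add_comm]
    simp only [mul_assoc]
  have hconst := forall_eq_of_forall_sum_sub_mul_eq
    (fun v x h => mul_neg_of_pos_of_neg (hm v) (hneg v x h)) hrow
  refine hz0 (funext fun x => ?_)
  have hmul : t x * ∑ v, m v = 0 := by
    rw [Finset.mul_sum, ← neg_eq_zero, ← (hconst x x).1, neg_inj]
    exact Finset.sum_congr rfl fun v _ => by rw [(hconst x v).2]
  rw [hzt, (mul_eq_zero.mp hmul).resolve_right
    (Finset.sum_pos (fun v _ => hm v) ⟨x, Finset.mem_univ x⟩).ne', zero_mul, Pi.zero_apply]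

end DiagonallyDominant

theorem additive_units_ext {E : Type*} [Field E] {u u' : Additive (𝓞 E)ˣ}
    (h : ((u.toMul : (𝓞 E)ˣ) : E) = ((u'.toMul : (𝓞 E)ˣ) : E)) : u = u' :=
  Additive.toMul.injective (Units.ext (RingOfIntegers.ext h))

section UnitAct

variable {k L : Type*} [Field k] [Field L] [NumberField k] [Algebra k L] [IsGalois k L]

/-- The Galois action on units, written additively. -/
noncomputable def unitAut (g : L ≃ₐ[k] L) : Additive (𝓞 L)ˣ →+ Additive (𝓞 L)ˣ :=
  MonoidHom.toAdditive
    (Units.map (galRestrict (𝓞 k) k L (𝓞 L) g).toAlgHom.toRingHom.toMonoidHom)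

theorem coe_unitAut (g : L ≃ₐ[k] L) (u : Additive (𝓞 L)ˣ) :
    (((unitAut g u).toMul : (𝓞 L)ˣ) : L) = g ((u.toMul : (𝓞 L)ˣ) : L) :=
  algebraMap_galRestrict_apply (𝓞 k) g _

theorem unitAut_one : unitAut (1 : L ≃ₐ[k] L) = AddMonoidHom.id _ := by
  refine DFunLike.ext _ _ fun u => additive_units_ext ?_
  rw [coe_unitAut]
  rfl

theorem unitAut_mul (g h : L ≃ₐ[k] L) : unitAut (g * h) = (unitAut g).comp (unitAut h) := by
  refine DFunLike.ext _ _ fun u => additive_units_ext ?_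
  rw [coe_unitAut, AddMonoidHom.comp_apply, coe_unitAut, coe_unitAut]
  rfl

variable (k L) in
/-- The Galois action on `ℤ × 𝓞ˣ`, trivial on the first factor. -/
noncomputable def extUnitRep : (L ≃ₐ[k] L) →* Module.End ℤ (ℤ × Additive (𝓞 L)ˣ) where
  toFun g := ((AddMonoidHom.id ℤ).prodMap (unitAut g)).toIntLinearMap
  map_one' := by
    rw [unitAut_one]
    rfl
  map_mul' g h := by
    rw [unitAut_mul]
    rfl

theorem extUnitRep_apply (g : L ≃ₐ[k] L) (a : ℤ × Additive (𝓞 L)ˣ) :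
    extUnitRep k L g a = (a.1, unitAut g a.2) := rfl

theorem placeLog_extUnitRep (g : L ≃ₐ[k] L) (w : InfinitePlace L) (a : ℤ × Additive (𝓞 L)ˣ) :
    placeLog (g • w) (extUnitRep k L g a) = placeLog w a := by
  rw [placeLog_apply, placeLog_apply, extUnitRep_apply, coe_unitAut, InfinitePlace.smul_apply,
    AlgEquiv.symm_apply_apply]

variable [NumberField L]

variable (k L) in
theorem exists_equivariant_placeLog_neg :
    ∃ v : InfinitePlace L → ℤ × Additive (𝓞 L)ˣ,
      (∀ (g : L ≃ₐ[k] L) x, extUnitRep k L g (v x) = v (g • x)) ∧ (∀ x, (v x).1 = 0) ∧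
      ∀ w x, w ≠ x → placeLog w (v x) < 0 := by
  choose u hu using fun x : InfinitePlace L => Units.dirichletUnitTheorem.exists_unit L x
  let η : InfinitePlace L → ℤ × Additive (𝓞 L)ˣ := fun x => (0, Additive.ofMul (u x))
  have hη : ∀ w x, w ≠ x → placeLog w (η x) < 0 := fun w x h => by
    rw [placeLog_apply]
    simpa [η] using hu x w h
  refine ⟨fun x => ∑ g : L ≃ₐ[k] L, extUnitRep k L g (η (g⁻¹ • x)), fun g x => ?_,
    fun x => by simp [Prod.fst_sum, extUnitRep_apply, η], fun w x h => ?_⟩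
  · beta_reduce
    rw [map_sum, ← Equiv.sum_comp (Equiv.mulLeft g)
      fun h : L ≃ₐ[k] L => extUnitRep k L h (η (h⁻¹ • g • x))]
    refine Finset.sum_congr rfl fun h _ => ?_
    rw [Equiv.coe_mulLeft, map_mul, mul_inv_rev, mul_smul, inv_smul_smul, Module.End.mul_apply]
  · rw [map_sum]
    refine Finset.sum_neg (fun g _ => ?_) Finset.univ_nonempty
    rw [← smul_inv_smul g w, placeLog_extUnitRep]
    exact hη _ _ fun h' => h ((MulAction.injective g⁻¹) h')

variable (k L) in
theorem exists_equivariant_family [DecidableEq (InfinitePlace L)] :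
    ∃ ε : InfinitePlace L → ℤ × Additive (𝓞 L)ˣ,
      (∀ (g : L ≃ₐ[k] L) x, extUnitRep k L g (ε x) = ε (g • x)) ∧
      (Matrix.of fun w x => placeLog w (ε x)).det ≠ 0 := by
  obtain ⟨v, hv, hv1, hneg⟩ := exists_equivariant_placeLog_neg k L
  have hsum : ∀ x, ∑ w : InfinitePlace L, (w.mult : ℝ) * placeLog w (v x) = 0 := fun x => by
    simp only [placeLog_apply, hv1, Int.cast_zero, zero_add]
    exact Units.sum_mult_mul_log _
  refine ⟨fun x => (1, 0) + v x, fun g x => ?_, ?_⟩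
  · rw [map_add, hv, extUnitRep_apply, map_zero]
  · convert det_one_add_ne_zero_of_forall_sum_eq_zero (m := fun w : InfinitePlace L => (w.mult : ℝ))
      (fun w => Nat.cast_pos.mpr w.mult_pos) hneg hsum using 4 with w
    ext x
    rw [map_add, placeLog_apply]
    simp

end UnitAct

/-- Two elements of a monoid satisfying the relations of a dihedral group of order `2 * q`,
`q` odd. -/
structure IsDihedralPair {R : Type*} [Monoid R] (q : ℕ) (ρ σ : R) : Prop where
  odd : Odd q
  pow_eq_one : ρ ^ q = 1
  mul_self : σ * σ = 1
  conj : ρ * σ * ρ = σ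

namespace IsDihedralPair

section Monoid

variable {R : Type*} [Monoid R] {q : ℕ} {ρ σ : R}

theorem map {S : Type*} [Monoid S] (h : IsDihedralPair q ρ σ) (φ : R →* S) :
    IsDihedralPair q (φ ρ) (φ σ) where
  odd := h.odd
  pow_eq_one := by rw [← map_pow, h.pow_eq_one, map_one]
  mul_self := by rw [← map_mul, h.mul_self, map_one]
  conj := by rw [← map_mul, ← map_mul, h.conj]

theorem pow_mul_mul_pow (h : IsDihedralPair q ρ σ) (i : ℕ) : ρ ^ i * σ * ρ ^ i = σ := by
  induction i with
  | zero => simp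
  | succ i ih =>
    calc ρ ^ (i + 1) * σ * ρ ^ (i + 1) = ρ ^ i * (ρ * σ * ρ) * ρ ^ i := by
          nth_rw 1 [pow_succ]
          rw [pow_succ']
          simp only [mul_assoc]
      _ = σ := by rw [h.conj, ih]

theorem pow_mul {i j : ℕ} (h : IsDihedralPair q ρ σ) (hij : i + j = q) :
    ρ ^ i * σ = σ * ρ ^ j := by
  calc ρ ^ i * σ = ρ ^ i * σ * (ρ ^ i * ρ ^ j) := by rw [← pow_add, hij, h.pow_eq_one, mul_one]
    _ = σ * ρ ^ j := by rw [← mul_assoc, h.pow_mul_mul_pow]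

end Monoid

section Ring

variable {R : Type*} [Ring R] {q : ℕ} {ρ σ : R}

theorem mul_sum (h : IsDihedralPair q ρ σ) :
    ρ * ∑ i ∈ Finset.range q, ρ ^ i = ∑ i ∈ Finset.range q, ρ ^ i := by
  have := mul_geom_sum ρ q
  rw [h.pow_eq_one, sub_self, sub_mul, one_mul] at this
  exact sub_eq_zero.mp this

theorem sum_mul (h : IsDihedralPair q ρ σ) :
    (∑ i ∈ Finset.range q, ρ ^ i) * ρ = ∑ i ∈ Finset.range q, ρ ^ i := by
  have := geom_sum_mul ρ q
  rw [h.pow_eq_one, sub_self, mul_sub, mul_one] at this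
  exact sub_eq_zero.mp this

theorem sum_mul_pow (h : IsDihedralPair q ρ σ) (j : ℕ) :
    (∑ i ∈ Finset.range q, ρ ^ i) * ρ ^ j = ∑ i ∈ Finset.range q, ρ ^ i := by
  induction j with
  | zero => simp
  | succ j ih => rw [pow_succ, ← mul_assoc, ih, h.sum_mul]

theorem commute_sum (h : IsDihedralPair q ρ σ) :
    Commute σ (∑ i ∈ Finset.range q, ρ ^ i) := by
  have h1 := Finset.sum_range_reflect (fun i => ρ ^ i) q
  have h2 : (∑ i ∈ Finset.range q, ρ ^ i) * σ =
      σ * (ρ * ∑ i ∈ Finset.range q, ρ ^ (q - 1 - i)) := by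
    rw [Finset.sum_mul, Finset.mul_sum, Finset.mul_sum]
    refine Finset.sum_congr rfl fun i hi => ?_
    rw [← pow_succ']
    exact h.pow_mul (by have := Finset.mem_range.mp hi; omega)
  rw [h1, h.mul_sum] at h2
  exact h2.symm

end Ring

end IsDihedralPair

theorem isDihedralPair_r_one_sr_zero {q : ℕ} (hq : Odd q) :
    IsDihedralPair q (r 1 : DihedralGroup q) (sr 0) where
  odd := hq
  pow_eq_one := r_one_pow_n
  mul_self := sr_mul_self 0
  conj := by rw [r_mul_sr, sr_mul_r, zero_sub, neg_add_cancel]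

theorem IsDihedralTower.isDihedralPair {q : ℕ} {k L : Type*} [Field k] [Field L] [Algebra k L]
    {e : (L ≃ₐ[k] L) ≃* DihedralGroup q} {F K : IntermediateField k L}
    (h : IsDihedralTower q e F K) : IsDihedralPair q (e.symm (r 1)) (e.symm (sr 0)) :=
  (isDihedralPair_r_one_sr_zero h.odd).map e.symm.toMonoidHom

theorem sum_pow_apply_of_apply_eq {R M : Type*} [Semiring R] [AddCommMonoid M] [Module R M]
    {ρ : Module.End R M} {x : M} (hx : ρ x = x) (n : ℕ) :
    (∑ i ∈ Finset.range n, ρ ^ i) x = n • x := by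
  have hpow : ∀ i, (ρ ^ i) x = x := fun i => by
    rw [Module.End.pow_apply]
    exact Function.iterate_fixed hx i
  simp [LinearMap.sum_apply, hpow]

section Determinant

variable {𝕜 W W₁ W₂ W₃ : Type*} [Field 𝕜] [AddCommGroup W] [AddCommGroup W₁]
  [AddCommGroup W₂] [AddCommGroup W₃] [Module 𝕜 W] [Module 𝕜 W₁] [Module 𝕜 W₂] [Module 𝕜 W₃]

theorem det_eq_det_of_injective_of_intertwining [FiniteDimensional 𝕜 W]
    {Φ : W₁ →ₗ[𝕜] W} (hΦ : Function.Injective Φ)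
    (hdim : Module.finrank 𝕜 W₁ = Module.finrank 𝕜 W) {B : Module.End 𝕜 W₁} {A : Module.End 𝕜 W}
    (hAB : ∀ x, Φ (B x) = A (Φ x)) : LinearMap.det B = LinearMap.det A := by
  let Ψ := LinearEquiv.ofInjectiveOfFinrankEq Φ hΦ hdim
  have hconj : (Ψ : W₁ →ₗ[𝕜] W) ∘ₗ B ∘ₗ (Ψ.symm : W →ₗ[𝕜] W₁) = A := by
    refine LinearMap.ext fun y => ?_
    obtain ⟨x, rfl⟩ := Ψ.surjective y
    simp only [LinearMap.comp_apply, LinearEquiv.coe_coe, LinearEquiv.symm_apply_apply]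
    exact hAB x
  rw [← hconj, LinearMap.det_conj]

theorem exists_linearMap_comp_eq {i : W₃ →ₗ[𝕜] W} (hi : Function.Injective i) {f : W₂ →ₗ[𝕜] W}
    (hf : ∀ a, ∃ d, i d = f a) : ∃ ν : W₂ →ₗ[𝕜] W₃, ∀ a, i (ν a) = f a :=
  ⟨(LinearEquiv.ofInjective i hi).symm ∘ₗ f.codRestrict (LinearMap.range i) hf, fun a =>
    congrArg Subtype.val
      ((LinearEquiv.ofInjective i hi).apply_symm_apply (f.codRestrict (LinearMap.range i) hf a))⟩

variable {q : ℕ} {ρ σ : Module.End 𝕜 W}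

-- `ρ ^ m` with `q = 2 * m + 1` exchanges the fixed vectors of `σ` and of `σ * ρ`, so `y` is fixed
-- by both, hence by `ρ`.
theorem IsDihedralPair.eq_zero_of_add_pow_apply_eq_zero [CharZero 𝕜] (h : IsDihedralPair q ρ σ)
    {m : ℕ} (hm : q = 2 * m + 1) {x y z : W} (hx : ρ x = x) (hy : σ y = y) (hz : σ z = z)
    (hNy : (∑ i ∈ Finset.range q, ρ ^ i) y = 0) (hNz : (∑ i ∈ Finset.range q, ρ ^ i) z = 0)
    (hxyz : x + (y + (ρ ^ m) z) = 0) : x = 0 ∧ y = 0 ∧ z = 0 := by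
  have hfixed : ∀ w, ρ w = w → (∑ i ∈ Finset.range q, ρ ^ i) w = 0 → w = 0 := fun w hw hN => by
    rw [sum_pow_apply_of_apply_eq hw, ← Nat.cast_smul_eq_nsmul 𝕜, smul_eq_zero] at hN
    exact hN.resolve_left (Nat.cast_ne_zero.mpr h.odd.pos.ne')
  have hx0 : x = 0 := hfixed x hx <| by
    have := congrArg (fun w => (∑ i ∈ Finset.range q, ρ ^ i) w) hxyz
    beta_reduce at this
    rwa [map_add, map_add, hNy, ← Module.End.mul_apply _ (ρ ^ m), h.sum_mul_pow, hNz, map_zero,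
      add_zero, add_zero] at this
  rw [hx0, zero_add] at hxyz
  have hzy : (ρ ^ m) z = -y := (neg_eq_of_add_eq_zero_right hxyz).symm
  have hσρ : (σ * ρ) ((ρ ^ m) z) = (ρ ^ m) z := by
    rw [← Module.End.mul_apply, mul_assoc, ← pow_succ', ← h.pow_mul (by omega : m + (m + 1) = q),
      Module.End.mul_apply, hz]
  rw [hzy, map_neg, neg_inj] at hσρ
  have hρy : ρ y = y := by
    have := congrArg σ hσρ
    rwa [← Module.End.mul_apply, ← mul_assoc, h.mul_self, one_mul, hy] at this
  have hy0 : y = 0 := hfixed y hρy hNy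
  refine ⟨hx0, hy0, ?_⟩
  have := congrArg (ρ ^ (m + 1)) hzy
  rwa [← Module.End.mul_apply, ← pow_add, (by omega : m + 1 + m = q), h.pow_eq_one, hy0, neg_zero,
    map_zero, Module.End.one_apply] at this

-- `W₁ × W₂ × W₂` and `W × W₃ × W₃` are isomorphic by `(g, a, b) ↦ (g + a + ρ ^ m b, N a, N b)`,
-- with `N` the norm of `ρ`.
theorem IsDihedralPair.det_relation [CharZero 𝕜] [FiniteDimensional 𝕜 W] [FiniteDimensional 𝕜 W₁]
    [FiniteDimensional 𝕜 W₂] [FiniteDimensional 𝕜 W₃] (h : IsDihedralPair q ρ σ)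
    {i₁ : W₁ →ₗ[𝕜] W} {i₂ : W₂ →ₗ[𝕜] W} {i₃ : W₃ →ₗ[𝕜] W} (hi₁ : Function.Injective i₁)
    (hi₂ : Function.Injective i₂) (hi₃ : Function.Injective i₃)
    (h₁ : ∀ g, ρ (i₁ g) = i₁ g) (h₂ : ∀ a, σ (i₂ a) = i₂ a)
    (h₃ : ∀ w, ρ w = w → σ w = w → ∃ d, i₃ d = w)
    (hdim : Module.finrank 𝕜 W + 2 * Module.finrank 𝕜 W₃ =
      Module.finrank 𝕜 W₁ + 2 * Module.finrank 𝕜 W₂)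
    {A : Module.End 𝕜 W} {A₁ : Module.End 𝕜 W₁} {A₂ : Module.End 𝕜 W₂} {A₃ : Module.End 𝕜 W₃}
    (hρ : Commute ρ A) (hA₁ : ∀ g, A (i₁ g) = i₁ (A₁ g)) (hA₂ : ∀ a, A (i₂ a) = i₂ (A₂ a))
    (hA₃ : ∀ d, A (i₃ d) = i₃ (A₃ d)) :
    LinearMap.det A * LinearMap.det A₃ ^ 2 = LinearMap.det A₁ * LinearMap.det A₂ ^ 2 := by
  set N : Module.End 𝕜 W := ∑ i ∈ Finset.range q, ρ ^ i
  obtain ⟨ν, hν⟩ : ∃ ν : W₂ →ₗ[𝕜] W₃, ∀ a, i₃ (ν a) = (N ∘ₗ i₂) a :=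
    exists_linearMap_comp_eq hi₃ fun a => h₃ _
      (by rw [LinearMap.comp_apply, ← Module.End.mul_apply, h.mul_sum])
      (by rw [LinearMap.comp_apply, ← Module.End.mul_apply, h.commute_sum.eq, Module.End.mul_apply,
        h₂])
  obtain ⟨m, hm⟩ := h.odd
  let Φ : W₁ × W₂ × W₂ →ₗ[𝕜] W × W₃ × W₃ :=
    (i₁.coprod (i₂.coprod ((ρ ^ m).comp i₂))).prod ((ν.prodMap ν) ∘ₗ LinearMap.snd _ _ _)
  have hΦ : ∀ g a b, Φ (g, a, b) = (i₁ g + (i₂ a + (ρ ^ m) (i₂ b)), ν a, ν b) := fun _ _ _ => rfl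
  have hinj : Function.Injective Φ := by
    refine (injective_iff_map_eq_zero _).mpr ?_
    rintro ⟨g, a, b⟩ h0
    rw [hΦ, Prod.mk_eq_zero, Prod.mk_eq_zero] at h0
    obtain ⟨h0, ha, hb⟩ := h0
    obtain ⟨hg, ha, hb⟩ := h.eq_zero_of_add_pow_apply_eq_zero hm (h₁ g) (h₂ a) (h₂ b)
      ((hν a).symm.trans (by rw [ha, map_zero])) ((hν b).symm.trans (by rw [hb, map_zero])) h0
    rw [(map_eq_zero_iff _ hi₁).mp hg, (map_eq_zero_iff _ hi₂).mp ha,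
      (map_eq_zero_iff _ hi₂).mp hb]
    rfl
  have hNA : Commute N A := Commute.sum_left _ _ _ fun i _ => hρ.pow_left i
  have hνA : ∀ a, ν (A₂ a) = A₃ (ν a) := fun a => hi₃ <| by
    rw [hν, ← hA₃, hν, LinearMap.comp_apply, LinearMap.comp_apply, ← hA₂, ← Module.End.mul_apply,
      ← Module.End.mul_apply, hNA.eq]
  have hdet := det_eq_det_of_injective_of_intertwining hinj
    (B := A₁.prodMap (A₂.prodMap A₂)) (A := A.prodMap (A₃.prodMap A₃))
    (by simp only [Module.finrank_prod]; omega) fun ⟨g, a, b⟩ => by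
      have hρA : (ρ ^ m) (A (i₂ b)) = A ((ρ ^ m) (i₂ b)) :=
        LinearMap.congr_fun (hρ.pow_left m).eq (i₂ b)
      simp only [LinearMap.prodMap_apply, hΦ, hνA, map_add, hA₁, hA₂, ← hρA]
  simp only [LinearMap.det_prodMap] at hdet
  rw [pow_two, pow_two]
  exact hdet.symm

end Determinant

section EquivariantFamily

variable {H X Z M N : Type*} [Group H] [MulAction H X] [Fintype X] [Fintype Z] [AddCommGroup M]
  [AddCommGroup N] {φ : H →* Module.End ℤ M} {ε : X → M}

theorem map_zcomb_of_equivariant (hε : ∀ h x, φ h (ε x) = ε (h • x)) (h : H) (f : X → ℤ) :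
    φ h (zcomb ε f) = zcomb ε fun x => f (h⁻¹ • x) := by
  rw [zcomb_apply, zcomb_apply, map_sum, ← Equiv.sum_comp (MulAction.toPerm h)
    fun x => f (h⁻¹ • x) • ε x]
  refine Finset.sum_congr rfl fun x _ => ?_
  rw [map_zsmul, hε, MulAction.toPerm_apply, inv_smul_smul]

variable [DecidableEq Z] {π : X → Z} {i : N →+ M} {c : Z → N}

theorem map_zcomb_of_fiberwise_sum (hc : ∀ z, i (c z) = ∑ x with π x = z, ε x) (f : Z → ℤ) :
    i (zcomb c f) = zcomb ε (f ∘ π) := by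
  rw [zcomb_apply, zcomb_apply, map_sum, ← Finset.sum_fiberwise _ π]
  refine Finset.sum_congr rfl fun z _ => ?_
  rw [map_zsmul, hc, ← Finset.sum_zsmul]
  refine Finset.sum_congr rfl fun x hx => ?_
  rw [Function.comp_apply, (Finset.mem_filter.mp hx).2]

theorem map_range_zcomb_of_fiberwise_sum (hε : ∀ h x, φ h (ε x) = ε (h • x))
    (hinj : Function.Injective (zcomb ε)) (hπs : Function.Surjective π)
    (hπ : ∀ x x', π x = π x' ↔ ∃ h : H, h • x' = x) (hi : ∀ a, a ∈ i.range ↔ ∀ h, φ h a = a)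
    (hc : ∀ z, i (c z) = ∑ x with π x = z, ε x) :
    (zcomb c).range.map i = (zcomb ε).range ⊓ i.range := by
  ext a
  rw [AddSubgroup.mem_inf]
  constructor
  · rintro ⟨_, ⟨f, rfl⟩, rfl⟩
    exact ⟨⟨_, (map_zcomb_of_fiberwise_sum hc f).symm⟩, ⟨_, rfl⟩⟩
  · rintro ⟨⟨f, rfl⟩, hfix⟩
    rw [hi] at hfix
    have hf : ∀ (h : H) x, f (h • x) = f x := fun h x => by
      rw [← congrFun (hinj ((map_zcomb_of_equivariant hε h f).symm.trans (hfix h))) (h • x),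
        inv_smul_smul]
    refine ⟨_, ⟨fun z => f (Function.surjInv hπs z), rfl⟩, ?_⟩
    rw [map_zcomb_of_fiberwise_sum hc]
    congr 1
    ext x
    obtain ⟨h, hh⟩ := (hπ _ _).mp (Function.surjInv_eq hπs (π x))
    rw [Function.comp_apply, ← hh]
    exact hf h x

theorem index_range_zcomb_of_fiberwise_sum (hε : ∀ h x, φ h (ε x) = ε (h • x))
    (hinj : Function.Injective (zcomb ε)) (hπs : Function.Surjective π)
    (hπ : ∀ x x', π x = π x' ↔ ∃ h : H, h • x' = x) (hi : ∀ a, a ∈ i.range ↔ ∀ h, φ h a = a)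
    (hiinj : Function.Injective i) (hc : ∀ z, i (c z) = ∑ x with π x = z, ε x) :
    (zcomb c).range.index = (zcomb ε).range.relIndex i.range := by
  rw [← AddSubgroup.inf_relIndex_right, ← map_range_zcomb_of_fiberwise_sum hε hinj hπs hπ hi hc,
    AddMonoidHom.range_eq_map i, AddSubgroup.relIndex_map_map_of_injective _ _ hiinj,
    AddSubgroup.relIndex_top_right]

variable [DecidableEq X] {ℓ : X → M →+ ℝ} {ℓ' : Z → N →+ ℝ}

theorem toLin'_comp_of_fiberwise_sum (hℓ : ∀ x a, ℓ x (i a) = ℓ' (π x) a)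
    (hc : ∀ z, i (c z) = ∑ x with π x = z, ε x) (f : Z → ℝ) (w : X) :
    Matrix.toLin' (Matrix.of fun w x => ℓ w (ε x)) (fun x => f (π x)) w =
      Matrix.toLin' (Matrix.of fun v z => ℓ' v (c z)) f (π w) := by
  rw [Matrix.toLin'_apply, Matrix.toLin'_apply]
  simp only [Matrix.mulVec, dotProduct, Matrix.of_apply]
  rw [← Finset.sum_fiberwise _ π]
  refine Finset.sum_congr rfl fun z _ => ?_
  rw [← hℓ, hc, map_sum, Finset.sum_mul]
  refine Finset.sum_congr rfl fun x hx => ?_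
  rw [(Finset.mem_filter.mp hx).2]

theorem det_ne_zero_of_fiberwise_sum (hℓ : ∀ x a, ℓ x (i a) = ℓ' (π x) a)
    (hπs : Function.Surjective π) (hc : ∀ z, i (c z) = ∑ x with π x = z, ε x)
    (hdet : (Matrix.of fun w x => ℓ w (ε x)).det ≠ 0) :
    (Matrix.of fun v z => ℓ' v (c z)).det ≠ 0 := by
  intro h0
  obtain ⟨f, hf0, hf⟩ := Matrix.exists_mulVec_eq_zero_iff.mpr h0
  refine hf0 (funext fun z => ?_)
  obtain ⟨w, rfl⟩ := hπs z
  refine congrFun (Matrix.eq_zero_of_mulVec_eq_zero (v := fun x => f (π x)) hdet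
    (funext fun w => ?_)) w
  rw [← Matrix.toLin'_apply, toLin'_comp_of_fiberwise_sum hℓ hc, Matrix.toLin'_apply, hf]
  rfl

end EquivariantFamily

section UnitBase

variable (E L : Type*) [Field E] [Field L] [Algebra E L]

/-- The inclusion of `ℤ × 𝓞_Eˣ` in `ℤ × 𝓞_Lˣ`. -/
noncomputable def extUnitBase : ℤ × Additive (𝓞 E)ˣ →+ ℤ × Additive (𝓞 L)ˣ :=
  (AddMonoidHom.id ℤ).prodMap
    (MonoidHom.toAdditive (Units.map (algebraMap (𝓞 E) (𝓞 L)).toMonoidHom))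

variable {E L}

theorem coe_extUnitBase (a : ℤ × Additive (𝓞 E)ˣ) :
    (((extUnitBase E L a).2.toMul : (𝓞 L)ˣ) : L) = algebraMap E L ((a.2.toMul : (𝓞 E)ˣ) : E) :=
  rfl

theorem extUnitBase_injective : Function.Injective (extUnitBase E L) := by
  intro a b h
  refine Prod.ext (congrArg (fun c : ℤ × Additive (𝓞 L)ˣ => c.1) h) (additive_units_ext ?_)
  apply (algebraMap E L).injective
  rw [← coe_extUnitBase, ← coe_extUnitBase, h]

theorem placeLog_extUnitBase (w : InfinitePlace L) (a : ℤ × Additive (𝓞 E)ˣ) :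
    placeLog w (extUnitBase E L a) = placeLog (w.comap (algebraMap E L)) a := by
  rw [placeLog_apply, placeLog_apply, coe_extUnitBase]
  rfl

end UnitBase

/-- The pullback of real functions on the infinite places of `E` to those of `L`. -/
noncomputable def placePullback (E L : Type*) [Field E] [Field L] [Algebra E L] :
    (InfinitePlace E → ℝ) →ₗ[ℝ] (InfinitePlace L → ℝ) :=
  LinearMap.funLeft ℝ ℝ fun w => w.comap (algebraMap E L)

theorem placePullback_apply {E L : Type*} [Field E] [Field L] [Algebra E L]
    (f : InfinitePlace E → ℝ) (w : InfinitePlace L) :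
    placePullback E L f w = f (w.comap (algebraMap E L)) := rfl

theorem placePullback_injective (E L : Type*) [Field E] [Field L] [Algebra E L]
    [Algebra.IsAlgebraic E L] : Function.Injective (placePullback E L) :=
  LinearMap.funLeft_injective_of_surjective _ _ _ InfinitePlace.comap_surjective

theorem exists_ringOfIntegers_algebraMap_eq {E L H : Type*} [Field E] [Field L] [Algebra E L]
    [Group H] [MulSemiringAction H L] [Algebra.IsInvariant E L H] {x : 𝓞 L}
    (hx : ∀ h : H, h • (x : L) = x) : ∃ y : 𝓞 E, algebraMap (𝓞 E) (𝓞 L) y = x := by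
  obtain ⟨y, hy⟩ := Algebra.IsInvariant.isInvariant (A := E) (G := H) (x : L) hx
  have hint : IsIntegral ℤ (algebraMap E L y) := by
    rw [hy]
    exact RingOfIntegers.isIntegral_coe _
  exact ⟨⟨y, (isIntegral_algebraMap_iff (algebraMap E L).injective).mp hint⟩,
    RingOfIntegers.ext hy⟩

section FixedUnits

variable {k L : Type*} [Field k] [Field L] [NumberField k] [Algebra k L] [IsGalois k L]
  (T : Subgroup (L ≃ₐ[k] L)) (E : Type*) [Field E] [Algebra E L] [IsGaloisGroup T E L]

theorem exists_extUnitBase_eq_iff (a : ℤ × Additive (𝓞 L)ˣ) :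
    (∃ b, extUnitBase E L b = a) ↔ ∀ g ∈ T, extUnitRep k L g a = a := by
  constructor
  · rintro ⟨b, rfl⟩ g hg
    refine Prod.ext rfl (additive_units_ext ?_)
    rw [extUnitRep_apply, coe_unitAut, coe_extUnitBase]
    exact smul_algebraMap (⟨g, hg⟩ : T) (((b.2.toMul : (𝓞 E)ˣ) : 𝓞 E) : E)
  · intro h
    obtain ⟨y, hy⟩ := exists_ringOfIntegers_algebraMap_eq (E := E) (H := T)
      (x := (a.2.toMul : (𝓞 L)ˣ)) fun g => by
        have := congrArg (fun b : ℤ × Additive (𝓞 L)ˣ => ((b.2.toMul : (𝓞 L)ˣ) : L)) (h g g.2)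
        rwa [extUnitRep_apply, coe_unitAut] at this
    obtain ⟨u, rfl⟩ : IsUnit y := by
      refine isUnit_of_map_unit (algebraMap (𝓞 E) (𝓞 L)) y ?_
      rw [hy]
      exact Units.isUnit _
    exact ⟨(a.1, Additive.ofMul u), Prod.ext rfl (additive_units_ext
      (congrArg (algebraMap (𝓞 L) L) hy))⟩

variable [NumberField L]

theorem exists_extUnitBase_eq_sum_fiber [NumberField E] [DecidableEq (InfinitePlace E)]
    {ε : InfinitePlace L → ℤ × Additive (𝓞 L)ˣ}
    (hε : ∀ g ∈ T, ∀ x, extUnitRep k L g (ε x) = ε (g • x)) (z : InfinitePlace E) :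
    ∃ b, extUnitBase E L b = ∑ x with InfinitePlace.comap x (algebraMap E L) = z, ε x := by
  rw [exists_extUnitBase_eq_iff T E]
  intro g hg
  rw [map_sum, Finset.sum_congr rfl fun x _ => hε g hg x]
  refine Finset.sum_equiv (MulAction.toPerm g) (fun x => ?_) fun _ _ => rfl
  have hcomap : (g • x).comap (algebraMap E L) = x.comap (algebraMap E L) :=
    (comap_algebraMap_eq_iff_exists_smul E L T (fun _ _ _ => rfl) _ _).mpr ⟨⟨g, hg⟩, rfl⟩
  simp [hcomap]

theorem exists_end_placeLog [NumberField E] [DecidableEq (InfinitePlace L)]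
    {ε : InfinitePlace L → ℤ × Additive (𝓞 L)ˣ}
    (hε : ∀ g ∈ T, ∀ x, extUnitRep k L g (ε x) = ε (g • x))
    (hdet : (Matrix.of fun w x => placeLog w (ε x)).det ≠ 0)
    {Λ : AddSubgroup (ℤ × Additive (𝓞 L)ˣ)}
    (hΛ : ∀ a, a ∈ Λ ↔ ∀ g ∈ T, extUnitRep k L g a = a) :
    ∃ A : Module.End ℝ (InfinitePlace E → ℝ),
      (∀ f, Matrix.toLin' (Matrix.of fun w x => placeLog w (ε x)) (placePullback E L f) =
        placePullback E L (A f)) ∧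
      |LinearMap.det A| * 2 ^ InfinitePlace.nrComplexPlaces E =
        Module.finrank ℚ E * normalizedRegulator E * ((zcomb ε).range.relIndex Λ) ∧
      (zcomb ε).range.relIndex Λ ≠ 0 := by
  classical
  have := IsGaloisGroup.isGalois T E L
  choose c hc using exists_extUnitBase_eq_sum_fiber T E hε
  have hsurj : Function.Surjective fun w : InfinitePlace L => w.comap (algebraMap E L) :=
    InfinitePlace.comap_surjective
  have hdetE : (Matrix.of fun v z => placeLog v (c z)).det ≠ 0 :=
    det_ne_zero_of_fiberwise_sum placeLog_extUnitBase hsurj hc hdet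
  have hrange : ∀ a, a ∈ (extUnitBase E L).range ↔
      ∀ g : T, ((extUnitRep k L).comp T.subtype) g a = a := fun a => by
    rw [AddMonoidHom.mem_range, exists_extUnitBase_eq_iff T E, Subtype.forall]
    rfl
  have hindex : (zcomb c).range.index = (zcomb ε).range.relIndex Λ := by
    rw [index_range_zcomb_of_fiberwise_sum (φ := (extUnitRep k L).comp T.subtype)
      (fun g x => hε g g.2 x) (zcomb_injective_of_det_ne_zero hdet) hsurj
      (comap_algebraMap_eq_iff_exists_smul E L T fun _ _ _ => rfl) hrange extUnitBase_injective hc]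
    congr 1
    ext a
    rw [hΛ, AddMonoidHom.mem_range, exists_extUnitBase_eq_iff T E]
  refine ⟨Matrix.toLin' (Matrix.of fun v z => placeLog v (c z)),
    fun f => funext (toLin'_comp_of_fiberwise_sum placeLog_extUnitBase hc f), ?_, ?_⟩
  · rw [LinearMap.det_toLin', ← hindex]
    exact abs_det_placeLog E hdetE
  · rw [← hindex]
    exact index_range_zcomb_ne_zero E hdetE

end FixedUnits

section RelIndex

variable {M M' : Type*} [AddCommGroup M] [AddCommGroup M']

theorem relIndex_eq_relIndex_inf_mul_relIndex_sup {S P : AddSubgroup M} (h : S ≤ P)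
    (K : AddSubgroup M) :
    S.relIndex P = S.relIndex (P ⊓ K) * (S ⊔ K).relIndex (P ⊔ K) := by
  have hinf : S.relIndex (P ⊓ K) = S.relIndex (S ⊔ P ⊓ K) := by
    rw [sup_comm, AddSubgroup.relIndex_sup_right]
  have hsup : (S ⊔ K).relIndex (P ⊔ K) = (S ⊔ P ⊓ K).relIndex P := by
    rw [← sup_eq_left.mpr h, sup_assoc, AddSubgroup.relIndex_sup_right, sup_eq_left.mpr h,
      ← AddSubgroup.inf_relIndex_right, sup_inf_assoc_of_le _ h, inf_comm K]
  rw [hinf, hsup, AddSubgroup.relIndex_mul_relIndex _ _ _ le_sup_left (sup_le h inf_le_left)]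

theorem relIndex_eq_relIndex_inf_ker_mul_relIndex_map (f : M →+ M') (S P : AddSubgroup M) :
    S.relIndex P = S.relIndex (P ⊓ f.ker) * ((P ⊓ S).map f).relIndex (P.map f) := by
  rw [AddSubgroup.relIndex_map_map, ← AddSubgroup.inf_relIndex_right, inf_comm S,
    relIndex_eq_relIndex_inf_mul_relIndex_sup inf_le_left f.ker,
    ← AddSubgroup.inf_relIndex_right, ← AddSubgroup.inf_relIndex_right S]
  congr 2
  ext x
  simp only [AddSubgroup.mem_inf]
  tauto

theorem relIndex_mul_relIndex_eq_sup_mul_inf {A A' B B' : AddSubgroup M} (hA : A' ≤ A)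
    (hB : B' ≤ B) :
    A'.relIndex A * B'.relIndex B = (A' ⊔ B').relIndex (A ⊔ B) * (A' ⊓ B').relIndex (A ⊓ B) := by
  have hsup : (A' ⊔ B').relIndex (A ⊔ B) =
      (A' ⊔ B').relIndex (A' ⊔ B) * (A' ⊔ B).relIndex (A ⊔ B) :=
    (AddSubgroup.relIndex_mul_relIndex _ _ _ (sup_le_sup_left hB _) (sup_le_sup_right hA _)).symm
  have hinf : (A' ⊓ B').relIndex (A ⊓ B) = B'.relIndex (B ⊓ A') * A'.relIndex (A ⊓ B) := by
    rw [← AddSubgroup.relIndex_mul_relIndex (A' ⊓ B') (A' ⊓ B) (A ⊓ B)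
      (inf_le_inf_left _ hB) (inf_le_inf_right _ hA)]
    congr 1
    · rw [← AddSubgroup.inf_relIndex_right B', inf_comm B A', ← inf_assoc, inf_comm B' A',
        inf_assoc, inf_eq_left.mpr hB]
    · rw [← AddSubgroup.inf_relIndex_right A', ← inf_assoc, inf_eq_left.mpr hA]
  rw [hsup, hinf, relIndex_eq_relIndex_inf_mul_relIndex_sup hA B,
    relIndex_eq_relIndex_inf_mul_relIndex_sup hB A', sup_comm B' A', sup_comm B A']
  ring

theorem index_mul_relIndex_eq {g : M →+ M} {S : AddSubgroup M} (hgS : S.map g ≤ S)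
    (D : AddSubgroup M) :
    S.index * S.relIndex D =
      S.relIndex (D.comap g) * (S.map g ⊔ D ⊓ S).relIndex (g.range ⊔ D) := by
  have hmodular := relIndex_mul_relIndex_eq_sup_mul_inf
    (AddMonoidHom.range_eq_map g ▸ AddSubgroup.map_mono le_top : S.map g ≤ g.range)
    (inf_le_left : D ⊓ S ≤ D)
  have hindex := relIndex_eq_relIndex_inf_ker_mul_relIndex_map g S ⊤
  have hcomap := relIndex_eq_relIndex_inf_ker_mul_relIndex_map g S (D.comap g)
  have hmap : (D.comap g ⊓ S).map g = S.map g ⊓ (D ⊓ S) := by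
    ext y
    constructor
    · rintro ⟨x, ⟨hxD, hxS⟩, rfl⟩
      exact ⟨⟨x, hxS, rfl⟩, hxD, hgS ⟨x, hxS, rfl⟩⟩
    · rintro ⟨⟨x, hxS, rfl⟩, hxD, -⟩
      exact ⟨x, ⟨hxD, hxS⟩, rfl⟩
  rw [top_inf_eq, top_inf_eq, AddSubgroup.relIndex_top_right, ← AddMonoidHom.range_eq_map] at hindex
  rw [inf_eq_right.mpr (AddSubgroup.ker_le_comap g D), hmap, AddSubgroup.map_comap_eq] at hcomap
  rw [inf_comm D S, AddSubgroup.inf_relIndex_right] at hmodular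
  rw [inf_comm D S] at hcomap ⊢
  rw [hindex, hcomap, mul_assoc, hmodular]
  ring

end RelIndex

section Lattice

variable {M : Type*} [AddCommGroup M]

/-- The subgroup of vectors fixed by an endomorphism. -/
def endFixed (φ : Module.End ℤ M) : AddSubgroup M :=
  (φ : M →+ M).eqLocus (AddMonoidHom.id M)

theorem mem_endFixed {φ : Module.End ℤ M} {x : M} : x ∈ endFixed φ ↔ φ x = x := Iff.rfl

variable (q : ℕ) (ρ σ : Module.End ℤ M)

/-- The norm element of a cyclic group of order `q` generated by `ρ`. -/
def cycNorm : Module.End ℤ M := ∑ i ∈ Finset.range q, ρ ^ i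

/-- The kernel of the norm on the fixed points of `σ`. -/
def normKer : AddSubgroup M := endFixed σ ⊓ (cycNorm q ρ : M →+ M).ker

/-- The fixed points of `σ` of the form `x - ρ x`. -/
def twistBoundary : AddSubgroup M := endFixed σ ⊓ ((1 - ρ : Module.End ℤ M) : M →+ M).range

/-- The norms of the fixed points of `σ`. -/
def normImage : AddSubgroup M := (endFixed σ).map (cycNorm q ρ : M →+ M)

/-- For a dihedral pair acting on a uniquely `2`-divisible module, the order of `Ĥ⁰` (with `0` for
an infinite group). -/
noncomputable def dihedralH0Card : ℕ := (normImage q ρ σ).relIndex (endFixed ρ ⊓ endFixed σ)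

/-- For a dihedral pair acting on a uniquely `2`-divisible module, the order of `Ĥ⁻¹` (with `0` for
an infinite group). -/
noncomputable def dihedralHneg1Card : ℕ := (twistBoundary ρ σ).relIndex (normKer q ρ σ)

namespace IsDihedralPair

variable {q ρ σ}

theorem apply_cycNorm (h : IsDihedralPair q ρ σ) (x : M) :
    ρ (cycNorm q ρ x) = cycNorm q ρ x := by
  rw [← Module.End.mul_apply, cycNorm, h.mul_sum]

theorem cycNorm_apply (h : IsDihedralPair q ρ σ) (x : M) :
    cycNorm q ρ (ρ x) = cycNorm q ρ x := by
  rw [← Module.End.mul_apply, cycNorm, h.sum_mul]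

theorem reflection_cycNorm (h : IsDihedralPair q ρ σ) (x : M) :
    σ (cycNorm q ρ x) = cycNorm q ρ (σ x) := by
  rw [← Module.End.mul_apply, ← Module.End.mul_apply, cycNorm, h.commute_sum.eq]

theorem reflection_reflection (h : IsDihedralPair q ρ σ) (x : M) : σ (σ x) = x := by
  rw [← Module.End.mul_apply, h.mul_self, Module.End.one_apply]

theorem rotation_reflection_rotation (h : IsDihedralPair q ρ σ) (x : M) : ρ (σ (ρ x)) = σ x := by
  rw [← Module.End.mul_apply, ← Module.End.mul_apply, h.conj]

theorem twistBoundary_le_normKer (h : IsDihedralPair q ρ σ) :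
    twistBoundary ρ σ ≤ normKer q ρ σ := by
  rintro _ ⟨hfix, y, rfl⟩
  refine ⟨hfix, ?_⟩
  change cycNorm q ρ (y - ρ y) = 0
  rw [map_sub, h.cycNorm_apply, sub_self]

theorem normImage_le_endFixed (h : IsDihedralPair q ρ σ) :
    normImage q ρ σ ≤ endFixed ρ ⊓ endFixed σ := by
  rintro _ ⟨y, hy, rfl⟩
  exact ⟨h.apply_cycNorm y, (h.reflection_cycNorm y).trans (congrArg _ hy)⟩

theorem cycNorm_mem_endFixed (h : IsDihedralPair q ρ σ) {y : M} (hy : y ∈ endFixed (σ * ρ)) :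
    cycNorm q ρ y ∈ endFixed ρ ⊓ endFixed σ := by
  refine ⟨h.apply_cycNorm y, ?_⟩
  rw [mem_endFixed, Module.End.mul_apply] at hy
  change σ (cycNorm q ρ y) = cycNorm q ρ y
  rw [h.reflection_cycNorm, ← h.cycNorm_apply y, ← h.reflection_reflection (ρ y), hy]

theorem add_mem_endFixed_iff (h : IsDihedralPair q ρ σ) (z : M) :
    z + σ (ρ z) ∈ endFixed ρ ⊓ endFixed σ ↔ z - ρ z ∈ endFixed σ := by
  rw [AddSubgroup.mem_inf, mem_endFixed, mem_endFixed, mem_endFixed]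
  simp only [map_add, map_sub, h.reflection_reflection, h.rotation_reflection_rotation]
  grind

-- The powers `ρ ^ i` with `0 < i < q` pair up as `ρ ^ (i + 1)` and `ρ ^ (q - (i + 1))`.
theorem cycNorm_eq_of_mem_endFixed (h : IsDihedralPair q ρ σ) {m : ℕ} (hm : q = 2 * m + 1) {y : M}
    (hy : y ∈ endFixed (σ * ρ)) :
    cycNorm q ρ y = y + (∑ i ∈ Finset.range m, ρ ^ (i + 1)) y +
      σ (ρ ((∑ i ∈ Finset.range m, ρ ^ (i + 1)) y)) := by
  have hsplit : cycNorm q ρ = 1 + (∑ i ∈ Finset.range m, ρ ^ (i + 1)) +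
      ∑ i ∈ Finset.range m, ρ ^ (q - (i + 1)) := by
    rw [cycNorm]
    conv_lhs => rw [hm]
    rw [Finset.sum_range_succ', two_mul, Finset.sum_range_add, pow_zero,
      ← Finset.sum_range_reflect (fun i => ρ ^ (m + i + 1)), add_comm, add_assoc]
    congr 2
    refine Finset.sum_congr rfl fun i hi => ?_
    congr 1
    have := Finset.mem_range.mp hi
    omega
  have hσy : σ y = ρ y := by
    rw [← h.reflection_reflection (ρ y)]
    exact congrArg σ hy.symm
  have hpair : ∀ i ∈ Finset.range m, σ (ρ ((ρ ^ (i + 1)) y)) = (ρ ^ (q - (i + 1))) y :=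
    fun i hi => by
      have hle : q - (i + 1) + (i + 1) = q := by
        have := Finset.mem_range.mp hi
        omega
      have := LinearMap.congr_fun (h.pow_mul hle) (σ y)
      rw [Module.End.mul_apply, Module.End.mul_apply, h.reflection_reflection, hσy] at this
      rw [this, ← Module.End.mul_apply ρ, ← Module.End.mul_apply (ρ ^ (i + 1)), pow_mul_comm']
  simp only [hsplit, LinearMap.add_apply, LinearMap.sum_apply, map_sum, Module.End.one_apply]
  rw [Finset.sum_congr rfl hpair]

variable {S : AddSubgroup M}

theorem pow_mem_of_forall_mem (hρ : ∀ x ∈ S, ρ x ∈ S) {x : M} (hx : x ∈ S) (i : ℕ) :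
    (ρ ^ i) x ∈ S := by
  rw [Module.End.pow_apply]
  exact Set.MapsTo.iterate (s := S) (f := ρ) hρ i hx

theorem endFixed_inf_eq_sup (h : IsDihedralPair q ρ σ) (hρ : ∀ x ∈ S, ρ x ∈ S)
    (hσ : ∀ x ∈ S, σ x ∈ S) :
    endFixed (σ * ρ) ⊓ S = S.map ((1 + σ * ρ : Module.End ℤ M) : M →+ M) ⊔
      endFixed ρ ⊓ endFixed σ ⊓ S := by
  refine le_antisymm ?_ (sup_le ?_ ?_)
  · rintro y ⟨hy, hyS⟩
    obtain ⟨m, hm⟩ := h.odd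
    set w := (∑ i ∈ Finset.range m, ρ ^ (i + 1)) y
    have hw : w ∈ S := by
      simp only [w, LinearMap.sum_apply]
      exact S.sum_mem fun i _ => pow_mem_of_forall_mem hρ hyS _
    have hN : cycNorm q ρ y ∈ S := by
      rw [cycNorm, LinearMap.sum_apply]
      exact S.sum_mem fun i _ => pow_mem_of_forall_mem hρ hyS i
    refine AddSubgroup.mem_sup.mpr ⟨-(w + σ (ρ w)), ⟨-w, S.neg_mem hw, map_neg _ w⟩, _,
      ⟨h.cycNorm_mem_endFixed hy, hN⟩, ?_⟩
    rw [h.cycNorm_eq_of_mem_endFixed hm hy]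
    abel
  · rintro _ ⟨x, hx, rfl⟩
    refine ⟨?_, S.add_mem hx (hσ _ (hρ _ hx))⟩
    change σ (ρ (x + σ (ρ x))) = x + σ (ρ x)
    rw [map_add, map_add, h.rotation_reflection_rotation, h.reflection_reflection, add_comm]
  · rintro x ⟨⟨hx, hx'⟩, hxS⟩
    exact ⟨(congrArg σ hx).trans hx', hxS⟩

theorem relIndex_endFixed_mul (h : IsDihedralPair q ρ σ) (hρ : ∀ x ∈ S, ρ x ∈ S) :
    S.relIndex (endFixed (σ * ρ)) = S.relIndex (endFixed σ) := by
  obtain ⟨m, hm⟩ := h.odd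
  have hcancel : ∀ {i j : ℕ}, i + j = q → ∀ x, (ρ ^ i) ((ρ ^ j) x) = x := fun hij x => by
    rw [← Module.End.mul_apply, ← pow_add, hij, h.pow_eq_one, Module.End.one_apply]
  have hswap : ∀ x, (ρ ^ m) (σ x) = σ (ρ ((ρ ^ m) x)) := fun x => by
    rw [← Module.End.mul_apply, h.pow_mul (by omega : m + (m + 1) = q), pow_succ',
      Module.End.mul_apply, Module.End.mul_apply]
  have hinv : ∀ x, (ρ ^ m) ((ρ ^ (m + 1)) x) = x := hcancel (by omega)
  have hinj : Function.Injective ((ρ ^ m : Module.End ℤ M) : M →+ M) :=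
    Function.LeftInverse.injective (hcancel (by omega : m + 1 + m = q))
  have hS : S.map ((ρ ^ m : Module.End ℤ M) : M →+ M) = S := by
    refine le_antisymm ?_ fun x hx => ⟨_, pow_mem_of_forall_mem hρ hx (m + 1), hinv x⟩
    rintro _ ⟨y, hy, rfl⟩
    exact pow_mem_of_forall_mem hρ hy m
  have hfixed : (endFixed σ).map ((ρ ^ m : Module.End ℤ M) : M →+ M) = endFixed (σ * ρ) := by
    refine le_antisymm ?_ fun x hx => ⟨_, hinj ?_, hinv x⟩
    · rintro _ ⟨y, hy, rfl⟩
      exact (hswap y).symm.trans (congrArg _ hy)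
    · change (ρ ^ m) (σ ((ρ ^ (m + 1)) x)) = (ρ ^ m) ((ρ ^ (m + 1)) x)
      rw [hswap, hinv]
      exact hx
  rw [← AddSubgroup.relIndex_map_map_of_injective S (endFixed σ) hinj, hS, hfixed]

theorem index_mul_relIndex_endFixed (h : IsDihedralPair q ρ σ) (hρ : ∀ x ∈ S, ρ x ∈ S)
    (hσ : ∀ x ∈ S, σ x ∈ S) :
    S.index * S.relIndex (endFixed ρ ⊓ endFixed σ) =
      S.relIndex ((endFixed σ).comap ((1 - ρ : Module.End ℤ M) : M →+ M)) *
        S.relIndex (endFixed σ) := by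
  have hcomap : (endFixed ρ ⊓ endFixed σ).comap ((1 + σ * ρ : Module.End ℤ M) : M →+ M) =
      (endFixed σ).comap ((1 - ρ : Module.End ℤ M) : M →+ M) :=
    AddSubgroup.ext fun z => h.add_mem_endFixed_iff z
  have hmap : S.map ((1 + σ * ρ : Module.End ℤ M) : M →+ M) ≤ S := by
    rintro _ ⟨x, hx, rfl⟩
    exact S.add_mem hx (hσ _ (hρ _ hx))
  have hrange := h.endFixed_inf_eq_sup (S := ⊤) (fun _ _ => trivial) fun _ _ => trivial
  rw [inf_top_eq, inf_top_eq, ← AddMonoidHom.range_eq_map] at hrange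
  rw [index_mul_relIndex_eq hmap, hcomap, ← hrange, ← h.endFixed_inf_eq_sup hρ hσ, inf_comm,
    AddSubgroup.inf_relIndex_right, h.relIndex_endFixed_mul hρ]

theorem relIndex_comap_endFixed (h : IsDihedralPair q ρ σ) (hρ : ∀ x ∈ S, ρ x ∈ S)
    (hC : ∀ x ∈ S, σ x = x → cycNorm q ρ x = 0 → ∃ y ∈ S, y - ρ y = x) :
    S.relIndex ((endFixed σ).comap ((1 - ρ : Module.End ℤ M) : M →+ M)) =
      S.relIndex (endFixed ρ) * (normKer q ρ σ ⊓ S).relIndex (twistBoundary ρ σ) := by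
  rw [relIndex_eq_relIndex_inf_ker_mul_relIndex_map ((1 - ρ : Module.End ℤ M) : M →+ M)]
  congr 2
  · ext z
    have hker : z ∈ ((1 - ρ : Module.End ℤ M) : M →+ M).ker ↔ ρ z = z :=
      sub_eq_zero.trans eq_comm
    rw [AddSubgroup.mem_inf, hker, mem_endFixed, and_iff_right_iff_imp]
    intro hz
    change σ (z - ρ z) = z - ρ z
    rw [hz, sub_self, map_zero]
  · ext y
    constructor
    · rintro ⟨z, ⟨hz, hzS⟩, rfl⟩
      exact ⟨h.twistBoundary_le_normKer ⟨hz, z, rfl⟩, S.sub_mem hzS (hρ z hzS)⟩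
    · rintro ⟨⟨hfix, hN⟩, hyS⟩
      obtain ⟨z, hz, rfl⟩ := hC y hyS hfix hN
      exact ⟨z, ⟨hfix, hz⟩, rfl⟩
  · rw [AddSubgroup.map_comap_eq, inf_comm]
    rfl

theorem relIndex_twistBoundary_mul (h : IsDihedralPair q ρ σ)
    (hC : ∀ x ∈ S, σ x = x → cycNorm q ρ x = 0 → ∃ y ∈ S, y - ρ y = x) :
    (normKer q ρ σ ⊓ S).relIndex (twistBoundary ρ σ) * dihedralHneg1Card q ρ σ =
      S.relIndex (normKer q ρ σ) := by
  rw [dihedralHneg1Card, AddSubgroup.relIndex_mul_relIndex _ _ _ _ h.twistBoundary_le_normKer,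
    inf_comm, AddSubgroup.inf_relIndex_right]
  rintro y ⟨⟨hfix, hN⟩, hyS⟩
  obtain ⟨z, -, rfl⟩ := hC y hyS hfix hN
  exact ⟨hfix, z, rfl⟩

theorem relIndex_normImage_mul (h : IsDihedralPair q ρ σ) (hρ : ∀ x ∈ S, ρ x ∈ S)
    (hD : ∀ x ∈ S, ρ x = x → σ x = x → ∃ y ∈ S, σ y = y ∧ cycNorm q ρ y = x) :
    ((endFixed σ ⊓ S).map (cycNorm q ρ : M →+ M)).relIndex (normImage q ρ σ) *
      dihedralH0Card q ρ σ = S.relIndex (endFixed ρ ⊓ endFixed σ) := by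
  have hle : (endFixed σ ⊓ S).map (cycNorm q ρ : M →+ M) ≤ normImage q ρ σ :=
    AddSubgroup.map_mono inf_le_left
  rw [dihedralH0Card, AddSubgroup.relIndex_mul_relIndex _ _ _ hle h.normImage_le_endFixed,
    ← AddSubgroup.inf_relIndex_right S]
  congr 1
  ext x
  constructor
  · rintro ⟨y, ⟨hy, hyS⟩, rfl⟩
    refine ⟨?_, h.normImage_le_endFixed ⟨y, hy, rfl⟩⟩
    change (∑ i ∈ Finset.range q, ρ ^ i) y ∈ S
    rw [LinearMap.sum_apply]
    exact S.sum_mem fun i _ => pow_mem_of_forall_mem hρ hyS i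
  · rintro ⟨hxS, hxρ, hxσ⟩
    obtain ⟨y, hy, hyσ, rfl⟩ := hD x hxS hxρ hxσ
    exact ⟨y, ⟨hyσ, hy⟩, rfl⟩

theorem relIndex_relation (h : IsDihedralPair q ρ σ) (hρ : ∀ x ∈ S, ρ x ∈ S)
    (hσ : ∀ x ∈ S, σ x ∈ S)
    (hC : ∀ x ∈ S, σ x = x → cycNorm q ρ x = 0 → ∃ y ∈ S, y - ρ y = x)
    (hD : ∀ x ∈ S, ρ x = x → σ x = x → ∃ y ∈ S, σ y = y ∧ cycNorm q ρ y = x) :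
    S.index * S.relIndex (endFixed ρ ⊓ endFixed σ) ^ 2 * dihedralHneg1Card q ρ σ =
      S.relIndex (endFixed ρ) * S.relIndex (endFixed σ) ^ 2 * dihedralH0Card q ρ σ := by
  have hindex := h.index_mul_relIndex_endFixed hρ hσ
  have hB := h.relIndex_twistBoundary_mul hC
  have hN := h.relIndex_normImage_mul hρ hD
  have hσfix : S.relIndex (endFixed σ) = S.relIndex (normKer q ρ σ) *
      ((endFixed σ ⊓ S).map (cycNorm q ρ : M →+ M)).relIndex (normImage q ρ σ) :=
    relIndex_eq_relIndex_inf_ker_mul_relIndex_map _ _ _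
  rw [h.relIndex_comap_endFixed hρ hC] at hindex
  rw [← hB] at hσfix
  set b := (normKer q ρ σ ⊓ S).relIndex (twistBoundary ρ σ)
  set t := dihedralHneg1Card q ρ σ
  set n := ((endFixed σ ⊓ S).map (cycNorm q ρ : M →+ M)).relIndex (normImage q ρ σ)
  set d := S.relIndex (endFixed ρ ⊓ endFixed σ)
  set s := S.relIndex (endFixed σ)
  calc S.index * d ^ 2 * t = (S.index * d) * d * t := by ring
    _ = S.relIndex (endFixed ρ) * s * (b * t * n) *
          dihedralH0Card q ρ σ := by
        rw [hindex, ← hN]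
        ring
    _ = _ := by
        rw [← hσfix]
        ring

end IsDihedralPair

end Lattice

section FreeAction

theorem sum_range_inv_pow {G A : Type*} [Group G] [AddCommMonoid A] {g : G} {q : ℕ}
    (hg : g ^ q = 1) (F : G → A) :
    ∑ i ∈ Finset.range q, F (g ^ i)⁻¹ = ∑ i ∈ Finset.range q, F (g ^ i) := by
  cases q with
  | zero => simp
  | succ n =>
    rw [Finset.sum_range_succ', Finset.sum_range_succ' fun i => F (g ^ i),
      ← Finset.sum_range_reflect fun i => F (g ^ (i + 1)), pow_zero, inv_one]
    congr 1
    refine Finset.sum_congr rfl fun i hi => ?_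
    rw [inv_eq_of_mul_eq_one_left (a := g ^ (n - 1 - i + 1))]
    rw [← pow_add, ← hg]
    congr 1
    have := Finset.mem_range.mp hi
    omega

theorem exists_sum_smul_eq_one {C X : Type*} [Group C] [Fintype C] [MulAction C X]
    (hfree : ∀ (x : X) (c : C), c • x = x → c = 1) : ∃ χ : X → ℤ, ∀ x, ∑ c : C, χ (c • x) = 1 := by
  classical
  let rep : X → X := fun x => (Quotient.mk (MulAction.orbitRel C X) x).out
  have hrep : ∀ (c : C) x, rep (c • x) = rep x := fun c x =>
    congrArg Quotient.out (Quotient.sound (MulAction.mem_orbit x c))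
  refine ⟨fun x => if x = rep x then 1 else 0, fun x => ?_⟩
  obtain ⟨d, hd⟩ := Quotient.mk_out (s := MulAction.orbitRel C X) x
  have hd' : ∀ c : C, c • x = rep x ↔ c = d := fun c => by
    change d • x = rep x at hd
    rw [← hd]
    refine ⟨fun h => ?_, fun h => h ▸ rfl⟩
    exact (inv_mul_eq_one.mp (hfree x (d⁻¹ * c) (by rw [mul_smul, h, inv_smul_smul]))).symm
  simp [hrep, hd']

theorem exists_sum_pow_smul_eq_one {G X : Type*} [Group G] [MulAction G X] {g : G}
    (hg : IsOfFinOrder g) (hfree : ∀ (x : X), ∀ c ∈ Subgroup.zpowers g, c • x = x → c = 1) :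
    ∃ χ : X → ℤ, ∀ x, ∑ i ∈ Finset.range (orderOf g), χ (g ^ i • x) = 1 := by
  have : Fintype (Subgroup.zpowers g) := Fintype.ofEquiv _ (finEquivZPowers hg)
  obtain ⟨χ, hχ⟩ := exists_sum_smul_eq_one (C := Subgroup.zpowers g) (X := X)
    fun x c hc => Subtype.ext (hfree x c c.2 hc)
  refine ⟨χ, fun x => ?_⟩
  rw [← hχ x, ← Equiv.sum_comp (finEquivZPowers hg), Finset.sum_range]
  rfl

variable {G X M : Type*} [Group G] [MulAction G X] [Fintype X] [AddCommGroup M]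
  {φ : G →* Module.End ℤ M} {ε : X → M} {q : ℕ}

theorem map_mem_range_zcomb_of_equivariant (hε : ∀ g x, φ g (ε x) = ε (g • x)) (g : G) {a : M}
    (ha : a ∈ (zcomb ε).range) : φ g a ∈ (zcomb ε).range := by
  obtain ⟨f, rfl⟩ := ha
  exact ⟨_, (map_zcomb_of_equivariant hε g f).symm⟩

theorem cycNorm_zcomb (hε : ∀ g x, φ g (ε x) = ε (g • x)) {g : G} (hg : g ^ q = 1) (f : X → ℤ) :
    cycNorm q (φ g) (zcomb ε f) = zcomb ε fun x => ∑ i ∈ Finset.range q, f (g ^ i • x) := by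
  simp only [cycNorm, LinearMap.sum_apply, ← map_pow, map_zcomb_of_equivariant hε]
  rw [← map_sum]
  congr 1
  ext x
  rw [Finset.sum_apply, sum_range_inv_pow hg fun c => f (c • x)]

-- With `uᵢ = χ · f(gⁱ ·)`, one has `f = ∑ᵢ (gⁱ - 1) uᵢ`, and `g - 1` divides each `gⁱ - 1`.
theorem exists_sub_eq_of_cycNorm_eq_zero {g : G} (hg : g ^ q = 1) {χ : X → ℤ}
    (hχ : ∀ x, ∑ i ∈ Finset.range q, χ (g ^ i • x) = 1) (hε : ∀ g x, φ g (ε x) = ε (g • x))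
    (hinj : Function.Injective (zcomb ε)) {a : M} (ha : a ∈ (zcomb ε).range)
    (hN : cycNorm q (φ g) a = 0) : ∃ b ∈ (zcomb ε).range, b - φ g b = a := by
  obtain ⟨f, rfl⟩ := ha
  rw [cycNorm_zcomb hε hg] at hN
  have hf : ∀ x, ∑ i ∈ Finset.range q, f (g ^ i • x) = 0 :=
    congrFun (hinj (hN.trans (map_zero _).symm))
  let u : ℕ → X → ℤ := fun i x => χ x * f (g ^ i • x)
  have hu : zcomb ε f = ∑ i ∈ Finset.range q, (φ g ^ i - 1) (zcomb ε (u i)) := by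
    simp only [LinearMap.sub_apply, ← map_pow, map_zcomb_of_equivariant hε, Module.End.one_apply]
    rw [Finset.sum_sub_distrib, ← map_sum, ← map_sum, ← map_sub]
    congr 1
    ext x
    simp only [Pi.sub_apply, Finset.sum_apply, u, smul_inv_smul]
    rw [← Finset.sum_mul, ← Finset.mul_sum, sum_range_inv_pow hg fun c => χ (c • x), hχ, hf]
    ring
  refine ⟨-∑ i ∈ Finset.range q, (∑ j ∈ Finset.range i, φ g ^ j) (zcomb ε (u i)), ?_, ?_⟩
  · refine neg_mem (sum_mem fun i _ => ?_)
    rw [LinearMap.sum_apply]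
    exact sum_mem fun j _ => map_pow φ g j ▸ map_mem_range_zcomb_of_equivariant hε _ ⟨_, rfl⟩
  · simp only [hu, ← mul_geom_sum, Module.End.mul_apply, LinearMap.sub_apply, Module.End.one_apply,
      map_neg, map_sum, Finset.sum_sub_distrib]
    abel

theorem IsDihedralPair.sum_apply_mul_pow {A : Type*} [AddCommMonoid A] {g s : G}
    (h : IsDihedralPair q g s) (F : G → A) :
    ∑ i ∈ Finset.range q, F (s * g ^ i) = ∑ i ∈ Finset.range q, F (g ^ i * s) := by
  rw [← sum_range_inv_pow h.pow_eq_one fun c => F (s * c)]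
  exact Finset.sum_congr rfl fun i _ =>
    congrArg F (eq_mul_inv_iff_mul_eq.mpr (h.pow_mul_mul_pow i)).symm

theorem exists_cycNorm_eq {g s : G} (h : IsDihedralPair q g s) {χ : X → ℤ}
    (hχ : ∀ x, ∑ i ∈ Finset.range q, χ (g ^ i • x) = 1)
    (hε : ∀ g x, φ g (ε x) = ε (g • x)) (hinj : Function.Injective (zcomb ε))
    {a : M} (ha : a ∈ (zcomb ε).range) (hga : φ g a = a) (hsa : φ s a = a) :
    ∃ b ∈ (zcomb ε).range, φ s b = b ∧ cycNorm q (φ g) b = a := by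
  obtain ⟨m, hm⟩ := h.odd
  obtain ⟨f, rfl⟩ := ha
  rw [map_zcomb_of_equivariant hε] at hga hsa
  have hfg : ∀ x, f (g • x) = f x := fun x => by
    rw [← congrFun (hinj hga) (g • x), inv_smul_smul]
  have hfs : ∀ x, f (s • x) = f x := fun x => by
    rw [← congrFun (hinj hsa) (s • x), inv_smul_smul]
  have hfi : ∀ (i : ℕ) x, f (g ^ i • x) = f x := fun i x => by
    induction i with
    | zero => simp
    | succ i ih => rw [pow_succ', mul_smul, hfg, ih]
  have hs : s⁻¹ = s := inv_eq_of_mul_eq_one_left h.mul_self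
  have hsχ : ∀ x, ∑ i ∈ Finset.range q, χ (s • g ^ i • x) = 1 := fun x => by
    simp only [← mul_smul]
    rw [h.sum_apply_mul_pow fun c => χ (c • x)]
    simp only [mul_smul, hχ]
  refine ⟨zcomb ε fun x => f x - m * (f x * χ x + f x * χ (s • x)), ⟨_, rfl⟩, ?_, ?_⟩
  · rw [map_zcomb_of_equivariant hε, hs]
    congr 1
    ext x
    simp only [hfs, ← mul_smul, h.mul_self, one_smul]
    ring
  · rw [cycNorm_zcomb hε h.pow_eq_one]
    congr 1
    ext x
    simp only [hfi, Finset.sum_sub_distrib, ← Finset.mul_sum, Finset.sum_add_distrib, hχ, hsχ,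
      Finset.sum_const, Finset.card_range, nsmul_eq_mul]
    rw [hm]
    push_cast
    ring

end FreeAction

theorem relIndex_range_zcomb_relation {G X M : Type*} [Group G] [MulAction G X] [Fintype X]
    [AddCommGroup M] {φ : G →* Module.End ℤ M} {ε : X → M} {g s : G}
    (h : IsDihedralPair (orderOf g) g s)
    (hfree : ∀ (x : X), ∀ c ∈ Subgroup.zpowers g, c • x = x → c = 1)
    (hε : ∀ g x, φ g (ε x) = ε (g • x)) (hinj : Function.Injective (zcomb ε)) :
    (zcomb ε).range.index * (zcomb ε).range.relIndex (endFixed (φ g) ⊓ endFixed (φ s)) ^ 2 *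
        dihedralHneg1Card (orderOf g) (φ g) (φ s) =
      (zcomb ε).range.relIndex (endFixed (φ g)) * (zcomb ε).range.relIndex (endFixed (φ s)) ^ 2 *
        dihedralH0Card (orderOf g) (φ g) (φ s) := by
  obtain ⟨χ, hχ⟩ := exists_sum_pow_smul_eq_one (orderOf_pos_iff.mp h.odd.pos) hfree
  exact (h.map φ).relIndex_relation (fun _ => map_mem_range_zcomb_of_equivariant hε g)
    (fun _ => map_mem_range_zcomb_of_equivariant hε s)
    (fun _ hx _ hN => exists_sub_eq_of_cycNorm_eq_zero h.pow_eq_one hχ hε hinj hx hN)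
    (fun _ hx hg hs => exists_cycNorm_eq h hχ hε hinj hx hg hs)

section Fixed

variable {G R M : Type*} [Group G] [Semiring R] [AddCommMonoid M] [Module R M]
  (φ : G →* Module.End R M) (a : M)

theorem forall_apply_eq_iff_of_mulEquiv_dihedralGroup {q : ℕ} [NeZero q]
    (e : G ≃* DihedralGroup q) :
    (∀ g, φ g a = a) ↔ φ (e.symm (r 1)) a = a ∧ φ (e.symm (sr 0)) a = a := by
  refine ⟨fun h => ⟨h _, h _⟩, fun ⟨h1, h2⟩ g => ?_⟩
  have hr : ∀ i : ZMod q, φ (e.symm (r i)) a = a := fun i => by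
    rw [← ZMod.natCast_zmod_val i, ← r_one_pow, map_pow, map_pow, Module.End.pow_apply]
    exact Function.iterate_fixed h1 _
  obtain ⟨d, rfl⟩ := e.symm.surjective g
  cases d with
  | r i => exact hr i
  | sr i => rw [← zero_add i, ← sr_mul_r, map_mul, map_mul, Module.End.mul_apply, hr, h2]

theorem forall_mem_comap_closure_singleton_iff {D : Type*} [Group D] (e : G ≃* D) (d : D) :
    (∀ g ∈ (Subgroup.closure {d}).comap e.toMonoidHom, φ g a = a) ↔ φ (e.symm d) a = a := by
  let _ : MulAction G M := MulAction.compHom M φ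
  have h : (Subgroup.closure {d}).comap e.toMonoidHom = Subgroup.closure {e.symm d} := by
    refine (Subgroup.comap_equiv_eq_map_symm' e (Subgroup.closure {d})).trans ?_
    rw [MonoidHom.map_closure, Set.image_singleton]
    rfl
  rw [h]
  change (Subgroup.closure {e.symm d} ≤ MulAction.stabilizer G a) ↔ _
  rw [Subgroup.closure_le, Set.singleton_subset_iff]
  rfl

end Fixed

section PermRep

variable (R G X : Type*) [CommSemiring R] [Group G] [MulAction G X]

/-- The permutation representation on functions. -/
def permRep : G →* Module.End R (X → R) where
  toFun g := LinearMap.funLeft R R (g⁻¹ • · : X → X)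
  map_one' := by
    ext f x
    simp
  map_mul' g h := by
    refine LinearMap.ext fun f => funext fun x => ?_
    simp [LinearMap.funLeft_apply, mul_smul]

variable {R G X}

theorem permRep_apply (g : G) (f : X → R) (x : X) : permRep R G X g f x = f (g⁻¹ • x) := rfl

theorem commute_permRep_toLin' [Fintype X] [DecidableEq X] {m : X → X → R} {g : G}
    (hm : ∀ w x, m (g • w) (g • x) = m w x) :
    Commute (permRep R G X g) (Matrix.toLin' (Matrix.of m)) := by
  refine LinearMap.ext fun f => funext fun w => ?_
  rw [Module.End.mul_apply, Module.End.mul_apply, permRep_apply, Matrix.toLin'_apply,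
    Matrix.toLin'_apply]
  simp only [Matrix.mulVec, dotProduct, Matrix.of_apply, permRep_apply]
  rw [← Equiv.sum_comp (MulAction.toPerm g) fun x => m w x * f (g⁻¹ • x)]
  refine Finset.sum_congr rfl fun x _ => ?_
  rw [MulAction.toPerm_apply, inv_smul_smul, ← hm (g⁻¹ • w), smul_inv_smul]

end PermRep

section Places

variable {k L : Type*} [Field k] [Field L] [Algebra k L]

theorem eq_one_of_smul_infinitePlace_eq {g : L ≃ₐ[k] L} (hg : Odd (orderOf g))
    {w : InfinitePlace L} (h : g • w = w) : g = 1 := by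
  have h2 : orderOf g ∣ 2 := by
    have hdvd := Subgroup.orderOf_dvd_natCard (MulAction.stabilizer (L ≃ₐ[k] L) w) h
    rcases InfinitePlace.nat_card_stabilizer_eq_one_or_two k w with hcard | hcard <;>
      rw [hcard] at hdvd
    · exact hdvd.trans (one_dvd 2)
    · exact hdvd
  exact orderOf_eq_one_iff.mp
    (Nat.eq_one_of_dvd_coprimes (Nat.coprime_two_left.mpr hg) h2 dvd_rfl)

variable [NumberField k] [NumberField L]

theorem permRep_placePullback (E : Type*) [Field E] [NumberField E] [Algebra E L]
    (T : Subgroup (L ≃ₐ[k] L)) [IsGaloisGroup T E L] {g : L ≃ₐ[k] L} (hg : g ∈ T)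
    (f : InfinitePlace E → ℝ) :
    permRep ℝ (L ≃ₐ[k] L) (InfinitePlace L) g (placePullback E L f) = placePullback E L f := by
  have := IsGaloisGroup.isGalois T E L
  ext w
  rw [permRep_apply, placePullback_apply, placePullback_apply]
  congr 1
  exact (comap_algebraMap_eq_iff_exists_smul E L T (fun _ _ _ => rfl) _ _).mpr
    ⟨⟨g⁻¹, inv_mem hg⟩, rfl⟩

theorem exists_placePullback_eq [IsGalois k L] {f : InfinitePlace L → ℝ}
    (hf : ∀ g, permRep ℝ (L ≃ₐ[k] L) (InfinitePlace L) g f = f) :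
    ∃ f', placePullback k L f' = f := by
  have hs : Function.Surjective fun w : InfinitePlace L => w.comap (algebraMap k L) :=
    InfinitePlace.comap_surjective
  refine ⟨fun v => f (Function.surjInv hs v), funext fun w => ?_⟩
  obtain ⟨g, hg⟩ := (comap_algebraMap_eq_iff_exists_smul k L (L ≃ₐ[k] L) (fun _ _ _ => rfl) _ _).mp
    (Function.surjInv_eq hs (w.comap (algebraMap k L)))
  rw [placePullback_apply, ← hg]
  have := congrFun (hf g⁻¹) w
  rwa [permRep_apply, inv_inv] at this

end Places

namespace IsDihedralTower

variable {q : ℕ} [NeZero q] {k L : Type*} [Field k] [Field L] [NumberField k] [NumberField L]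
  [Algebra k L] [IsGalois k L] {e : (L ≃ₐ[k] L) ≃* DihedralGroup q} {F K : IntermediateField k L}

omit [NeZero q] [NumberField k] [IsGalois k L] in
theorem index_relation (h : IsDihedralTower q e F K) {M : Type*} [AddCommGroup M]
    {φ : (L ≃ₐ[k] L) →* Module.End ℤ M} {ε : InfinitePlace L → M}
    (hε : ∀ g x, φ g (ε x) = ε (g • x)) (hinj : Function.Injective (zcomb ε)) :
    (zcomb ε).range.index *
        (zcomb ε).range.relIndex
          (endFixed (φ (e.symm (r 1))) ⊓ endFixed (φ (e.symm (sr 0)))) ^ 2 *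
        dihedralHneg1Card q (φ (e.symm (r 1))) (φ (e.symm (sr 0))) =
      (zcomb ε).range.relIndex (endFixed (φ (e.symm (r 1)))) *
        (zcomb ε).range.relIndex (endFixed (φ (e.symm (sr 0)))) ^ 2 *
        dihedralH0Card q (φ (e.symm (r 1))) (φ (e.symm (sr 0))) := by
  have horder : orderOf (e.symm (r 1)) = q := by rw [MulEquiv.orderOf_eq, orderOf_r_one]
  have hpair : IsDihedralPair (orderOf (e.symm (r 1))) (e.symm (r 1)) (e.symm (sr 0)) := by
    rw [horder]
    exact h.isDihedralPair
  have hrel := relIndex_range_zcomb_relation (φ := φ) (ε := ε) (g := e.symm (r 1))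
    hpair (fun w c hc hw => eq_one_of_smul_infinitePlace_eq
      (h.odd.of_dvd_nat (horder ▸ orderOf_dvd_of_mem_zpowers hc)) hw) hε hinj
  rwa [horder] at hrel

theorem det_relation (h : IsDihedralTower q e F K) {A : Module.End ℝ (InfinitePlace L → ℝ)}
    {AF : Module.End ℝ (InfinitePlace F → ℝ)} {AK : Module.End ℝ (InfinitePlace K → ℝ)}
    {Ak : Module.End ℝ (InfinitePlace k → ℝ)}
    (hA : ∀ g, Commute (permRep ℝ (L ≃ₐ[k] L) (InfinitePlace L) g) A)
    (hAF : ∀ f, A (placePullback F L f) = placePullback F L (AF f))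
    (hAK : ∀ f, A (placePullback K L f) = placePullback K L (AK f))
    (hAk : ∀ f, A (placePullback k L f) = placePullback k L (Ak f)) :
    LinearMap.det A * LinearMap.det Ak ^ 2 = LinearMap.det AF * LinearMap.det AK ^ 2 := by
  have := isGaloisGroup_of_eq_fixedField h.eqF
  have := isGaloisGroup_of_eq_fixedField h.eqK
  have hmem : ∀ d, e.symm d ∈ (Subgroup.closure {d}).comap e.toMonoidHom := fun d =>
    Subgroup.mem_comap.mpr (Subgroup.subset_closure (e.apply_symm_apply d))
  exact (h.isDihedralPair.map (permRep ℝ _ (InfinitePlace L))).det_relation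
    (placePullback_injective F L) (placePullback_injective K L) (placePullback_injective k L)
    (permRep_placePullback F _ (hmem (r 1))) (permRep_placePullback K _ (hmem (sr 0)))
    (fun w h1 h2 => exists_placePullback_eq
      ((forall_apply_eq_iff_of_mulEquiv_dihedralGroup _ _ e).mpr ⟨h1, h2⟩))
    (by simpa using h.card_infinitePlace_relation) (hA _) hAF hAK hAk

theorem two_pow_nrComplexPlaces_relation (h : IsDihedralTower q e F K) :
    (2 : ℝ) ^ InfinitePlace.nrComplexPlaces L * (2 ^ InfinitePlace.nrComplexPlaces k) ^ 2 =
      2 ^ InfinitePlace.nrComplexPlaces F * (2 ^ InfinitePlace.nrComplexPlaces K) ^ 2 := by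
  rw [← pow_mul, ← pow_mul, ← pow_add, ← pow_add]
  congr 1
  linarith [h.nrRealPlaces_nrComplexPlaces_relation.2]

theorem normalizedRegulator_mul_index_relation (h : IsDihedralTower q e F K)
    {dL dk dF dK iL ik iF iK : ℝ} (hd : dL * dk ^ 2 = dF * dK ^ 2)
    (hL : |dL| * 2 ^ InfinitePlace.nrComplexPlaces L =
      Module.finrank ℚ L * normalizedRegulator L * iL)
    (hk : |dk| * 2 ^ InfinitePlace.nrComplexPlaces k =
      Module.finrank ℚ k * normalizedRegulator k * ik)
    (hF : |dF| * 2 ^ InfinitePlace.nrComplexPlaces F =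
      Module.finrank ℚ F * normalizedRegulator F * iF)
    (hK : |dK| * 2 ^ InfinitePlace.nrComplexPlaces K =
      Module.finrank ℚ K * normalizedRegulator K * iK) :
    normalizedRegulator L * normalizedRegulator k ^ 2 * (iL * ik ^ 2) =
      q * (normalizedRegulator F * normalizedRegulator K ^ 2) * (iF * iK ^ 2) := by
  have hn : (2 * q * Module.finrank ℚ k ^ 3 : ℝ) ≠ 0 :=
    mul_ne_zero (mul_ne_zero two_ne_zero (NeZero.ne _))
      (pow_ne_zero 3 (Nat.cast_ne_zero.mpr Module.finrank_pos.ne'))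
  have hd' := congrArg abs hd
  rw [abs_mul, abs_mul, abs_pow, abs_pow] at hd'
  have hvol : (|dL| * 2 ^ InfinitePlace.nrComplexPlaces L) *
        (|dk| * 2 ^ InfinitePlace.nrComplexPlaces k) ^ 2 =
      (|dF| * 2 ^ InfinitePlace.nrComplexPlaces F) *
        (|dK| * 2 ^ InfinitePlace.nrComplexPlaces K) ^ 2 := by
    rw [mul_pow, mul_pow, mul_mul_mul_comm, mul_mul_mul_comm |dF|, hd',
      h.two_pow_nrComplexPlaces_relation]
  rw [hL, hk, hF, hK, finrank_rat_eq_of_mulEquiv_dihedralGroup e, h.finrank_left,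
    h.finrank_right] at hvol
  push_cast at hvol
  apply mul_left_cancel₀ hn
  linear_combination hvol

theorem regulator_relation (h : IsDihedralTower q e F K) :
    normalizedRegulator L * normalizedRegulator k ^ 2 *
        dihedralH0Card q (extUnitRep k L (e.symm (r 1))) (extUnitRep k L (e.symm (sr 0))) =
      q * (normalizedRegulator F * normalizedRegulator K ^ 2 *
        dihedralHneg1Card q (extUnitRep k L (e.symm (r 1))) (extUnitRep k L (e.symm (sr 0)))) := by
  classical
  have := isGaloisGroup_of_eq_fixedField h.eqF
  have := isGaloisGroup_of_eq_fixedField h.eqK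
  obtain ⟨ε, hε, hdet⟩ := exists_equivariant_family k L
  obtain ⟨AF, hAF, hvolF, hF0⟩ := exists_end_placeLog _ F (fun g _ => hε g) hdet
    (Λ := endFixed (extUnitRep k L (e.symm (r 1)))) fun a =>
      (forall_mem_comap_closure_singleton_iff (extUnitRep k L) a e (r 1)).symm
  obtain ⟨AK, hAK, hvolK, hK0⟩ := exists_end_placeLog _ K (fun g _ => hε g) hdet
    (Λ := endFixed (extUnitRep k L (e.symm (sr 0)))) fun a =>
      (forall_mem_comap_closure_singleton_iff (extUnitRep k L) a e (sr 0)).symm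
  obtain ⟨Ak, hAk, hvolk, -⟩ := exists_end_placeLog ⊤ k (fun g _ => hε g) hdet
    (Λ := endFixed (extUnitRep k L (e.symm (r 1))) ⊓ endFixed (extUnitRep k L (e.symm (sr 0))))
    fun a => (forall_apply_eq_iff_of_mulEquiv_dihedralGroup (extUnitRep k L) a e).symm.trans
      ⟨fun h g _ => h g, fun h g => h g trivial⟩
  have hA : ∀ g : L ≃ₐ[k] L, Commute (permRep ℝ _ (InfinitePlace L) g)
      (Matrix.toLin' (Matrix.of fun w x => placeLog w (ε x))) := fun g =>
    commute_permRep_toLin' fun w x => by rw [← hε, placeLog_extUnitRep]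
  have hd := h.det_relation hA hAF hAK hAk
  rw [LinearMap.det_toLin'] at hd
  have hvol := h.normalizedRegulator_mul_index_relation hd (abs_det_placeLog L hdet) hvolk hvolF
    hvolK
  have hindex := congrArg (Nat.cast (R := ℝ))
    (h.index_relation hε (zcomb_injective_of_det_ne_zero hdet))
  push_cast at hindex
  apply mul_right_cancel₀ (mul_ne_zero (Nat.cast_ne_zero (R := ℝ).mpr hF0)
    (pow_ne_zero 2 (Nat.cast_ne_zero (R := ℝ).mpr hK0)))
  linear_combination
    dihedralHneg1Card q (extUnitRep k L (e.symm (r 1))) (extUnitRep k L (e.symm (sr 0))) * hvol -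
      normalizedRegulator L * normalizedRegulator k ^ 2 * hindex

end IsDihedralTower

section UniquelyTwoDivisible

variable {M ι : Type*} [AddCommGroup M] {T : ι → M →+ M}

theorem sub_apply_mem_augOf (i : ι) (x : M) : x - T i x ∈ augOf T :=
  AddSubgroup.subset_closure ⟨i, x, rfl⟩

theorem exists_mem_augOf_add_self_eq (h2 : Function.Surjective fun x : M => x + x) {x : M}
    (hx : x ∈ augOf T) : ∃ y ∈ augOf T, y + y = x := by
  induction hx using AddSubgroup.closure_induction with
  | mem x hx =>
    obtain ⟨i, y, rfl⟩ := hx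
    obtain ⟨z, rfl⟩ := h2 y
    exact ⟨z - T i z, sub_apply_mem_augOf i z, by simp only [map_add]; abel⟩
  | zero => exact ⟨0, zero_mem _, add_zero 0⟩
  | add x y _ _ hx hy =>
    obtain ⟨a, ha, rfl⟩ := hx
    obtain ⟨b, hb, rfl⟩ := hy
    exact ⟨a + b, add_mem ha hb, by abel⟩
  | neg x _ hx =>
    obtain ⟨a, ha, rfl⟩ := hx
    exact ⟨-a, neg_mem ha, by abel⟩

theorem mem_augOf_of_add_self_mem (h2 : Function.Bijective fun x : M => x + x) {x : M}
    (hx : x + x ∈ augOf T) : x ∈ augOf T := by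
  obtain ⟨y, hy, hyx⟩ := exists_mem_augOf_add_self_eq h2.surjective hx
  rwa [← h2.injective hyx]

end UniquelyTwoDivisible

section DihedralPair

variable {M : Type*} [AddCommGroup M] {q : ℕ} {ρ σ : Module.End ℤ M}

theorem exists_apply_eq_self_and_add_self_eq (h2 : Function.Bijective fun x : M => x + x) {x : M}
    (hx : σ x = x) : ∃ y, σ y = y ∧ y + y = x := by
  obtain ⟨y, rfl⟩ := h2.surjective x
  exact ⟨y, h2.injective (by simpa using hx), rfl⟩

theorem sub_pow_apply_mem_range (ρ : Module.End ℤ M) (x : M) (i : ℕ) :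
    x - (ρ ^ i) x ∈ ((1 - ρ : Module.End ℤ M) : M →+ M).range :=
  ⟨(∑ j ∈ Finset.range i, ρ ^ j) x, LinearMap.congr_fun (mul_neg_geom_sum ρ i) x⟩

theorem IsDihedralPair.add_reflection_mem_endFixed (h : IsDihedralPair q ρ σ) (x : M) :
    x + σ x ∈ endFixed σ := by
  rw [mem_endFixed, map_add, h.reflection_reflection, add_comm]

theorem IsDihedralPair.sub_pow_apply_mem_comap_twistBoundary (h : IsDihedralPair q ρ σ) (x : M)
    (i : ℕ) :
    x - (ρ ^ i) x ∈ (twistBoundary ρ σ).comap ((1 + σ : Module.End ℤ M) : M →+ M) := by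
  refine ⟨h.add_reflection_mem_endFixed _, ?_⟩
  have hconj : (ρ ^ i) (σ ((ρ ^ i) x)) = σ x := LinearMap.congr_fun (h.pow_mul_mul_pow i) x
  have hsum : ((1 + σ : Module.End ℤ M) : M →+ M) (x - (ρ ^ i) x) =
      (x - (ρ ^ i) x) - (σ ((ρ ^ i) x) - (ρ ^ i) (σ ((ρ ^ i) x))) := by
    change x - (ρ ^ i) x + σ (x - (ρ ^ i) x) = _
    rw [hconj, map_sub]
    abel
  change _ ∈ ((1 - ρ : Module.End ℤ M) : M →+ M).range
  rw [hsum]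
  exact sub_mem (sub_pow_apply_mem_range ρ _ i) (sub_pow_apply_mem_range ρ _ i)

end DihedralPair

theorem sum_zmod_r_eq_sum_range {q : ℕ} [NeZero q] {A : Type*} [AddCommMonoid A]
    (c : DihedralGroup q → A) : ∑ i : ZMod q, c (r i) = ∑ i ∈ Finset.range q, c (r 1 ^ i) :=
  Finset.sum_nbij' ZMod.val Nat.cast (by simp [ZMod.val_lt]) (by simp) (by simp)
    (fun i hi => ZMod.val_cast_of_lt (Finset.mem_range.mp hi)) (by simp)

section Tate

variable {q : ℕ} [NeZero q] {G M : Type*} [Group G] [AddCommGroup M] (e : G ≃* DihedralGroup q)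
  (φ : G →* Module.End ℤ M)

theorem fixedPts_eq_inf :
    fixedPts (fun g => (φ g : M →+ M)) =
      endFixed (φ (e.symm (r 1))) ⊓ endFixed (φ (e.symm (sr 0))) :=
  AddSubgroup.ext fun x => forall_apply_eq_iff_of_mulEquiv_dihedralGroup φ x e

theorem sub_apply_mem_comap_twistBoundary
    (h : IsDihedralPair q (φ (e.symm (r 1))) (φ (e.symm (sr 0)))) (g : G) (y : M) :
    y - φ g y ∈ (twistBoundary (φ (e.symm (r 1))) (φ (e.symm (sr 0)))).comap
      ((1 + φ (e.symm (sr 0)) : Module.End ℤ M) : M →+ M) := by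
  set ρ := φ (e.symm (r 1))
  set σ := φ (e.symm (sr 0)) with hσ
  have hrot : ∀ i : ZMod q, y - φ (e.symm (r i)) y ∈
      (twistBoundary ρ σ).comap ((1 + σ : Module.End ℤ M) : M →+ M) := fun i => by
    rw [← ZMod.natCast_zmod_val i, ← r_one_pow, map_pow, map_pow]
    exact h.sub_pow_apply_mem_comap_twistBoundary y i.val
  obtain ⟨d, rfl⟩ := e.symm.surjective g
  cases d with
  | r i => exact hrot i
  | sr i =>
    have hsr : φ (e.symm (sr i)) y = σ (φ (e.symm (r i)) y) := by
      rw [hσ, ← Module.End.mul_apply, ← map_mul, ← map_mul, sr_mul_r, zero_add]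
    have hadd : ((1 + σ : Module.End ℤ M) : M →+ M) (y - φ (e.symm (sr i)) y) =
        ((1 + σ : Module.End ℤ M) : M →+ M) (y - φ (e.symm (r i)) y) := by
      rw [map_sub, map_sub, hsr]
      change _ - (σ _ + σ (σ _)) = _ - (φ (e.symm (r i)) y + σ _)
      rw [h.reflection_reflection, add_comm (σ _)]
    exact AddSubgroup.mem_comap.mpr (hadd ▸ hrot i)

theorem augOf_eq_comap_twistBoundary
    (h : IsDihedralPair q (φ (e.symm (r 1))) (φ (e.symm (sr 0))))
    (h2 : Function.Bijective fun x : M => x + x) :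
    augOf (fun g => (φ g : M →+ M)) =
      (twistBoundary (φ (e.symm (r 1))) (φ (e.symm (sr 0)))).comap
        ((1 + φ (e.symm (sr 0)) : Module.End ℤ M) : M →+ M) := by
  apply le_antisymm
  · rw [augOf, AddSubgroup.closure_le]
    rintro _ ⟨g, y, rfl⟩
    exact sub_apply_mem_comap_twistBoundary e φ h g y
  · rintro x ⟨-, y, hy⟩
    have hsplit : x + x =
        (y - φ (e.symm (r 1)) y) + (x - φ (e.symm (sr 0)) x) := by
      have hyx : y - φ (e.symm (r 1)) y = x + φ (e.symm (sr 0)) x := hy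
      rw [hyx]
      abel
    exact mem_augOf_of_add_self_mem h2
      (hsplit ▸ add_mem (sub_apply_mem_augOf (e.symm (r 1)) y)
        (sub_apply_mem_augOf (e.symm (sr 0)) x))

variable [Fintype G]

theorem normOf_eq_cycNorm (x : M) :
    normOf (fun g => (φ g : M →+ M)) x =
      cycNorm q (φ (e.symm (r 1))) (x + φ (e.symm (sr 0)) x) := by
  have hsr : ∑ i : ZMod q, φ (e.symm (sr i)) x =
      ∑ i : ZMod q, φ (e.symm (r i)) (φ (e.symm (sr 0)) x) := by
    rw [← Equiv.sum_comp (Equiv.neg (ZMod q))]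
    refine Finset.sum_congr rfl fun i _ => ?_
    rw [← Module.End.mul_apply, ← map_mul, ← map_mul, r_mul_sr, zero_sub, Equiv.neg_apply]
  rw [normOf, AddMonoidHom.finsetSum_apply, ← Equiv.sum_comp e.symm.toEquiv]
  refine (sum_dihedralGroup fun d => φ (e.symm d) x).trans ?_
  rw [hsr, sum_zmod_r_eq_sum_range fun d => φ (e.symm d) x,
    sum_zmod_r_eq_sum_range fun d => φ (e.symm d) _, map_add, cycNorm, LinearMap.sum_apply,
    LinearMap.sum_apply]
  simp only [map_pow]

variable {φ} (h : IsDihedralPair q (φ (e.symm (r 1))) (φ (e.symm (sr 0))))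
  (h2 : Function.Bijective fun x : M => x + x)

include h h2

theorem range_normOf_eq_normImage :
    (normOf fun g => (φ g : M →+ M)).range =
      normImage q (φ (e.symm (r 1))) (φ (e.symm (sr 0))) := by
  ext x
  constructor
  · rintro ⟨y, rfl⟩
    exact ⟨_, h.add_reflection_mem_endFixed y, (normOf_eq_cycNorm e φ y).symm⟩
  · rintro ⟨y, hy, rfl⟩
    obtain ⟨z, hz, rfl⟩ := exists_apply_eq_self_and_add_self_eq h2 hy
    exact ⟨z, by rw [normOf_eq_cycNorm e, hz]; rfl⟩

theorem map_ker_normOf_eq_normKer :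
    (normOf fun g => (φ g : M →+ M)).ker.map
        ((1 + φ (e.symm (sr 0)) : Module.End ℤ M) : M →+ M) =
      normKer q (φ (e.symm (r 1))) (φ (e.symm (sr 0))) := by
  ext x
  constructor
  · rintro ⟨y, hy, rfl⟩
    exact ⟨h.add_reflection_mem_endFixed y, (normOf_eq_cycNorm e φ y).symm.trans hy⟩
  · rintro ⟨hx, hN⟩
    obtain ⟨z, hz, rfl⟩ := exists_apply_eq_self_and_add_self_eq h2 hx
    refine ⟨z, ?_, congrArg (z + ·) hz⟩
    rw [SetLike.mem_coe, AddMonoidHom.mem_ker, normOf_eq_cycNorm e, hz]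
    exact hN

theorem card_tateH0Of :
    Nat.card (tateH0Of fun g => (φ g : M →+ M)) =
      dihedralH0Card q (φ (e.symm (r 1))) (φ (e.symm (sr 0))) := by
  rw [dihedralH0Card, ← fixedPts_eq_inf, ← range_normOf_eq_normImage e h h2]
  rfl

theorem card_tateHneg1Of :
    Nat.card (tateHneg1Of fun g => (φ g : M →+ M)) =
      dihedralHneg1Card q (φ (e.symm (r 1))) (φ (e.symm (sr 0))) := by
  rw [dihedralHneg1Card, ← map_ker_normOf_eq_normKer e h h2, ← AddSubgroup.relIndex_comap,
    ← augOf_eq_comap_twistBoundary e φ h h2]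
  rfl

end Tate

section Localization

variable {M M' : Type*} [AddCommGroup M] [AddCommGroup M']

theorem mem_of_isCoprime_of_zsmul_mem {B : AddSubgroup M} {a b : ℤ} (h : IsCoprime a b) {x : M}
    (ha : a • x ∈ B) (hb : b • x ∈ B) : x ∈ B := by
  obtain ⟨u, v, huv⟩ := h
  have hx : x = u • a • x + v • b • x := by rw [smul_smul, smul_smul, ← add_smul, huv, one_smul]
  exact hx ▸ add_mem (zsmul_mem ha _) (zsmul_mem hb _)

theorem relIndex_eq_of_localization {S : Submonoid ℤ} {q : ℤ} (hS : ∀ c ∈ S, IsCoprime c q)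
    (f : M →+ M') {B C : AddSubgroup M} {B' C' : AddSubgroup M'}
    (hC : ∀ x ∈ C, f x ∈ C') (hB : ∀ x ∈ B, f x ∈ B')
    (hqC : ∀ x ∈ C, q • x ∈ B) (hqC' : ∀ x ∈ C', q • x ∈ B')
    (hsurj : ∀ x' ∈ C', ∃ c ∈ S, ∃ x ∈ C, f x = c • x')
    (hinj : ∀ x ∈ C, f x ∈ B' → ∃ c ∈ S, c • x ∈ B) :
    B.relIndex C = B'.relIndex C' := by
  have hsup : C.map f ⊔ B' = C' ⊔ B' := by
    refine le_antisymm (sup_le_sup_right (AddSubgroup.map_le_iff_le_comap.mpr hC) _)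
      (sup_le (fun x' hx' => ?_) le_sup_right)
    obtain ⟨c, hc, x, hx, hfx⟩ := hsurj x' hx'
    refine mem_of_isCoprime_of_zsmul_mem (hS c hc) ?_ (AddSubgroup.mem_sup_right (hqC' x' hx'))
    exact hfx ▸ AddSubgroup.mem_sup_left (AddSubgroup.mem_map_of_mem f hx)
  have hinf : B ⊓ C = B'.comap f ⊓ C := by
    refine le_antisymm (inf_le_inf_right C hB) fun x ⟨hxB, hxC⟩ => ⟨?_, hxC⟩
    obtain ⟨c, hc, hx⟩ := hinj x hxC hxB
    exact mem_of_isCoprime_of_zsmul_mem (hS c hc) hx (hqC x hxC)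
  rw [← AddSubgroup.inf_relIndex_right, hinf, AddSubgroup.inf_relIndex_right,
    AddSubgroup.relIndex_comap, ← AddSubgroup.relIndex_sup_right, hsup,
    AddSubgroup.relIndex_sup_right]

theorem zsmul_mem_normImage {q : ℕ} {ρ σ : Module.End ℤ M} {x : M}
    (hx : x ∈ endFixed ρ ⊓ endFixed σ) : (q : ℤ) • x ∈ normImage q ρ σ :=
  ⟨x, hx.2, (sum_pow_apply_of_apply_eq hx.1 q).trans (natCast_zsmul x q).symm⟩

theorem zsmul_mem_twistBoundary {q : ℕ} {ρ σ : Module.End ℤ M} {x : M}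
    (hx : x ∈ normKer q ρ σ) : (q : ℤ) • x ∈ twistBoundary ρ σ := by
  refine ⟨(endFixed σ).zsmul_mem hx.1 _, ?_⟩
  have hN : ∑ i ∈ Finset.range q, (ρ ^ i) x = 0 := (LinearMap.sum_apply _ _ x).symm.trans hx.2
  have hsum : (q : ℤ) • x = ∑ i ∈ Finset.range q, (x - (ρ ^ i) x) := by
    simp [Finset.sum_sub_distrib, hN]
  change _ ∈ ((1 - ρ : Module.End ℤ M) : M →+ M).range
  rw [hsum]
  exact sum_mem fun i _ => sub_pow_apply_mem_range ρ x i

theorem map_cycNorm {q : ℕ} {f : M →ₗ[ℤ] M'} {ρ : Module.End ℤ M} {ρ' : Module.End ℤ M'}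
    (hρ : ∀ x, f (ρ x) = ρ' (f x)) (x : M) : f (cycNorm q ρ x) = cycNorm q ρ' (f x) := by
  have hpow : ∀ i, f ((ρ ^ i) x) = (ρ' ^ i) (f x) := fun i => by
    rw [Module.End.pow_apply, Module.End.pow_apply]
    exact Function.Semiconj.iterate_right (f := f) hρ i x
  simp only [cycNorm, LinearMap.sum_apply, map_sum, hpow]

variable {q : ℕ} {S : Submonoid ℤ} (f : M →ₗ[ℤ] M') [IsLocalizedModule S f]
  {ρ σ β : Module.End ℤ M} {ρ' σ' β' : Module.End ℤ M'}

theorem exists_zsmul_eq_of_isLocalizedModule {x y : M} (h : f x = f y) :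
    ∃ c ∈ S, c • x = c • y := by
  obtain ⟨c, hc⟩ := IsLocalizedModule.exists_of_eq (S := S) h
  exact ⟨c, c.2, hc⟩

theorem exists_lift_of_isLocalizedModule (hσ : ∀ x, f (σ x) = σ' (f x))
    (hβ : ∀ x, f (β x) = β' (f x)) {x : M} {y' : M'} (hy' : σ' y' = y') (hx : β' y' = f x) :
    ∃ c ∈ S, ∃ y, σ y = y ∧ β y = c • x ∧ f y = c • y' := by
  obtain ⟨⟨y, c⟩, hy : (c : ℤ) • y' = f y⟩ := IsLocalizedModule.surj S f y'
  obtain ⟨a, ha, hay⟩ := exists_zsmul_eq_of_isLocalizedModule (S := S) f (x := σ y) (y := y)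
    (by rw [hσ, ← hy, map_zsmul, hy'])
  obtain ⟨b, hb, hbx⟩ := exists_zsmul_eq_of_isLocalizedModule (S := S) f (x := β y)
    (y := (c : ℤ) • x) (by rw [hβ, ← hy, map_zsmul, map_zsmul, hx])
  refine ⟨a * b * c, mul_mem (mul_mem ha hb) c.2, (a * b) • y, ?_, ?_, ?_⟩
  · rw [map_zsmul, mul_comm, mul_smul, hay, mul_smul]
  · rw [map_zsmul, mul_smul, hbx, mul_smul, mul_smul]
  · rw [map_zsmul, ← hy, mul_smul _ (c : ℤ)]

theorem dihedralH0Card_eq_of_isLocalizedModule (hS : ∀ c ∈ S, IsCoprime c (q : ℤ))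
    (hρ : ∀ x, f (ρ x) = ρ' (f x)) (hσ : ∀ x, f (σ x) = σ' (f x)) :
    dihedralH0Card q ρ σ = dihedralH0Card q ρ' σ' := by
  refine relIndex_eq_of_localization hS (f : M →+ M') ?_ ?_
    (fun _ => zsmul_mem_normImage) (fun _ => zsmul_mem_normImage) ?_ ?_
  · rintro x ⟨hρx, hσx⟩
    exact ⟨(hρ x).symm.trans (congrArg f hρx), (hσ x).symm.trans (congrArg f hσx)⟩
  · rintro _ ⟨x, hσx, rfl⟩
    exact ⟨f x, (hσ x).symm.trans (congrArg f hσx), (map_cycNorm hρ x).symm⟩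
  · rintro x' ⟨hρx', hσx'⟩
    obtain ⟨c, hc, x, hσx, hρx, hx⟩ := exists_lift_of_isLocalizedModule (S := S) f (β := ρ - 1)
      (β' := ρ' - 1) (x := 0) hσ (fun y => by simp [hρ]) hσx'
      ((sub_eq_zero.mpr hρx').trans (map_zero f).symm)
    exact ⟨c, hc, x, ⟨sub_eq_zero.mp (hρx.trans (smul_zero c)), hσx⟩, hx⟩
  · rintro x - ⟨y', hσy', hy'⟩
    obtain ⟨c, hc, y, hσy, hy, -⟩ :=
      exists_lift_of_isLocalizedModule (S := S) f hσ (map_cycNorm hρ) hσy' hy'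
    exact ⟨c, hc, y, hσy, hy⟩

theorem dihedralHneg1Card_eq_of_isLocalizedModule (hS : ∀ c ∈ S, IsCoprime c (q : ℤ))
    (hρ : ∀ x, f (ρ x) = ρ' (f x)) (hσ : ∀ x, f (σ x) = σ' (f x)) :
    dihedralHneg1Card q ρ σ = dihedralHneg1Card q ρ' σ' := by
  refine relIndex_eq_of_localization hS (f : M →+ M') ?_ ?_
    (fun _ => zsmul_mem_twistBoundary) (fun _ => zsmul_mem_twistBoundary) ?_ ?_
  · rintro x ⟨hσx, hN⟩
    exact ⟨(hσ x).symm.trans (congrArg f hσx),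
      (map_cycNorm hρ x).symm.trans ((congrArg f hN).trans (map_zero f))⟩
  · rintro x ⟨hσx, y, rfl⟩
    exact ⟨(hσ _).symm.trans (congrArg f hσx), f y, by simp [hρ]⟩
  · rintro x' ⟨hσx', hN⟩
    obtain ⟨c, hc, x, hσx, hNx, hx⟩ := exists_lift_of_isLocalizedModule (S := S) f (x := 0) hσ
      (map_cycNorm hρ) hσx' (hN.trans (map_zero f).symm)
    exact ⟨c, hc, x, ⟨hσx, hNx.trans (smul_zero c)⟩, hx⟩
  · rintro x ⟨hσx, -⟩ ⟨-, y', hy'⟩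
    obtain ⟨c, hc, y, -, hy, -⟩ := exists_lift_of_isLocalizedModule (S := S) f (σ := 1) (σ' := 1)
      (β := 1 - ρ) (β' := 1 - ρ') (fun _ => rfl) (fun y => by simp [hρ]) rfl hy'
    exact ⟨c, hc, (endFixed σ).zsmul_mem hσx c, y, hy⟩

end Localization

theorem relIndex_prod_prod {A B : Type*} [AddGroup A] [AddGroup B] (H H' : AddSubgroup A)
    (J J' : AddSubgroup B) :
    (H.prod J).relIndex (H'.prod J') = H.relIndex H' * J.relIndex J' := by
  rw [AddSubgroup.relIndex, AddSubgroup.relIndex, AddSubgroup.relIndex, ← AddSubgroup.index_prod]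
  exact AddSubgroup.index_comap_of_surjective
    ((H.addSubgroupOf H').prod (J.addSubgroupOf J'))
    (f := (AddSubgroup.prodEquiv H' J').toAddMonoidHom) (AddSubgroup.prodEquiv H' J').surjective

section Product

variable {M : Type*} [AddCommGroup M] {q : ℕ} {ρ σ : Module.End ℤ M}

theorem cycNorm_id_prodMap (x : ℤ × M) :
    cycNorm q (LinearMap.id.prodMap ρ) x = (q * x.1, cycNorm q ρ x.2) := by
  refine Prod.ext ?_ (map_cycNorm (f := LinearMap.snd ℤ ℤ M) (fun _ => rfl) x)
  refine (map_cycNorm (f := LinearMap.fst ℤ ℤ M) (ρ' := LinearMap.id) (fun _ => rfl) x).trans ?_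
  exact (sum_pow_apply_of_apply_eq rfl q).trans (nsmul_eq_mul q x.1)

theorem endFixed_id_prodMap :
    endFixed (LinearMap.id.prodMap ρ : Module.End ℤ (ℤ × M)) =
      (⊤ : AddSubgroup ℤ).prod (endFixed ρ) := by
  ext x
  exact ⟨fun h => ⟨trivial, congrArg Prod.snd h⟩, fun h => Prod.ext rfl h.2⟩

theorem dihedralH0Card_id_prodMap :
    dihedralH0Card q (LinearMap.id.prodMap ρ : Module.End ℤ (ℤ × M)) (LinearMap.id.prodMap σ) =
      q * dihedralH0Card q ρ σ := by
  have himage : normImage q (LinearMap.id.prodMap ρ) (LinearMap.id.prodMap σ) =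
      (AddSubgroup.zmultiples (q : ℤ)).prod (normImage q ρ σ) := by
    ext ⟨a, x⟩
    constructor
    · rintro ⟨⟨b, y⟩, hy, h⟩
      have h' := (cycNorm_id_prodMap (b, y)).symm.trans h
      rw [Prod.mk.injEq] at h'
      exact ⟨⟨b, by simpa [mul_comm] using h'.1⟩, y, congrArg Prod.snd hy, h'.2⟩
    · rintro ⟨⟨b, hb : b • (q : ℤ) = a⟩, y, hy, hN⟩
      refine ⟨(b, y), Prod.ext rfl hy, (cycNorm_id_prodMap (b, y)).trans ?_⟩
      exact Prod.ext ((mul_comm _ _).trans hb) hN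
  have hfixed : (⊤ : AddSubgroup ℤ).prod (endFixed ρ) ⊓ (⊤ : AddSubgroup ℤ).prod (endFixed σ) =
      (⊤ : AddSubgroup ℤ).prod (endFixed ρ ⊓ endFixed σ) := by
    ext x
    exact ⟨fun ⟨h, h'⟩ => ⟨trivial, h.2, h'.2⟩, fun ⟨_, h, h'⟩ => ⟨⟨trivial, h⟩, trivial, h'⟩⟩
  rw [dihedralH0Card, himage, endFixed_id_prodMap, endFixed_id_prodMap, hfixed, relIndex_prod_prod,
    AddSubgroup.relIndex_top_right, Int.index_zmultiples, Int.natAbs_natCast, dihedralH0Card]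

theorem dihedralHneg1Card_id_prodMap [NeZero q] :
    dihedralHneg1Card q (LinearMap.id.prodMap ρ : Module.End ℤ (ℤ × M)) (LinearMap.id.prodMap σ) =
      dihedralHneg1Card q ρ σ := by
  have hker : normKer q (LinearMap.id.prodMap ρ : Module.End ℤ (ℤ × M)) (LinearMap.id.prodMap σ) =
      (normKer q ρ σ).map (AddMonoidHom.inr ℤ M) := by
    ext ⟨a, x⟩
    constructor
    · rintro ⟨hσ, hN⟩
      have hN' := (cycNorm_id_prodMap (a, x)).symm.trans hN
      rw [Prod.mk_eq_zero] at hN'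
      have ha : a = 0 := by simpa [NeZero.ne q] using hN'.1
      exact ⟨x, ⟨congrArg Prod.snd hσ, hN'.2⟩, Prod.ext ha.symm rfl⟩
    · rintro ⟨y, ⟨hσ, hN⟩, hy⟩
      rw [← hy]
      exact ⟨Prod.ext rfl hσ, (cycNorm_id_prodMap (0, y)).trans (Prod.ext (mul_zero _) hN)⟩
  have hcomap : (twistBoundary (LinearMap.id.prodMap ρ) (LinearMap.id.prodMap σ)).comap
      (AddMonoidHom.inr ℤ M) = twistBoundary ρ σ := by
    ext x
    constructor
    · rintro ⟨hσ, y, hy⟩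
      exact ⟨congrArg Prod.snd hσ, y.2, congrArg Prod.snd hy⟩
    · rintro ⟨hσ, y, hy⟩
      exact ⟨Prod.ext rfl hσ, (0, y), Prod.ext rfl hy⟩
  rw [dihedralHneg1Card, hker, ← AddSubgroup.relIndex_comap, hcomap, dihedralHneg1Card]

end Product

theorem isLocalizedModule_toIntLinearMap {M M' : Type*} [AddCommGroup M] [AddCommGroup M']
    {inst : Module ℤ M'} {S : Submonoid ℤ} (f : M →ₗ[ℤ] M') [IsLocalizedModule S f] :
    @IsLocalizedModule ℤ _ M M' _ _ _ (AddCommGroup.toIntModule M') S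
      f.toAddMonoidHom.toIntLinearMap := by
  obtain rfl : inst = AddCommGroup.toIntModule M' := Subsingleton.elim _ _
  assumption

section Units

variable (k L : Type*) [Field k] [Field L] [NumberField k] [Algebra k L] [IsGalois k L]

/-- The Galois action on units as a representation over `ℤ`. -/
noncomputable def unitRep : (L ≃ₐ[k] L) →* Module.End ℤ (Additive (𝓞 L)ˣ) where
  toFun g := (unitAut g).toIntLinearMap
  map_one' := by
    rw [unitAut_one]
    rfl
  map_mul' g h := by
    rw [unitAut_mul]
    rfl

/-- The Galois action on `U_L ⊗ ℤ[1/2]` as a representation over `ℤ`. -/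
noncomputable def unitsHalfRep : (L ≃ₐ[k] L) →* Module.End ℤ (UnitsHalf L) where
  toFun g := (LocalizedModule.map (Submonoid.powers (2 : ℤ)) (unitRep k L g)).restrictScalars ℤ
  map_one' := by
    rw [map_one]
    exact LinearMap.ext fun x => LinearMap.congr_fun (LocalizedModule.map_id _) x
  map_mul' g h := by
    refine LinearMap.ext fun x => ?_
    induction x with
    | h x s => simp [Module.End.mul_apply]

/-- The localization map `U_L → U_L ⊗ ℤ[1/2]`. It is rebuilt from the underlying additive map so as
to be linear for the `ℤ`-module structure that every additive group carries, which is only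
propositionally equal to the one that a localized module over `ℤ` is given. -/
noncomputable def unitsHalfMap : Additive (𝓞 L)ˣ →ₗ[ℤ] UnitsHalf L :=
  (LocalizedModule.mkLinearMap (Submonoid.powers (2 : ℤ))
    (Additive (𝓞 L)ˣ)).toAddMonoidHom.toIntLinearMap

instance : IsLocalizedModule (Submonoid.powers (2 : ℤ)) (unitsHalfMap L) :=
  isLocalizedModule_toIntLinearMap (S := Submonoid.powers (2 : ℤ))
    (LocalizedModule.mkLinearMap (Submonoid.powers (2 : ℤ)) (Additive (𝓞 L)ˣ))

theorem unitsHalfMap_unitRep (g : L ≃ₐ[k] L) (x : Additive (𝓞 L)ˣ) :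
    unitsHalfMap L (unitRep k L g x) = unitsHalfRep k L g (unitsHalfMap L x) :=
  (LocalizedModule.map_mk _ (unitRep k L g) x 1).symm

theorem bijective_add_self_unitsHalf : Function.Bijective fun x : UnitsHalf L => x + x := by
  have h := (Module.End.isUnit_iff _).mp (IsLocalizedModule.map_units
    (unitsHalfMap L) ⟨(2 : ℤ), Submonoid.mem_powers 2⟩)
  convert h using 2 with x
  exact (two_zsmul x).symm

end Units

theorem isCoprime_of_mem_powers_two {q : ℕ} (hq : Odd q) :
    ∀ c ∈ Submonoid.powers (2 : ℤ), IsCoprime c (q : ℤ) := by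
  rintro _ ⟨n, rfl⟩
  exact IsCoprime.pow_left (Nat.isCoprime_iff_coprime.mpr (Nat.coprime_two_left.mpr hq))

section ArchimedeanFactor

variable (E : Type*) [Field E] [NumberField E]

/-- The factor of the residue at `1` of the Dedekind zeta function which depends only on the
signature and the discriminant. -/
noncomputable def archimedeanFactor : ℝ :=
  2 ^ InfinitePlace.nrRealPlaces E * (2 * Real.pi) ^ InfinitePlace.nrComplexPlaces E /
    Real.sqrt |(discr E : ℝ)|

theorem archimedeanFactor_pos : 0 < archimedeanFactor E := by
  have : (0 : ℝ) < |(discr E : ℝ)| := abs_pos.mpr (Int.cast_ne_zero.mpr (discr_ne_zero E))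
  unfold archimedeanFactor
  positivity

theorem normalizedRegulator_pos : 0 < normalizedRegulator E :=
  div_pos (Units.regulator_pos E) (Nat.cast_pos.mpr (Units.torsionOrder_pos E))

theorem dedekindZeta_residue_eq_archimedeanFactor_mul :
    dedekindZeta_residue E = archimedeanFactor E * normalizedRegulator E * classNumber E := by
  rw [dedekindZeta_residue_def, archimedeanFactor, normalizedRegulator, div_mul_div_comm,
    div_mul_eq_mul_div, mul_comm (Real.sqrt _)]

end ArchimedeanFactor

namespace IsDihedralTower

variable {q : ℕ} [NeZero q] {k L : Type*} [Field k] [Field L] [NumberField k] [NumberField L]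
  [Algebra k L] [IsGalois k L] {e : (L ≃ₐ[k] L) ≃* DihedralGroup q} {F K : IntermediateField k L}

theorem sqrt_discr_relation (h : IsDihedralTower q e F K) :
    Real.sqrt |(discr L : ℝ)| * Real.sqrt |(discr k : ℝ)| ^ 2 =
      Real.sqrt |(discr F : ℝ)| * Real.sqrt |(discr K : ℝ)| ^ 2 := by
  have habs : |(discr L : ℝ)| * |(discr k : ℝ)| ^ 2 = |(discr F : ℝ)| * |(discr K : ℝ)| ^ 2 := by
    simp only [← Int.cast_abs, Int.abs_eq_natAbs]
    exact_mod_cast h.discr_relation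
  simp only [Real.sq_sqrt (abs_nonneg _)]
  have hsqrt := congrArg Real.sqrt habs
  rwa [Real.sqrt_mul (abs_nonneg _), Real.sqrt_mul (abs_nonneg _), Real.sqrt_sq (abs_nonneg _),
    Real.sqrt_sq (abs_nonneg _)] at hsqrt

theorem archimedeanFactor_relation (h : IsDihedralTower q e F K) :
    archimedeanFactor L * archimedeanFactor k ^ 2 =
      archimedeanFactor F * archimedeanFactor K ^ 2 := by
  obtain ⟨hreal, hcomplex⟩ := h.nrRealPlaces_nrComplexPlaces_relation
  have hpow : ∀ (x : ℝ) (a b c d : ℕ), a + 2 * b = c + 2 * d →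
      x ^ a * (x ^ b) ^ 2 = x ^ c * (x ^ d) ^ 2 := fun x a b c d h => by
    rw [← pow_mul, ← pow_mul, ← pow_add, ← pow_add, mul_comm b, mul_comm d, h]
  simp only [archimedeanFactor, div_pow, div_mul_div_comm, h.sqrt_discr_relation]
  congr 1
  linear_combination hpow 2 _ _ _ _ hreal * ((2 * Real.pi) ^ InfinitePlace.nrComplexPlaces L *
      ((2 * Real.pi) ^ InfinitePlace.nrComplexPlaces k) ^ 2) +
    hpow (2 * Real.pi) _ _ _ _ hcomplex * ((2 : ℝ) ^ InfinitePlace.nrRealPlaces F *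
      (2 ^ InfinitePlace.nrRealPlaces K) ^ 2)

theorem card_tateH0Of_unitsAct (h : IsDihedralTower q e F K) :
    dihedralH0Card q (extUnitRep k L (e.symm (r 1))) (extUnitRep k L (e.symm (sr 0))) =
      q * Nat.card (tateH0Of fun g : L ≃ₐ[k] L => unitsAct k L g) :=
  calc _ = q * dihedralH0Card q (unitRep k L (e.symm (r 1))) (unitRep k L (e.symm (sr 0))) :=
        dihedralH0Card_id_prodMap
    _ = q * dihedralH0Card q (unitsHalfRep k L (e.symm (r 1))) (unitsHalfRep k L (e.symm (sr 0))) :=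
        congrArg _ (dihedralH0Card_eq_of_isLocalizedModule (unitsHalfMap L)
          (isCoprime_of_mem_powers_two h.odd) (unitsHalfMap_unitRep k L _)
          (unitsHalfMap_unitRep k L _))
    _ = _ := congrArg _ (card_tateH0Of e (h.isDihedralPair.map (unitsHalfRep k L))
        (bijective_add_self_unitsHalf L)).symm

theorem card_tateHneg1Of_unitsAct (h : IsDihedralTower q e F K) :
    dihedralHneg1Card q (extUnitRep k L (e.symm (r 1))) (extUnitRep k L (e.symm (sr 0))) =
      Nat.card (tateHneg1Of fun g : L ≃ₐ[k] L => unitsAct k L g) :=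
  calc _ = dihedralHneg1Card q (unitRep k L (e.symm (r 1))) (unitRep k L (e.symm (sr 0))) :=
        dihedralHneg1Card_id_prodMap
    _ = dihedralHneg1Card q (unitsHalfRep k L (e.symm (r 1))) (unitsHalfRep k L (e.symm (sr 0))) :=
        dihedralHneg1Card_eq_of_isLocalizedModule (unitsHalfMap L)
          (isCoprime_of_mem_powers_two h.odd) (unitsHalfMap_unitRep k L _)
          (unitsHalfMap_unitRep k L _)
    _ = _ := (card_tateHneg1Of e (h.isDihedralPair.map (unitsHalfRep k L))
        (bijective_add_self_unitsHalf L)).symm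

theorem regulator_relation_unitsAct (h : IsDihedralTower q e F K) :
    normalizedRegulator L * normalizedRegulator k ^ 2 *
        Nat.card (tateH0Of fun g : L ≃ₐ[k] L => unitsAct k L g) =
      normalizedRegulator F * normalizedRegulator K ^ 2 *
        Nat.card (tateHneg1Of fun g : L ≃ₐ[k] L => unitsAct k L g) := by
  have hreg := h.regulator_relation
  rw [h.card_tateH0Of_unitsAct, h.card_tateHneg1Of_unitsAct] at hreg
  push_cast at hreg
  refine mul_left_cancel₀ (Nat.cast_ne_zero.mpr (NeZero.ne q) : (q : ℝ) ≠ 0) ?_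
  linear_combination hreg

end IsDihedralTower

/-- Let `L/k` be Galois with dihedral group `D` of order `2q` (`q` odd),
`G ⊆ D` of order `q`, `Σ ⊆ D` of order 2, `F = L^G`, `K = L^Σ`.  Then
`h(L)·h(k)²/(h(F)·h(K)²) = |Ĥ⁰(D, U_L ⊗ ℤ[1/2])| / |Ĥ⁻¹(D, U_L ⊗ ℤ[1/2])|`
(written multiplied out). -/
theorem dihedral_class_number_formula (q : ℕ) [NeZero q] (hq : Odd q)
    (k L : Type*) [Field k] [Field L] [NumberField k] [NumberField L]
    [Algebra k L] [IsGalois k L]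
    (e : (L ≃ₐ[k] L) ≃* DihedralGroup q)
    (F K : IntermediateField k L)
    (hF : F = fixedField ((Subgroup.closure {(r 1 : DihedralGroup q)}).comap e.toMonoidHom))
    (hK : K = fixedField ((Subgroup.closure {(sr 0 : DihedralGroup q)}).comap e.toMonoidHom)) :
    classNumber L * classNumber k ^ 2 *
        Nat.card (tateHneg1Of (fun g : L ≃ₐ[k] L => unitsAct k L g)) =
      classNumber ↥F * classNumber ↥K ^ 2 *
        Nat.card (tateH0Of (fun g : L ≃ₐ[k] L => unitsAct k L g)) := by
  have h : IsDihedralTower q e F K := ⟨hq, hF, hK⟩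
  have hres := h.residue_relation
  simp only [dedekindZeta_residue_eq_archimedeanFactor_mul] at hres
  have harch := h.archimedeanFactor_relation
  have hreg := h.regulator_relation_unitsAct
  have hpos : 0 < archimedeanFactor F * archimedeanFactor K ^ 2 *
      (normalizedRegulator F * normalizedRegulator K ^ 2) := by
    have := archimedeanFactor_pos F
    have := archimedeanFactor_pos K
    have := normalizedRegulator_pos F
    have := normalizedRegulator_pos K
    positivity
  rw [← Nat.cast_inj (R := ℝ)]
  push_cast
  refine mul_left_cancel₀ hpos.ne' ?_
  linear_combination (Nat.card (tateH0Of fun g : L ≃ₐ[k] L => unitsAct k L g) : ℝ) * hres -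
    (archimedeanFactor F * archimedeanFactor K ^ 2 * classNumber L * classNumber k ^ 2 : ℝ) * hreg -
    (normalizedRegulator L * normalizedRegulator k ^ 2 * classNumber L * classNumber k ^ 2 *
      Nat.card (tateH0Of fun g : L ≃ₐ[k] L => unitsAct k L g) : ℝ) * harch
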